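/- arXiv:1612.08100 — 2 statements merged into one kernel-verified Lean document; each statement's English description precedes it below -/
import Mathlib

section
/- Let U be an N × N random unitary matrix distributed according to Haar measure on U(N). If 3π/(2N) ≤ θ ≤ π/2, then the variance of the eigenvalue counting function satisfies (1/(3π²)) · log(2Nθ/(3π)) ≤ Var(𝒩_θ) ≤ (1/2) · log(e^{3/2} N θ). -/
open MeasureTheory Real Filter

noncomputable section

/-- The Borel σ-algebra on the unitary group `U(N)`. -/
instance (N : ℕ) : MeasurableSpace (Matrix.unitaryGroup (Fin N) ℂ) := borel _

instance (N : ℕ) : BorelSpace (Matrix.unitaryGroup (Fin N) ℂ) := ⟨rfl⟩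

/-- The eigenvalue angles (in `[0, 2π)`, with multiplicity) of a unitary matrix `U`:
the arguments of the roots of the characteristic polynomial, shifted to lie in `[0, 2π)`. -/
def eigenAngles (N : ℕ) (U : Matrix.unitaryGroup (Fin N) ℂ) : Multiset ℝ :=
  ((U : Matrix (Fin N) (Fin N) ℂ).charpoly.roots).map
    (fun z => if 0 ≤ Complex.arg z then Complex.arg z else Complex.arg z + 2 * π)

open Classical in
/-- `𝒩_A`: the number of eigenvalue angles of `U` lying in the set `A`. -/
def countAngles (N : ℕ) (U : Matrix.unitaryGroup (Fin N) ℂ) (A : Set ℝ) : ℕ :=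
  Multiset.card ((eigenAngles N U).filter (· ∈ A))

/-- `𝒩_θ`: the number of eigenvalue angles of `U` in `[0, θ]`. -/
def countFun (N : ℕ) (U : Matrix.unitaryGroup (Fin N) ℂ) (θ : ℝ) : ℕ :=
  countAngles N U (Set.Icc 0 θ)

/-- The Kolmogorov distance between the empirical spectral measure of `U` and the
uniform measure on the circle: `sup_{0 ≤ θ < 2π} |𝒩_θ/N - θ/(2π)|`. -/
def dK (N : ℕ) (U : Matrix.unitaryGroup (Fin N) ℂ) : ℝ :=
  ⨆ θ : Set.Ico (0:ℝ) (2 * π), |(countFun N U θ : ℝ) / N - (θ : ℝ) / (2 * π)|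

/-- `max_{1 ≤ k ≤ N} |𝒩_{2πk/N} - k|`. -/
def maxDev (N : ℕ) (U : Matrix.unitaryGroup (Fin N) ℂ) : ℝ :=
  ⨆ k : (Finset.Icc 1 N : Finset ℕ), |(countFun N U (2 * π * (k : ℕ) / N) : ℝ) - ((k : ℕ) : ℝ)|

end

open MeasureTheory Real Filter

namespace VC

open Polynomial in
lemma det_aeval_roots {N : ℕ} (M : Matrix (Fin N) (Fin N) ℂ) (q : Polynomial ℂ) :
    (aeval M q).det = (M.charpoly.roots.map (fun z => q.eval z)).prod := by
  have hc : Multiset.card M.charpoly.roots = N := by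
    have := (IsAlgClosed.splits M.charpoly).natDegree_eq_card_roots
    rw [← this, Matrix.charpoly_natDegree_eq_dim]; simp
  have hlin : ∀ a : ℂ, (aeval M (X - C a)).det = (M.charpoly.roots.map (fun z => z - a)).prod := by
    intro a
    have h1 := Matrix.eval_charpoly M a
    have h2 : M.charpoly.eval a = (M.charpoly.roots.map (fun z => a - z)).prod := by
      conv_lhs => rw [(IsAlgClosed.splits M.charpoly).eq_prod_roots_of_monic M.charpoly_monic]
      rw [eval_multiset_prod, Multiset.map_map]
      simp
    have h3 : aeval M (X - C a) = - (Matrix.scalar (Fin N) a - M) := by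
      simp [Algebra.algebraMap_eq_smul_one, Matrix.smul_one_eq_diagonal]
    rw [h3, Matrix.det_neg, ← h1, h2]
    have : (fun z : ℂ => z - a) = fun z => (-1) * (a - z) := by funext z; ring
    rw [this, Multiset.prod_map_mul]
    simp [hc]
  have hq := (IsAlgClosed.splits q).eq_prod_roots
  generalize q.leadingCoeff = c at hq
  generalize q.roots = s at hq
  subst hq
  rw [map_mul, Matrix.det_mul]
  simp only [eval_mul, eval_C]
  rw [Multiset.prod_map_mul]
  congr 1
  · simp [hc, Matrix.det_diagonal, Algebra.algebraMap_eq_smul_one]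
  · induction s using Multiset.induction_on with
    | empty => simp
    | cons a s ih =>
      simp only [Multiset.map_cons, Multiset.prod_cons, map_mul, Matrix.det_mul, eval_mul]
      rw [ih, Multiset.prod_map_mul, hlin]
      simp

open Polynomial in
lemma trace_pow_roots {N : ℕ} (M : Matrix (Fin N) (Fin N) ℂ) (n : ℕ) :
    (M ^ n).trace = (M.charpoly.roots.map (fun z => z ^ n)).sum := by
  have hc : Multiset.card M.charpoly.roots = N := by
    have := (IsAlgClosed.splits M.charpoly).natDegree_eq_card_roots
    rw [← this, Matrix.charpoly_natDegree_eq_dim]; simp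
  have h : (M ^ n).charpoly = ((M.charpoly.roots.map (fun z => z ^ n)).map (fun a => X - C a)).prod := by
    apply Polynomial.funext
    intro a
    rw [Matrix.eval_charpoly]
    have h3 : Matrix.scalar (Fin N) a - M ^ n = aeval M (C a - X ^ n) := by
      simp [Algebra.algebraMap_eq_smul_one, Matrix.smul_one_eq_diagonal]
    rw [h3, det_aeval_roots, eval_multiset_prod, Multiset.map_map, Multiset.map_map]
    simp
  rw [Matrix.trace_eq_sum_roots_charpoly, h, roots_multiset_prod_X_sub_C]

end VC

open MeasureTheory Real Filter

namespace VC

/-- The sequence determined from power sums `p` by Newton's recursion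
(signed elementary symmetric functions). -/
noncomputable def eSeq (p : ℕ → ℂ) : ℕ → ℂ
  | 0 => 1
  | n + 1 => -(1 / ((n : ℂ) + 1)) * ∑ i : Fin (n + 1), eSeq p (n - i) * p (i + 1)
decreasing_by omega

lemma eSeq_zero (p : ℕ → ℂ) : eSeq p 0 = 1 := by rw [eSeq]

lemma eSeq_succ (p : ℕ → ℂ) (n : ℕ) :
    ((n : ℂ) + 1) * eSeq p (n + 1) = - ∑ i ∈ Finset.range (n + 1), eSeq p (n - i) * p (i + 1) := by
  rw [eSeq, Fin.sum_univ_eq_sum_range (fun i => eSeq p (n - i) * p (i + 1))]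
  have : (n : ℂ) + 1 ≠ 0 := Nat.cast_add_one_ne_zero n
  field_simp

/-- Newton in the form `r e_r = - ∑ ...` valid for all `r`. -/
lemma eSeq_newton (p : ℕ → ℂ) (r : ℕ) :
    (r : ℂ) * eSeq p r = - ∑ i ∈ Finset.range r, eSeq p (r - (i + 1)) * p (i + 1) := by
  cases r with
  | zero => simp
  | succ n =>
    have := eSeq_succ p n
    push_cast
    rw [this]

lemma eSeq_unique (p f : ℕ → ℂ) (h0 : f 0 = 1)
    (h : ∀ n : ℕ, ((n : ℂ) + 1) * f (n + 1) = - ∑ i ∈ Finset.range (n + 1), f (n - i) * p (i + 1)) (n : ℕ) :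
    eSeq p n = f n := by
  induction n using Nat.strong_induction_on with
  | _ n ih =>
    cases n with
    | zero => rw [eSeq_zero, h0]
    | succ n =>
      have hn : (n : ℂ) + 1 ≠ 0 := Nat.cast_add_one_ne_zero n
      apply mul_left_cancel₀ hn
      rw [eSeq_succ, h]
      congr 1
      apply Finset.sum_congr rfl
      intro i hi
      rw [ih (n - i) (by omega)]

open PowerSeries in
lemma coeff_A (f : PowerSeries ℂ) (n : ℕ) :
    coeff n (X * (PowerSeries.derivative ℂ f)) = n * coeff n f := by
  cases n with
  | zero => simp
  | succ n => rw [coeff_succ_X_mul]; simp [PowerSeries.coeff_derivative]; ring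

/-- power series of `p` without constant term -/
noncomputable def PS (p : ℕ → ℂ) : PowerSeries ℂ := PowerSeries.mk (fun n => if n = 0 then 0 else p n)

open PowerSeries in
lemma series_of_rec (p f : ℕ → ℂ)
    (h : ∀ n : ℕ, ((n : ℂ) + 1) * f (n + 1) = - ∑ i ∈ Finset.range (n + 1), f (n - i) * p (i + 1)) :
    X * (PowerSeries.derivative ℂ (mk f)) = - (PS p * mk f) := by
  ext n
  rw [coeff_A]
  rw [map_neg, coeff_mul, Finset.Nat.sum_antidiagonal_eq_sum_range_succ_mk]
  cases n with
  | zero => simp [PS]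
  | succ n =>
    rw [Finset.sum_range_succ']
    simp only [PS, coeff_mk]
    push_cast
    rw [h]
    simp
    apply Finset.sum_congr rfl
    intro i _; ring

open PowerSeries in
lemma rec_of_series (p : ℕ → ℂ) (F : PowerSeries ℂ)
    (h : X * (PowerSeries.derivative ℂ F) = - (PS p * F)) (n : ℕ) :
    ((n : ℂ) + 1) * coeff (n + 1) F = - ∑ i ∈ Finset.range (n + 1), coeff (n - i) F * p (i + 1) := by
  have := congrArg (coeff (n + 1)) h
  rw [coeff_A, map_neg, coeff_mul, Finset.Nat.sum_antidiagonal_eq_sum_range_succ_mk,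
    Finset.sum_range_succ'] at this
  push_cast at this
  rw [this]
  simp [PS]
  apply Finset.sum_congr rfl
  intro i _; ring

open PowerSeries in
lemma eSeq_prod (s : Multiset ℂ) (n : ℕ) :
    eSeq (fun n => (s.map (fun z => z ^ n)).sum) n =
      coeff n ((s.map (fun z => (1 - C z * X : PowerSeries ℂ))).prod) := by
  apply eSeq_unique
  · simp only [coeff_zero_eq_constantCoeff_apply]
    rw [map_multiset_prod, Multiset.map_map]
    simp
  · refine rec_of_series (fun n => (s.map (fun z => z ^ n)).sum) _ ?_
    induction s using Multiset.induction_on with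
    | empty =>
      have : PS (fun n => ((0 : Multiset ℂ).map (fun z => z ^ n)).sum) = 0 := by ext n; simp [PS]
      rw [this]; simp
    | cons a s ih =>
      have h1 : PS (fun n => ((a ::ₘ s).map (fun z => z ^ n)).sum) =
          PS (fun n => a ^ n) + PS (fun n => (s.map (fun z => z ^ n)).sum) := by
        ext n; simp only [PS, coeff_mk, map_add]; split_ifs <;> simp
      have h2 : PS (fun n => a ^ n) * (1 - C a * X) = C a * X := by
        have h3 : PS (fun n => a ^ n) * (1 - C a * X) = PS (fun n => a ^ n) - C a * (PS (fun n => a ^ n) * X) := by ring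
        rw [h3]
        ext n
        rw [map_sub, coeff_C_mul, coeff_C_mul]
        cases n with
        | zero => simp [PS]
        | succ n =>
          rw [coeff_succ_mul_X, coeff_X]
          simp only [PS, coeff_mk]
          cases n with
          | zero => simp
          | succ n => simp; ring
      rw [Multiset.map_cons, Multiset.prod_cons, h1, Derivation.leibniz]
      have h4 : PowerSeries.derivative ℂ (1 - C a * X) = - C a := by
        simp
      rw [h4, smul_eq_mul, smul_eq_mul]
      generalize (Multiset.map (fun z => 1 - C z * X) s).prod = F at *
      linear_combination (1 - C a * X) * ih + F * h2

open PowerSeries in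
lemma eSeq_vanish (s : Multiset ℂ) (n : ℕ) (hn : Multiset.card s < n) :
    eSeq (fun n => (s.map (fun z => z ^ n)).sum) n = 0 := by
  rw [eSeq_prod]
  have h : (s.map (fun z => (1 - C z * X : PowerSeries ℂ))).prod =
      (((s.map (fun z => (1 - Polynomial.C z * Polynomial.X : Polynomial ℂ))).prod : Polynomial ℂ) : PowerSeries ℂ) := by
    rw [← Polynomial.coeToPowerSeries.ringHom_apply, map_multiset_prod, Multiset.map_map]
    congr 1
    apply Multiset.map_congr rfl
    intro z _
    simp [Polynomial.coeToPowerSeries.ringHom_apply]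
  rw [h, Polynomial.coeff_coe]
  apply Polynomial.coeff_eq_zero_of_natDegree_lt
  refine lt_of_le_of_lt (Polynomial.natDegree_multiset_prod_le _) (lt_of_le_of_lt ?_ hn)
  rw [Multiset.map_map]
  have := Multiset.sum_le_card_nsmul (s.map (Polynomial.natDegree ∘ fun z => (1 - Polynomial.C z * Polynomial.X : Polynomial ℂ))) 1 ?_
  · simpa using this
  · intro x hx
    rw [Multiset.mem_map] at hx
    obtain ⟨z, _, rfl⟩ := hx
    simp only [Function.comp]
    compute_degree

lemma double_sum (g : ℕ → ℂ) (r : ℕ) :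
    ∑ j ∈ Finset.range r, ∑ n ∈ Finset.range (r - (j + 1)), g (n + 1 + (j + 1)) =
      ∑ s ∈ Finset.range r, (s : ℂ) * g (s + 1) := by
  induction r with
  | zero => simp
  | succ r ih =>
    rw [Finset.sum_range_succ, Finset.sum_range_succ, ← ih]
    simp only [Nat.sub_self, Finset.range_zero, Finset.sum_empty, add_zero]
    have : ∀ j ∈ Finset.range r, ∑ n ∈ Finset.range (r + 1 - (j + 1)), g (n + 1 + (j + 1)) =
        ∑ n ∈ Finset.range (r - (j + 1)), g (n + 1 + (j + 1)) + g (r + 1) := by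
      intro j hj
      rw [Finset.mem_range] at hj
      have h1 : r + 1 - (j + 1) = (r - (j + 1)) + 1 := by omega
      rw [h1, Finset.sum_range_succ]
      congr 2
      omega
    rw [Finset.sum_congr rfl this, Finset.sum_add_distrib]
    simp

open PowerSeries in
lemma Z_identity (p : ℕ → ℂ) (r : ℕ) :
    ∑ j ∈ Finset.range r, (eSeq p (r - (j + 1)) * ∑ l ∈ Finset.range (j + 1), p (j + 1 - l) * p l
      - ∑ n ∈ Finset.range (r - (j + 1)), eSeq p (r - (j + 1) - (n + 1)) * p (n + 1 + (j + 1)))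
    = - ((p 0 + 1 - r) * r * eSeq p r) := by
  have hE := series_of_rec p (eSeq p) (eSeq_succ p)
  set E : PowerSeries ℂ := mk (eSeq p) with hEdef
  have h2 := congrArg (fun F => X * PowerSeries.derivative ℂ F) hE
  simp only [map_neg, Derivation.leibniz, smul_eq_mul] at h2
  -- second operator
  have key : PS p * (C (p 0) + PS p) * E - (X * PowerSeries.derivative ℂ (PS p) - PS p) * E =
      X * PowerSeries.derivative ℂ (X * PowerSeries.derivative ℂ E) - C (p 0 + 1) * (X * PowerSeries.derivative ℂ E) := by
    rw [Derivation.leibniz, smul_eq_mul, smul_eq_mul]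
    rw [map_add, map_one]
    linear_combination (C (p 0) + 1 + PS p) * hE - h2
  have := congrArg (coeff r) key
  rw [map_sub, map_sub, coeff_A, coeff_A, coeff_C_mul, coeff_A] at this
  rw [Finset.sum_sub_distrib]
  have e1 : ∑ j ∈ Finset.range r, eSeq p (r - (j + 1)) * ∑ l ∈ Finset.range (j + 1), p (j + 1 - l) * p l
      = coeff r (PS p * (C (p 0) + PS p) * E) := by
    rw [coeff_mul, Finset.Nat.sum_antidiagonal_eq_sum_range_succ_mk, Finset.sum_range_succ']
    simp only [hEdef, coeff_mk]
    have : coeff 0 (PS p * (C (p 0) + PS p)) = 0 := by simp [PS]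
    rw [this, zero_mul, add_zero]
    apply Finset.sum_congr rfl
    intro j _
    rw [mul_comm]
    congr 1
    rw [mul_comm (PS p), coeff_mul, Finset.Nat.sum_antidiagonal_eq_sum_range_succ_mk,
      Finset.sum_range_succ _ (j + 1)]
    simp only [PS, map_add, coeff_mk, coeff_C, Nat.sub_self, if_true, mul_zero, add_zero]
    apply Finset.sum_congr rfl
    intro l hl
    rw [Finset.mem_range] at hl
    rw [if_neg (by omega : ¬ (j + 1 - l = 0))]
    rcases Nat.eq_zero_or_pos l with h | h
    · simp [h]; ring
    · simp [h.ne']; ring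
  have e2 : ∑ j ∈ Finset.range r, ∑ n ∈ Finset.range (r - (j + 1)), eSeq p (r - (j + 1) - (n + 1)) * p (n + 1 + (j + 1))
      = coeff r ((X * PowerSeries.derivative ℂ (PS p) - PS p) * E) := by
    have h3 := double_sum (fun s => eSeq p (r - s) * p s) r
    have h4 : ∑ j ∈ Finset.range r, ∑ n ∈ Finset.range (r - (j + 1)), eSeq p (r - (j + 1) - (n + 1)) * p (n + 1 + (j + 1))
       = ∑ j ∈ Finset.range r, ∑ n ∈ Finset.range (r - (j + 1)), eSeq p (r - (n + 1 + (j + 1))) * p (n + 1 + (j + 1)) := by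
      apply Finset.sum_congr rfl; intro j _
      apply Finset.sum_congr rfl; intro n _
      congr 2; omega
    rw [h4, h3, coeff_mul, Finset.Nat.sum_antidiagonal_eq_sum_range_succ_mk, Finset.sum_range_succ']
    simp only [map_sub, coeff_A, hEdef, coeff_mk, PS]
    simp
    apply Finset.sum_congr rfl
    intro i _; ring
  rw [e1, e2, this]
  simp only [hEdef, coeff_mk]
  ring

lemma Y_identity (p : ℕ → ℂ) (r m : ℕ) :
    (∑ j ∈ Finset.range r, ∑ n ∈ Finset.range (m + 1),
        eSeq p (r - (j + 1)) * (eSeq (-p) (m + 1 - (n + 1)) * p (n + 1 + (j + 1))))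
    - (∑ j ∈ Finset.range (r + 1), ∑ n ∈ Finset.range m,
        eSeq p (r + 1 - (j + 1)) * (eSeq (-p) (m - (n + 1)) * p (n + 1 + (j + 1))))
    = - ((r + 1) * eSeq p (r + 1) * eSeq (-p) m) - (m + 1) * eSeq p r * eSeq (-p) (m + 1) := by
  have h1 := eSeq_succ p r
  have h2 := eSeq_succ (-p) m
  rw [Finset.sum_range_succ'] at h1 h2
  simp only [Finset.sum_range_succ' _ m, Finset.sum_range_succ' _ r, Finset.sum_add_distrib,
    Nat.add_sub_add_right, Nat.sub_zero, zero_add] at h1 h2 ⊢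
  have e1 : ∑ x ∈ Finset.range r, eSeq p (r - (x + 1)) * (eSeq (-p) m * p (1 + (x + 1))) =
      eSeq (-p) m * ∑ k ∈ Finset.range r, eSeq p (r - (k + 1)) * p (k + 1 + 1) := by
    rw [Finset.mul_sum]; apply Finset.sum_congr rfl; intro x _
    rw [show 1 + (x + 1) = x + 1 + 1 by omega]; ring
  have e2 : ∑ n ∈ Finset.range m, eSeq p r * (eSeq (-p) (m - (n + 1)) * p (n + 1 + 1)) =
      - eSeq p r * ∑ k ∈ Finset.range m, eSeq (-p) (m - (k + 1)) * (-p) (k + 1 + 1) := by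
    rw [Finset.mul_sum]; apply Finset.sum_congr rfl; intro x _
    simp
  have e3 : ∑ x ∈ Finset.range r, ∑ x_1 ∈ Finset.range m,
        eSeq p (r - (x + 1)) * (eSeq (-p) (m - (x_1 + 1)) * p (x_1 + 1 + 1 + (x + 1))) =
      ∑ x ∈ Finset.range r, ∑ x_1 ∈ Finset.range m,
        eSeq p (r - (x + 1)) * (eSeq (-p) (m - (x_1 + 1)) * p (x_1 + 1 + (x + 1 + 1))) := by
    apply Finset.sum_congr rfl; intro j _
    apply Finset.sum_congr rfl; intro n _
    rw [show n + 1 + 1 + (j + 1) = n + 1 + (j + 1 + 1) by omega]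
  rw [e1, e2, e3]
  simp only [Pi.neg_apply] at h2 ⊢
  linear_combination (eSeq (-p) m) * h1 + eSeq p r * h2

open PowerSeries in
lemma power_sum_eq (p : ℕ → ℂ) (k : ℕ) (hk : 1 ≤ k) :
    p k = - ∑ r ∈ Finset.range (k + 1), (r : ℂ) * (eSeq p r * eSeq (-p) (k - r)) := by
  have hE := series_of_rec p (eSeq p) (eSeq_succ p)
  have hH := series_of_rec (-p) (eSeq (-p)) (eSeq_succ (-p))
  have hneg : PS (-p) = - PS p := by ext n; simp only [PS, coeff_mk, map_neg]; split_ifs <;> simp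
  rw [hneg] at hH
  set E : PowerSeries ℂ := mk (eSeq p) with hEdef
  set H : PowerSeries ℂ := mk (eSeq (-p)) with hHdef
  have hEH : E * H = 1 := by
    have h0 : X * PowerSeries.derivative ℂ (E * H) = 0 := by
      rw [Derivation.leibniz, smul_eq_mul, smul_eq_mul]
      linear_combination E * hH + H * hE
    ext n
    have := congrArg (coeff n) h0
    rw [coeff_A] at this
    cases n with
    | zero => simp [hEdef, hHdef, eSeq_zero]
    | succ n =>
      rw [map_zero] at this
      rcases mul_eq_zero.mp this with h | h
      · exact absurd h (Nat.cast_ne_zero.mpr (Nat.succ_ne_zero n))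
      · rw [h, coeff_one]; simp
  have hP : PS p = - ((X * PowerSeries.derivative ℂ E) * H) := by
    rw [hE]; linear_combination (- PS p) * hEH
  have := congrArg (coeff k) hP
  rw [map_neg, coeff_mul, Finset.Nat.sum_antidiagonal_eq_sum_range_succ_mk] at this
  simp only [coeff_A, hEdef, hHdef, coeff_mk, PS] at this
  rw [if_neg (by omega)] at this
  rw [this]
  congr 1
  apply Finset.sum_congr rfl
  intro i _; ring

end VC

open MeasureTheory Real Filter

namespace VC

instance compactG (N : ℕ) : CompactSpace (Matrix.unitaryGroup (Fin N) ℂ) := by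
  apply isCompact_iff_compactSpace.mp
  have hb : IsCompact (Set.univ.pi (fun _ : Fin N => Set.univ.pi (fun _ : Fin N => Metric.closedBall (0 : ℂ) 1))) :=
    isCompact_univ_pi (fun _ => isCompact_univ_pi (fun _ => isCompact_closedBall _ _))
  refine hb.of_isClosed_subset ?_ ?_
  · have : ((Matrix.unitaryGroup (Fin N) ℂ : Submonoid (Matrix (Fin N) (Fin N) ℂ)) : Set (Matrix (Fin N) (Fin N) ℂ)) = {U | star U * U = 1} := by
      ext U
      exact Matrix.mem_unitaryGroup_iff'
    rw [this]
    exact isClosed_eq (by fun_prop) continuous_const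
  · intro U hU a _ b _
    simpa using entry_norm_bound_of_unitary hU a b

structure OneParam {N : ℕ} (X : Matrix (Fin N) (Fin N) ℂ) (g : ℝ → Matrix.unitaryGroup (Fin N) ℂ) : Prop where
  zero : g 0 = 1
  add : ∀ s t, g (s + t) = g s * g t
  deriv : ∀ a b, HasDerivAt (fun t : ℝ => (g t : Matrix (Fin N) (Fin N) ℂ) a b) (X a b) 0

section
attribute [local instance] Matrix.linftyOpNormedRing Matrix.linftyOpNormedAlgebra

lemma exists_oneParam {N : ℕ} (X : Matrix (Fin N) (Fin N) ℂ) (hX : star X = -X) :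
    ∃ g, OneParam X g := by
  have hmem : ∀ t : ℝ, NormedSpace.exp (t • X) ∈ Matrix.unitaryGroup (Fin N) ℂ := by
    intro t
    rw [Matrix.mem_unitaryGroup_iff']
    have h1 : star (NormedSpace.exp (t • X)) = NormedSpace.exp (-(t • X)) := by
      rw [Matrix.star_eq_conjTranspose, ← Matrix.exp_conjTranspose, ← Matrix.star_eq_conjTranspose,
        star_smul, hX]
      simp
    rw [h1, ← Matrix.exp_add_of_commute _ _ ((Commute.refl (t • X)).neg_left)]
    simp
  refine ⟨fun t => ⟨_, hmem t⟩, ?_, ?_, ?_⟩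
  · ext1; simp
  · intro s t
    ext1
    simp only [Submonoid.coe_mul]
    rw [← Matrix.exp_add_of_commute]
    · rw [add_smul]
    · exact ((Commute.refl X).smul_left _).smul_right _
  · intro a b
    have h : HasDerivAt (fun t : ℝ => NormedSpace.exp (t • X)) (NormedSpace.exp ((0:ℝ) • X) * X) 0 :=
      hasDerivAt_exp_smul_const X (0 : ℝ)
    rw [zero_smul, NormedSpace.exp_zero, one_mul] at h
    let L : Matrix (Fin N) (Fin N) ℂ →L[ℝ] ℂ :=
      LinearMap.toContinuousLinearMap
        { toFun := fun M => M a b, map_add' := fun _ _ => rfl, map_smul' := fun _ _ => rfl }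
    exact L.hasFDerivAt.comp_hasDerivAt (0 : ℝ) h
end

end VC

open MeasureTheory Real Filter

namespace VC

variable {N : ℕ}

lemma integrable_of_cont (ℙ : Measure (Matrix.unitaryGroup (Fin N) ℂ)) [IsFiniteMeasure ℙ]
    {F : Matrix.unitaryGroup (Fin N) ℂ → ℂ} (hF : Continuous F) : Integrable F ℙ := by
  obtain ⟨C, hC⟩ := IsCompact.exists_bound_of_continuousOn isCompact_univ hF.continuousOn
  exact Integrable.of_bound hF.aestronglyMeasurable C (ae_of_all _ (fun x => hC x (Set.mem_univ x)))

structure HasGrad (F : Matrix.unitaryGroup (Fin N) ℂ → ℂ)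
    (D : Matrix.unitaryGroup (Fin N) ℂ → Matrix (Fin N) (Fin N) ℂ) : Prop where
  cont : Continuous F
  contD : Continuous D
  deriv : ∀ X g, star X = -X → OneParam X g → ∀ U, HasDerivAt (fun t : ℝ => F (g t * U)) ((X * D U).trace) 0

namespace HasGrad

variable {F F₁ F₂ : Matrix.unitaryGroup (Fin N) ℂ → ℂ}
  {D D₁ D₂ : Matrix.unitaryGroup (Fin N) ℂ → Matrix (Fin N) (Fin N) ℂ}

lemma congr (h : HasGrad F D) (hF : ∀ U, F₁ U = F U) (hD : ∀ U, D₁ U = D U) : HasGrad F₁ D₁ := by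
  have e1 : F₁ = F := funext hF
  have e2 : D₁ = D := funext hD
  rw [e1, e2]; exact h

lemma const (c : ℂ) : HasGrad (N := N) (fun _ => c) (fun _ => 0) :=
  ⟨continuous_const, continuous_const, fun X g _ _ U => by simpa using hasDerivAt_const (0 : ℝ) c⟩

lemma add (h₁ : HasGrad F₁ D₁) (h₂ : HasGrad F₂ D₂) :
    HasGrad (fun U => F₁ U + F₂ U) (fun U => D₁ U + D₂ U) :=
  ⟨h₁.cont.add h₂.cont, h₁.contD.add h₂.contD, fun X g hX hg U => by
    rw [Matrix.mul_add, Matrix.trace_add]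
    exact (h₁.deriv X g hX hg U).add (h₂.deriv X g hX hg U)⟩

lemma mul (h₁ : HasGrad F₁ D₁) (h₂ : HasGrad F₂ D₂) :
    HasGrad (fun U => F₁ U * F₂ U) (fun U => F₂ U • D₁ U + F₁ U • D₂ U) :=
  ⟨h₁.cont.mul h₂.cont, (h₂.cont.smul h₁.contD).add (h₁.cont.smul h₂.contD), fun X g hX hg U => by
    have := (h₁.deriv X g hX hg U).mul (h₂.deriv X g hX hg U)
    simp only [hg.zero, one_mul] at this
    rw [Matrix.mul_add, Matrix.trace_add, Matrix.mul_smul, Matrix.mul_smul, Matrix.trace_smul,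
      Matrix.trace_smul, smul_eq_mul, smul_eq_mul, mul_comm (F₂ U)]
    exact this⟩

lemma const_mul (c : ℂ) (h : HasGrad F D) : HasGrad (fun U => c * F U) (fun U => c • D U) :=
  ((const c).mul h).congr (fun _ => rfl) (fun U => by simp)

lemma sum {ι : Type*} (s : Finset ι) {F : ι → Matrix.unitaryGroup (Fin N) ℂ → ℂ}
    {D : ι → Matrix.unitaryGroup (Fin N) ℂ → Matrix (Fin N) (Fin N) ℂ}
    (h : ∀ i ∈ s, HasGrad (F i) (D i)) :
    HasGrad (fun U => ∑ i ∈ s, F i U) (fun U => ∑ i ∈ s, D i U) := by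
  classical
  induction s using Finset.induction_on with
  | empty => simpa using const (N := N) 0
  | insert a s ha ih =>
    simp only [Finset.sum_insert ha]
    exact (h a (Finset.mem_insert_self a s)).add (ih (fun i hi => h i (Finset.mem_insert_of_mem hi)))

lemma conj (h : HasGrad F D) :
    HasGrad (fun U => starRingEnd ℂ (F U)) (fun U => - star (D U)) :=
  ⟨Complex.continuous_conj.comp h.cont, (continuous_star.comp h.contD).neg, fun X g hX hg U => by
    have h1 := (h.deriv X g hX hg U).star
    have h2 : (X * -star (D U)).trace = star ((X * D U).trace) := by
      rw [← Matrix.trace_conjTranspose, Matrix.conjTranspose_mul, ← Matrix.star_eq_conjTranspose X, hX,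
        Matrix.star_eq_conjTranspose, Matrix.trace_mul_comm]
      simp
    rw [h2]
    exact h1⟩

lemma entry (a b : Fin N) :
    HasGrad (fun U : Matrix.unitaryGroup (Fin N) ℂ => (U : Matrix (Fin N) (Fin N) ℂ) a b)
      (fun U => (U : Matrix (Fin N) (Fin N) ℂ) * Matrix.single b a 1) :=
  ⟨continuous_subtype_val.matrix_elem a b, continuous_subtype_val.matrix_mul continuous_const, fun X g hX hg U => by
    have h1 : (X * ((U : Matrix (Fin N) (Fin N) ℂ) * Matrix.single b a 1)).trace
        = ∑ c, X a c * (U : Matrix (Fin N) (Fin N) ℂ) c b := by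
      rw [← Matrix.mul_assoc, Matrix.trace_mul_single]
      simp [Matrix.mul_apply]
    rw [h1]
    simp only [Submonoid.coe_mul, Matrix.mul_apply]
    exact HasDerivAt.fun_sum (fun c _ => (hg.deriv a c).mul_const _)⟩

lemma pow_entry (k : ℕ) (a b : Fin N) :
    HasGrad (fun U : Matrix.unitaryGroup (Fin N) ℂ => ((U : Matrix (Fin N) (Fin N) ℂ) ^ k) a b)
      (fun U => ∑ l ∈ Finset.range k,
        (U : Matrix (Fin N) (Fin N) ℂ) ^ (k - l) * Matrix.single b a 1 * (U : Matrix (Fin N) (Fin N) ℂ) ^ l) := by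
  induction k generalizing a b with
  | zero => simpa using const (N := N) ((1 : Matrix (Fin N) (Fin N) ℂ) a b)
  | succ k ih =>
    have h := HasGrad.sum Finset.univ (fun c (_ : c ∈ Finset.univ) => (ih a c).mul (entry c b))
    refine h.congr (fun U => ?_) (fun U => ?_)
    · rw [pow_succ, Matrix.mul_apply]
    · set V := (U : Matrix (Fin N) (Fin N) ℂ)
      have s1 : ∑ c, V c b • Matrix.single c a (1:ℂ) = V * Matrix.single b a 1 := by
        ext i j
        rw [Matrix.sum_apply]
        by_cases hj : a = j <;> simp [Matrix.single_apply, Matrix.mul_apply, hj]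
      have s2 : ∑ c, (V ^ k) a c • Matrix.single b c (1:ℂ) = Matrix.single b a 1 * V ^ k := by
        ext i j
        rw [Matrix.sum_apply]
        simp [Matrix.single_apply, Matrix.mul_apply, ite_and]
      rw [Finset.sum_add_distrib, Finset.sum_range_succ]
      congr 1
      · simp only [Finset.smul_sum]
        rw [Finset.sum_comm]
        apply Finset.sum_congr rfl
        intro l hl
        rw [Finset.mem_range] at hl
        rw [show k + 1 - l = (k - l) + 1 by omega, pow_succ, Matrix.mul_assoc (V ^ (k - l)), ← s1,
          Matrix.mul_sum, Matrix.sum_mul]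
        simp only [Matrix.mul_smul, Matrix.smul_mul]
      · rw [show k + 1 - k = 1 by omega, pow_one, Matrix.mul_assoc, ← s2, Matrix.mul_sum]
        simp only [Matrix.mul_smul]

lemma trace_pow (k : ℕ) :
    HasGrad (fun U : Matrix.unitaryGroup (Fin N) ℂ => ((U : Matrix (Fin N) (Fin N) ℂ) ^ k).trace)
      (fun U => (k : ℂ) • (U : Matrix (Fin N) (Fin N) ℂ) ^ k) := by
  have h := HasGrad.sum Finset.univ (fun a (_ : a ∈ Finset.univ) => pow_entry (N := N) k a a)
  refine h.congr (fun U => rfl) (fun U => ?_)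
  set V := (U : Matrix (Fin N) (Fin N) ℂ)
  rw [Finset.sum_comm]
  have s1 : ∑ c, Matrix.single c c (1:ℂ) = (1 : Matrix (Fin N) (Fin N) ℂ) := by
    exact Matrix.sum_single_one
  have : ∀ l ∈ Finset.range k, ∑ c, V ^ (k - l) * Matrix.single c c (1:ℂ) * V ^ l = V ^ k := by
    intro l hl
    rw [Finset.mem_range] at hl
    rw [← Matrix.sum_mul, ← Matrix.mul_sum, s1, mul_one, ← pow_add]
    congr 1; omega
  rw [Finset.sum_congr rfl this, Finset.sum_const, Finset.card_range, Nat.cast_smul_eq_nsmul]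

lemma integral_eq_zero (ℙ : Measure (Matrix.unitaryGroup (Fin N) ℂ)) [IsProbabilityMeasure ℙ]
    [ℙ.IsMulLeftInvariant] (h : HasGrad F D) (a b : Fin N) : ∫ U, D U a b ∂ℙ = 0 := by
  -- skew-Hermitian directions
  have hskew : ∀ X : Matrix (Fin N) (Fin N) ℂ, star X = -X → ∫ U, (X * D U).trace ∂ℙ = 0 := by
    intro X hX
    obtain ⟨g, hg⟩ := exists_oneParam X hX
    have hc : Continuous (fun U => (X * D U).trace) := by
      have := h.contD
      fun_prop
    obtain ⟨C, hC⟩ := IsCompact.exists_bound_of_continuousOn isCompact_univ hc.continuousOn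
    have hder : ∀ (U) (t : ℝ), HasDerivAt (fun t : ℝ => F (g t * U)) ((X * D (g t * U)).trace) t := by
      intro U t
      have h1 := h.deriv X g hX hg (g t * U)
      have h2 : HasDerivAt (fun s : ℝ => F (g (s + -t) * (g t * U))) ((X * D (g t * U)).trace) t := by
        have h1' : HasDerivAt (fun s : ℝ => F (g s * (g t * U))) ((X * D (g t * U)).trace) (t + -t) := by
          simpa using h1
        exact h1'.comp_add_const t (-t)
      convert h2 using 3 with s
      rw [← mul_assoc, ← hg.add]
      simp
    have hmul : ∀ t : ℝ, Continuous (fun U => F (g t * U)) := fun t => h.cont.comp (continuous_const.mul continuous_id)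
    have main := hasDerivAt_integral_of_dominated_loc_of_deriv_le (μ := ℙ) (𝕜 := ℝ) (E := ℂ)
      (F := fun t U => F (g t * U)) (F' := fun t U => (X * D (g t * U)).trace) (x₀ := 0)
      (s := Set.univ) (bound := fun _ => C) Filter.univ_mem
      (Eventually.of_forall (fun t => (hmul t).aestronglyMeasurable))
      (integrable_of_cont ℙ (hmul 0))
      (by
        refine Continuous.aestronglyMeasurable ?_
        exact hc.comp (continuous_const.mul continuous_id))
      (ae_of_all _ (fun U t _ => hC _ (Set.mem_univ _)))
      (integrable_const C)
      (ae_of_all _ (fun U t _ => hder U t))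
    have hconst : (fun t : ℝ => ∫ U, F (g t * U) ∂ℙ) = fun _ => ∫ U, F U ∂ℙ := by
      funext t
      exact integral_mul_left_eq_self F (g t)
    have h0 := main.2
    rw [hconst] at h0
    have := h0.unique (hasDerivAt_const (0:ℝ) _)
    simpa [hg.zero] using this
  have hall : ∀ X : Matrix (Fin N) (Fin N) ℂ, ∫ U, (X * D U).trace ∂ℙ = 0 := by
    intro X
    set A := ((1:ℂ)/2) • (X - star X) with hA
    set B := (-(Complex.I)/2) • (X + star X) with hB
    have hX : X = A + Complex.I • B := by
      rw [hA, hB, smul_smul, ← mul_div_assoc, mul_neg, Complex.I_mul_I]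
      ext i j
      simp
      ring
    have h1 := hskew A (by rw [hA]; ext i j; simp; ring)
    have h2 := hskew B (by
      rw [hB]; ext i j; simp; ring)
    have hi : ∀ Y : Matrix (Fin N) (Fin N) ℂ, Integrable (fun U => (Y * D U).trace) ℙ := by
      intro Y
      apply integrable_of_cont
      have := h.contD
      fun_prop
    rw [hX]
    simp only [Matrix.add_mul, Matrix.smul_mul, Matrix.trace_add, Matrix.trace_smul, smul_eq_mul]
    rw [integral_add (hi A) ((hi B).const_mul _), integral_const_mul, h1, h2]
    simp
  have := hall (Matrix.single b a 1)
  simpa [Matrix.trace_single_mul] using this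

end HasGrad

end VC

open MeasureTheory Real Filter

namespace VC

lemma solve_recursion (N : ℕ) (hN : 1 ≤ N) (c : ℕ → ℕ → ℂ) (h00 : c 0 0 = N)
    (hv : ∀ k r, N < r → c k r = 0)
    (h1 : ∀ k r, r < k → -(((N : ℂ) + 1 - r) * r + (k - r)) * c k r + ((N : ℂ) - r - 1) * (r + 1) * c k (r + 1)
      = k * (∑ j ∈ Finset.range r, c (k - (j + 1)) (r - (j + 1))
        - ∑ j ∈ Finset.range (r + 1), c (k - (j + 1)) (r + 1 - (j + 1))))
    (h2 : ∀ k, 1 ≤ k → -(((N : ℂ) + 1 - k) * k) * c k k = k * ∑ j ∈ Finset.range k, c (k - (j + 1)) (k - (j + 1)))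
    (k : ℕ) (hk : 1 ≤ k) (r : ℕ) (hr : r ≤ k) :
    c k r = (if r = 0 then 1 else 0) - (if r = min k N then 1 else 0) := by
  induction k using Nat.strong_induction_on generalizing r with
  | _ k ih =>
    have S0 : ∀ r, r < k → r ≤ N → ∑ j ∈ Finset.range r, c (k - (j + 1)) (r - (j + 1)) = if r = 0 then 0 else 1 := by
      intro r hrk hrN
      have : ∀ j ∈ Finset.range r, c (k - (j + 1)) (r - (j + 1)) = if j = r - 1 then 1 else 0 := by
        intro j hj
        rw [Finset.mem_range] at hj
        rw [ih (k - (j + 1)) (by omega) (by omega) _ (by omega)]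
        rw [if_neg (by omega : ¬ (r - (j + 1) = min (k - (j + 1)) N)), sub_zero]
        by_cases hh : j = r - 1
        · rw [if_pos (by omega), if_pos hh]
        · rw [if_neg (by omega), if_neg hh]
      rw [Finset.sum_congr rfl this, Finset.sum_ite_eq']
      by_cases h0 : r = 0
      · simp [h0]
      · rw [if_pos (by rw [Finset.mem_range]; omega), if_neg h0]
    have Sk : k ≤ N + 1 → ∑ j ∈ Finset.range k, c (k - (j + 1)) (k - (j + 1)) = N - (k - 1) := by
      intro hkN
      obtain ⟨k', rfl⟩ : ∃ k', k = k' + 1 := ⟨k - 1, by omega⟩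
      rw [Finset.sum_range_succ]
      have : ∀ j ∈ Finset.range k', c (k' + 1 - (j + 1)) (k' + 1 - (j + 1)) = -1 := by
        intro j hj
        rw [Finset.mem_range] at hj
        rw [ih (k' + 1 - (j + 1)) (by omega) (by omega) _ (by omega)]
        rw [if_neg (by omega), if_pos (by omega)]
        ring
      rw [Finset.sum_congr rfl this]
      simp [h00]
      ring
    have SN : N < k → ∑ j ∈ Finset.range (N + 1), c (k - (j + 1)) (N + 1 - (j + 1)) = 0 := by
      intro hNk
      by_cases hk1 : k = N + 1
      · subst hk1
        rw [Sk le_rfl]; push_cast; ring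
      have : ∀ j ∈ Finset.range (N + 1), c (k - (j + 1)) (N + 1 - (j + 1)) =
          (if j = N then 1 else 0) - (if j = 0 then 1 else 0) := by
        intro j hj
        rw [Finset.mem_range] at hj
        rw [ih (k - (j + 1)) (by omega) (by omega) _ (by omega)]
        congr 1
        · apply if_congr _ rfl rfl; omega
        · apply if_congr _ rfl rfl; omega
      rw [Finset.sum_congr rfl this, Finset.sum_sub_distrib, Finset.sum_ite_eq', Finset.sum_ite_eq']
      simp
    have hkC : (k : ℂ) ≠ 0 := Nat.cast_ne_zero.mpr (by omega)
    -- base value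
    have base : c k (min k N) = -1 := by
      rcases le_or_gt k N with hkN | hkN
      · rw [min_eq_left hkN]
        have e := h2 k hk
        rw [Sk (by omega)] at e
        have hne : ((N : ℂ) + 1 - k) * k ≠ 0 := by
          apply mul_ne_zero _ hkC
          have : ((N : ℂ) + 1 - k) = ((N + 1 - k : ℕ) : ℂ) := by
            rw [Nat.cast_sub (by omega)]; push_cast; ring
          rw [this]; exact Nat.cast_ne_zero.mpr (by omega)
        apply mul_left_cancel₀ hne
        linear_combination -e
      · rw [min_eq_right hkN.le]
        have e := h1 k N hkN
        rw [hv k (N + 1) (by omega), SN hkN, S0 N hkN le_rfl, if_neg (by omega)] at e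
        apply mul_left_cancel₀ hkC
        linear_combination -e
    have down : ∀ d, d ≤ min k N → c k (min k N - d) = (if min k N - d = 0 then 1 else 0) - (if d = 0 then 1 else 0) := by
      intro d
      induction d with
      | zero =>
        intro _
        rw [Nat.sub_zero, base, if_neg (by omega)]; simp
      | succ d ihd =>
        intro hd
        have iv := ihd (by omega)
        obtain ⟨r, hrdef⟩ : ∃ r, r = min k N - (d + 1) := ⟨_, rfl⟩
        rw [← hrdef]
        have hr1 : min k N - d = r + 1 := by omega
        rw [hr1] at iv
        rw [if_neg (by omega : ¬ (r + 1 = 0))] at iv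
        have e := h1 k r (by omega)
        rw [S0 r (by omega) (by omega), iv] at e
        have hne : ((N : ℂ) + 1 - r) * r + (k - r) ≠ 0 := by
          have : ((N : ℂ) + 1 - r) * r + (k - r) = (((N + 1 - r) * r + (k - r) : ℕ) : ℂ) := by
            rw [Nat.cast_add, Nat.cast_mul, Nat.cast_sub (show r ≤ N + 1 by omega), Nat.cast_sub (show r ≤ k by omega)]; push_cast; ring
          rw [this]; exact Nat.cast_ne_zero.mpr (by omega)
        rw [if_neg (by omega : ¬ (d + 1 = 0)), sub_zero]
        apply mul_left_cancel₀ hne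
        by_cases hrk : r + 1 < k
        · rw [S0 (r + 1) hrk (by omega), if_neg (by omega : ¬ (r + 1 = 0))] at e
          have hz : ((N : ℂ) - r - 1) * (if d = 0 then 1 else 0) = 0 := by
            by_cases hd0 : d = 0
            · have : N = r + 1 := by omega
              rw [this]; push_cast; ring
            · simp [hd0]
          by_cases hr0 : r = 0
          · rw [hr0] at e hz ⊢
            simp only [if_true] at e ⊢
            push_cast at e hz ⊢
            linear_combination -e - hz
          · rw [if_neg hr0] at e ⊢
            linear_combination -e - (r + 1) * hz
        · have hrk' : k = r + 1 := by omega
          have hd0 : d = 0 := by omega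
          have hkN : k ≤ N := by omega
          have e2 := Sk (by omega)
          rw [← hrk', e2, hd0] at e
          have hkr : (k : ℂ) = r + 1 := by rw [hrk']; push_cast; ring
          by_cases hr0 : r = 0
          · rw [hr0] at e hkr ⊢
            simp only [if_true] at e ⊢
            rw [hkr] at e ⊢
            push_cast at e ⊢
            linear_combination -e
          · rw [if_neg hr0] at e ⊢
            simp only [if_true] at e
            rw [hkr] at e ⊢
            linear_combination -e
    rcases le_or_gt r (min k N) with hrm | hrm
    · have := down (min k N - r) (by omega)
      rw [show min k N - (min k N - r) = r by omega] at this
      rw [this]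
      congr 1
      apply if_congr _ rfl rfl; omega
    · rw [hv k r (by omega), if_neg (by omega), if_neg (by omega)]; ring

end VC

open MeasureTheory Real Filter

namespace VC

variable {N : ℕ}

lemma grad_alg {M : Type*} [AddCommGroup M] [Module ℂ M] (p : ℕ → ℂ) (c : ℂ) (x : ℕ → M) (n : ℕ) :
    ∑ i ∈ Finset.range (n + 1), (p (i + 1) • (-c) • (∑ l ∈ Finset.range (n - i), eSeq p (n - i - (l + 1)) • x (l + 1))
      + eSeq p (n - i) • (c * ((i + 1 : ℕ) : ℂ)) • x (i + 1))
    = ((n : ℂ) + 1) • c • ∑ l ∈ Finset.range (n + 1), eSeq p (n - l) • x (l + 1) := by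
  rw [Finset.sum_add_distrib]
  simp only [Finset.smul_sum, smul_smul]
  rw [Finset.sum_comm' (t' := Finset.range (n + 1)) (s' := fun l => Finset.range (n - l))
    (by intro a b; simp only [Finset.mem_range]; omega)]
  rw [← Finset.sum_add_distrib]
  apply Finset.sum_congr rfl
  intro l hl
  rw [Finset.mem_range] at hl
  rw [← Finset.sum_smul, ← add_smul]
  congr 1
  have h := eSeq_newton p (n - l)
  have h2 : ∑ i ∈ Finset.range (n - l), p (i + 1) * (-c * eSeq p (n - i - (l + 1)))
      = c * (((n - l : ℕ) : ℂ) * eSeq p (n - l)) := by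
    rw [h, mul_neg, Finset.mul_sum, ← Finset.sum_neg_distrib]
    apply Finset.sum_congr rfl
    intro i _
    rw [show n - i - (l + 1) = n - l - (i + 1) by omega]
    ring
  rw [h2, Nat.cast_sub (by omega)]
  push_cast
  ring

/-- The scaled power sum sequence. -/
def pw (c : ℂ) (U : Matrix.unitaryGroup (Fin N) ℂ) (n : ℕ) : ℂ := c * ((U : Matrix (Fin N) (Fin N) ℂ) ^ n).trace

lemma HasGrad.eSeq (c : ℂ) (r : ℕ) :
    HasGrad (fun U : Matrix.unitaryGroup (Fin N) ℂ => eSeq (pw c U) r)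
      (fun U => (-c) • ∑ n ∈ Finset.range r, eSeq (pw c U) (r - (n + 1)) • (U : Matrix (Fin N) (Fin N) ℂ) ^ (n + 1)) := by
  induction r using Nat.strong_induction_on with
  | _ r ih =>
    rcases r with _ | n
    · refine (HasGrad.const (N := N) 1).congr (fun U => by simp [eSeq_zero]) (fun U => by simp)
    have hn : ((n : ℂ) + 1) ≠ 0 := by exact_mod_cast Nat.succ_ne_zero n
    have h := HasGrad.const_mul (-1 / ((n : ℂ) + 1)) (HasGrad.sum (Finset.range (n + 1)) (fun i hi =>
      (ih (n - i) (by omega)).mul ((HasGrad.trace_pow (N := N) (i + 1)).const_mul c)))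
    refine h.congr (fun U => ?_) (fun U => ?_)
    · have e := eSeq_succ (pw c U) n
      have : ∑ i ∈ Finset.range (n + 1), VC.eSeq (pw c U) (n - i) * (c * ((U : Matrix (Fin N) (Fin N) ℂ) ^ (i + 1)).trace)
        = ∑ i ∈ Finset.range (n + 1), VC.eSeq (pw c U) (n - i) * pw c U (i + 1) := rfl
      rw [this]
      field_simp
      linear_combination e
    · have e := grad_alg (pw c U) c (fun i => (U : Matrix (Fin N) (Fin N) ℂ) ^ i) n
      simp only [← smul_smul] at e
      have e2 : ∑ i ∈ Finset.range (n + 1), ((c * ((U : Matrix (Fin N) (Fin N) ℂ) ^ (i + 1)).trace) • (-c) • (∑ l ∈ Finset.range (n - i), VC.eSeq (pw c U) (n - i - (l + 1)) • (U : Matrix (Fin N) (Fin N) ℂ) ^ (l + 1))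
      + VC.eSeq (pw c U) (n - i) • c • ((i + 1 : ℕ) : ℂ) • (U : Matrix (Fin N) (Fin N) ℂ) ^ (i + 1)) = _ := e
      rw [e2, smul_smul, smul_smul]
      rw [show -1 / ((n : ℂ) + 1) * ((n : ℂ) + 1) * c = -c by field_simp]
      simp only [Nat.add_sub_add_right]

/-- Schwinger–Dyson equation. -/
lemma SD (ℙ : Measure (Matrix.unitaryGroup (Fin N) ℂ)) [IsProbabilityMeasure ℙ]
    [ℙ.IsMulLeftInvariant] {f : Matrix.unitaryGroup (Fin N) ℂ → ℂ}
    {G : Matrix.unitaryGroup (Fin N) ℂ → Matrix (Fin N) (Fin N) ℂ} (h : HasGrad f G) (k j : ℕ) (hj : j ≤ k) :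
    ∫ U, starRingEnd ℂ (pw 1 U k) * (f U * ∑ l ∈ Finset.range j, pw 1 U (j - l) * pw 1 U l
      + ((U : Matrix (Fin N) (Fin N) ℂ) ^ j * G U).trace) ∂ℙ
    = k * ∫ U, starRingEnd ℂ (pw 1 U (k - j)) * f U ∂ℙ := by
  have hF := fun a b => (((HasGrad.trace_pow (N := N) k).conj.mul h).mul (HasGrad.pow_entry (N := N) j a b))
  have hint := fun a b => integrable_of_cont ℙ (((hF a b).contD).matrix_elem b a)
  have hz := Finset.sum_eq_zero (s := Finset.univ) (fun a _ => Finset.sum_eq_zero (s := Finset.univ)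
    (fun b _ => (hF a b).integral_eq_zero ℙ b a))
  have hz2 := hz
  rw [Finset.sum_congr rfl (fun a _ => (integral_finsetSum Finset.univ (fun b _ => hint a b)).symm),
    ← integral_finsetSum Finset.univ (fun a _ => integrable_finsetSum Finset.univ (fun b _ => hint a b))] at hz2
  have key : ∀ U : Matrix.unitaryGroup (Fin N) ℂ, ∑ a, ∑ b,
      (((U : Matrix (Fin N) (Fin N) ℂ) ^ j) a b • (f U • -star ((k : ℂ) • (U : Matrix (Fin N) (Fin N) ℂ) ^ k)
        + (starRingEnd ℂ) ((U : Matrix (Fin N) (Fin N) ℂ) ^ k).trace • G U) +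
          ((starRingEnd ℂ) ((U : Matrix (Fin N) (Fin N) ℂ) ^ k).trace * f U) •
            ∑ l ∈ Finset.range j, (U : Matrix (Fin N) (Fin N) ℂ) ^ (j - l) * Matrix.single b a 1 * (U : Matrix (Fin N) (Fin N) ℂ) ^ l) b a
      = starRingEnd ℂ (pw 1 U k) * (f U * ∑ l ∈ Finset.range j, pw 1 U (j - l) * pw 1 U l
      + ((U : Matrix (Fin N) (Fin N) ℂ) ^ j * G U).trace) - k * (starRingEnd ℂ (pw 1 U (k - j)) * f U) := by
    intro U
    simp only [pw, one_mul]
    set V := (U : Matrix (Fin N) (Fin N) ℂ) with hV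
    have hVV : V * star V = 1 := Matrix.mem_unitaryGroup_iff.mp U.2
    have t1 : starRingEnd ℂ ((V ^ (k - j)).trace) = (V ^ j * star (V ^ k)).trace := by
      have : V ^ j * star (V ^ k) = star (V ^ (k - j)) := by
        have h3 : ∀ j, V ^ j * star (V ^ j) = 1 := by
          intro j
          induction j with
          | zero => simp
          | succ j ih => rw [pow_succ, star_mul, mul_assoc, ← mul_assoc V, hVV, one_mul, ih]
        conv_lhs => rw [show k = (k - j) + j by omega, pow_add, star_mul, ← mul_assoc, h3, one_mul]
      rw [this, Matrix.star_eq_conjTranspose, Matrix.trace_conjTranspose]; rfl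
    rw [t1]
    have t2 : ∀ A : Matrix (Fin N) (Fin N) ℂ, (V ^ j * A).trace = ∑ a, ∑ b, (V ^ j) a b * A b a := by
      intro A; simp [Matrix.trace, Matrix.mul_apply]
    have t3 : ∀ (a b : Fin N) (l : ℕ), (V ^ (j - l) * Matrix.single b a (1:ℂ) * V ^ l) b a = (V ^ (j - l)) b b * (V ^ l) a a := by
      intro a b l
      rw [mul_assoc, Matrix.mul_apply]
      simp [Matrix.mul_apply, Matrix.single_apply, ite_and]
    have t4 : ∀ l, (V ^ (j - l)).trace * (V ^ l).trace = ∑ a, ∑ b, (V ^ (j - l)) b b * (V ^ l) a a := by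
      intro l
      rw [mul_comm, Matrix.trace, Matrix.trace, Finset.sum_mul_sum]
      simp [mul_comm]
    rw [t2, t2]
    simp only [t4]
    have t5 : ∑ l ∈ Finset.range j, ∑ a, ∑ b, (V ^ (j - l)) b b * (V ^ l) a a
        = ∑ a, ∑ b, ∑ l ∈ Finset.range j, (V ^ (j - l)) b b * (V ^ l) a a := by
      rw [Finset.sum_comm]
      apply Finset.sum_congr rfl
      intro a _
      rw [Finset.sum_comm]
    rw [t5]
    simp only [Finset.mul_sum, Finset.sum_mul, mul_add]
    simp only [← Finset.sum_add_distrib, ← Finset.sum_sub_distrib]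
    apply Finset.sum_congr rfl
    intro a _
    apply Finset.sum_congr rfl
    intro b _
    simp only [Matrix.add_apply, Matrix.smul_apply, Matrix.neg_apply, Matrix.sum_apply, t3, smul_eq_mul,
      star_smul, Finset.mul_sum]
    have : star (k : ℂ) = k := by simp
    rw [this]
    simp only [mul_assoc]
    ring
  rw [integral_congr_ae (ae_of_all _ key)] at hz2
  have c1 : ∀ n, Continuous (fun U : Matrix.unitaryGroup (Fin N) ℂ => pw 1 U n) := fun n =>
    ((HasGrad.trace_pow (N := N) n).const_mul 1).cont
  have c2 := h.cont
  have c3 := h.contD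
  have c4 : Continuous (fun U : Matrix.unitaryGroup (Fin N) ℂ => ((U : Matrix (Fin N) (Fin N) ℂ))) := continuous_subtype_val
  rw [integral_sub, integral_const_mul, sub_eq_zero] at hz2
  · exact hz2
  · apply integrable_of_cont
    have c5 : Continuous (fun U : Matrix.unitaryGroup (Fin N) ℂ => ((U : Matrix (Fin N) (Fin N) ℂ) ^ j * G U).trace) :=
      ((c4.pow j).matrix_mul c3).matrix_trace
    have c6 : Continuous (fun U : Matrix.unitaryGroup (Fin N) ℂ => ∑ l ∈ Finset.range j, pw 1 U (j - l) * pw 1 U l) :=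
      continuous_finsetSum _ (fun l _ => (c1 _).mul (c1 _))
    exact (Complex.continuous_conj.comp (c1 k)).mul ((c2.mul c6).add c5)
  · apply integrable_of_cont
    exact continuous_const.mul ((Complex.continuous_conj.comp (c1 (k - j))).mul c2)

end VC

open MeasureTheory Real Filter

namespace VC

variable {N : ℕ}

lemma pw_cont (c : ℂ) (n : ℕ) : Continuous (fun U : Matrix.unitaryGroup (Fin N) ℂ => pw c U n) :=
  ((HasGrad.trace_pow (N := N) n).const_mul c).cont

lemma pw_neg (U : Matrix.unitaryGroup (Fin N) ℂ) : pw (-1) U = - pw 1 U := by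
  funext n; simp [pw]

lemma pw_zero (U : Matrix.unitaryGroup (Fin N) ℂ) : pw 1 U 0 = N := by
  simp [pw]

lemma eSeq_cont (c : ℂ) (r : ℕ) : Continuous (fun U : Matrix.unitaryGroup (Fin N) ℂ => eSeq (pw c U) r) :=
  (HasGrad.eSeq c r).cont

noncomputable def cc (ℙ : Measure (Matrix.unitaryGroup (Fin N) ℂ)) (k r : ℕ) : ℂ :=
  ∫ U, starRingEnd ℂ (pw 1 U k) * (eSeq (pw 1 U) r * eSeq (pw (-1) U) (k - r)) ∂ℙ

noncomputable def Yf (U : Matrix.unitaryGroup (Fin N) ℂ) (r m : ℕ) : ℂ :=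
  ∑ j ∈ Finset.range r, ∑ n ∈ Finset.range m,
    eSeq (pw 1 U) (r - (j + 1)) * (eSeq (pw (-1) U) (m - (n + 1)) * pw 1 U (n + 1 + (j + 1)))

lemma Yf_cont (r m : ℕ) : Continuous (fun U : Matrix.unitaryGroup (Fin N) ℂ => Yf U r m) :=
  continuous_finsetSum _ (fun _ _ => continuous_finsetSum _ (fun _ _ =>
    (eSeq_cont _ _).mul ((eSeq_cont _ _).mul (pw_cont _ _))))

lemma conj_pw_cont (n : ℕ) : Continuous (fun U : Matrix.unitaryGroup (Fin N) ℂ => starRingEnd ℂ (pw 1 U n)) :=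
  Complex.continuous_conj.comp (pw_cont 1 n)

lemma cc_step (ℙ : Measure (Matrix.unitaryGroup (Fin N) ℂ)) [IsProbabilityMeasure ℙ]
    [ℙ.IsMulLeftInvariant] (k r : ℕ) (hr : r ≤ k) :
    -(((N : ℂ) + 1 - r) * r) * cc ℙ k r + ∫ U, starRingEnd ℂ (pw 1 U k) * Yf U r (k - r) ∂ℙ
      = k * ∑ j ∈ Finset.range r, cc ℙ (k - (j + 1)) (r - (j + 1)) := by
  rw [Finset.mul_sum]
  have hj : ∀ j ∈ Finset.range r, (k : ℂ) * cc ℙ (k - (j + 1)) (r - (j + 1)) =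
      ∫ U, starRingEnd ℂ (pw 1 U k) * (eSeq (pw (-1) U) (k - r) *
        (eSeq (pw 1 U) (r - (j + 1)) * ∑ l ∈ Finset.range (j + 1), pw 1 U (j + 1 - l) * pw 1 U l
      - ∑ n ∈ Finset.range (r - (j + 1)), eSeq (pw 1 U) (r - (j + 1) - (n + 1)) * pw 1 U (n + 1 + (j + 1)))
      + ∑ n ∈ Finset.range (k - r),
        eSeq (pw 1 U) (r - (j + 1)) * (eSeq (pw (-1) U) (k - r - (n + 1)) * pw 1 U (n + 1 + (j + 1)))) ∂ℙ := by
    intro j hj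
    rw [Finset.mem_range] at hj
    rw [cc, show k - (j + 1) - (r - (j + 1)) = k - r by omega]
    rw [← SD ℙ ((HasGrad.eSeq (N := N) 1 (r - (j + 1))).mul (HasGrad.eSeq (N := N) (-1) (k - r))) k (j + 1) (by omega)]
    congr 1
    funext U
    congr 1
    rw [Matrix.mul_add, Matrix.trace_add]
    simp only [Matrix.mul_smul, Matrix.mul_sum, Matrix.trace_smul, Matrix.trace_sum, ← pow_add, smul_eq_mul, neg_neg,
      one_mul]
    have e : ∀ n, ((U : Matrix (Fin N) (Fin N) ℂ) ^ (j + 1 + (n + 1))).trace = pw 1 U (n + 1 + (j + 1)) := by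
      intro n; rw [pw, one_mul, add_comm]
    simp only [e, ← Finset.mul_sum]
    ring
  rw [Finset.sum_congr rfl hj, ← integral_finsetSum, cc, ← integral_const_mul, ← integral_add]
  · congr 1
    funext U
    have hz := Z_identity (pw 1 U) r
    rw [pw_zero] at hz
    rw [← Finset.mul_sum, Finset.sum_add_distrib, ← Finset.mul_sum, hz, Yf]
    ring
  · exact integrable_of_cont ℙ (continuous_const.mul ((conj_pw_cont k).mul ((eSeq_cont _ _).mul (eSeq_cont _ _))))
  · exact integrable_of_cont ℙ ((conj_pw_cont k).mul (Yf_cont _ _))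
  · intro j _
    apply integrable_of_cont
    refine (conj_pw_cont k).mul (Continuous.add (Continuous.mul (eSeq_cont _ _) (Continuous.sub
      (Continuous.mul (eSeq_cont _ _) (continuous_finsetSum _ (fun _ _ => (pw_cont _ _).mul (pw_cont _ _))))
      (continuous_finsetSum _ (fun _ _ => (eSeq_cont _ _).mul (pw_cont _ _)))))
      (continuous_finsetSum _ (fun _ _ => (eSeq_cont _ _).mul ((eSeq_cont _ _).mul (pw_cont _ _)))))

lemma card_roots (U : Matrix.unitaryGroup (Fin N) ℂ) :
    Multiset.card (U : Matrix (Fin N) (Fin N) ℂ).charpoly.roots = N := by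
  have h := (Polynomial.splits_iff_card_roots).mp (IsAlgClosed.splits (U : Matrix (Fin N) (Fin N) ℂ).charpoly)
  rw [h, Matrix.charpoly_natDegree_eq_dim, Fintype.card_fin]

lemma cc_value (hN : 1 ≤ N) (ℙ : Measure (Matrix.unitaryGroup (Fin N) ℂ)) [IsProbabilityMeasure ℙ]
    [ℙ.IsMulLeftInvariant] (k : ℕ) (hk : 1 ≤ k) (r : ℕ) (hr : r ≤ k) :
    cc ℙ k r = (if r = 0 then 1 else 0) - (if r = min k N then 1 else 0) := by
  refine solve_recursion N hN (cc ℙ) ?_ ?_ ?_ ?_ k hk r hr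
  · simp [cc, eSeq_zero, pw_zero]
  · intro k r hr
    have : ∀ U : Matrix.unitaryGroup (Fin N) ℂ, eSeq (pw 1 U) r = 0 := by
      intro U
      have h := eSeq_vanish (U : Matrix (Fin N) (Fin N) ℂ).charpoly.roots r (by rw [card_roots]; exact hr)
      rw [← h]
      congr 1
      funext n
      rw [pw, one_mul, trace_pow_roots]
    simp [cc, this]
  · intro k r hr
    have s1 := cc_step ℙ k r hr.le
    have s2 := cc_step ℙ k (r + 1) hr
    rw [mul_sub, ← s1, ← s2]
    obtain ⟨m, hm⟩ : ∃ m, k = r + (m + 1) := ⟨k - r - 1, by omega⟩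
    have e1 : k - r = m + 1 := by omega
    have e2 : k - (r + 1) = m := by omega
    have hY : ∫ U, starRingEnd ℂ (pw 1 U k) * Yf U r (k - r) ∂ℙ - ∫ U, starRingEnd ℂ (pw 1 U k) * Yf U (r + 1) (k - (r + 1)) ∂ℙ
      = -((r + 1) * cc ℙ k (r + 1)) - (m + 1) * cc ℙ k r := by
      rw [cc, cc, ← integral_const_mul, ← integral_const_mul, ← integral_neg, ← integral_sub, ← integral_sub]
      · congr 1
        funext U
        have := Y_identity (pw 1 U) r m
        rw [← pw_neg] at this
        rw [e1, e2, ← mul_sub, Yf, Yf, this]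
        ring
      · exact (integrable_of_cont ℙ (continuous_const.mul ((conj_pw_cont k).mul ((eSeq_cont _ _).mul (eSeq_cont _ _))))).neg
      · exact integrable_of_cont ℙ (continuous_const.mul ((conj_pw_cont k).mul ((eSeq_cont _ _).mul (eSeq_cont _ _))))
      · exact integrable_of_cont ℙ ((conj_pw_cont k).mul (Yf_cont _ _))
      · exact integrable_of_cont ℙ ((conj_pw_cont k).mul (Yf_cont _ _))
    have hkm : (k : ℂ) = r + (m + 1) := by rw [hm]; push_cast; ring
    rw [hkm]
    push_cast
    linear_combination -hY
  · intro k hk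
    have s1 := cc_step ℙ k k le_rfl
    rw [← s1]
    simp [Yf]

/-- Diaconis–Shahshahani second moment. -/
lemma second_moment (hN : 1 ≤ N) (ℙ : Measure (Matrix.unitaryGroup (Fin N) ℂ)) [IsProbabilityMeasure ℙ]
    [ℙ.IsMulLeftInvariant] (k : ℕ) (hk : 1 ≤ k) :
    ∫ U, starRingEnd ℂ (pw 1 U k) * pw 1 U k ∂ℙ = ((min k N : ℕ) : ℂ) := by
  have h1 : ∫ U, starRingEnd ℂ (pw 1 U k) * pw 1 U k ∂ℙ = - ∑ r ∈ Finset.range (k + 1), (r : ℂ) * cc ℙ k r := by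
    simp only [cc, ← integral_const_mul]
    rw [← integral_finsetSum, ← integral_neg]
    · congr 1
      funext U
      have hp : starRingEnd ℂ (pw 1 U k) * pw 1 U k = starRingEnd ℂ (pw 1 U k) *
          (- ∑ r ∈ Finset.range (k + 1), (r : ℂ) * (eSeq (pw 1 U) r * eSeq (-(pw 1 U)) (k - r))) := by
        rw [← power_sum_eq (pw 1 U) k hk]
      rw [hp, mul_neg, Finset.mul_sum, pw_neg]
      congr 1
      apply Finset.sum_congr rfl
      intro r _
      ring
    · intro r _
      exact integrable_of_cont ℙ (continuous_const.mul ((conj_pw_cont k).mul ((eSeq_cont _ _).mul (eSeq_cont _ _))))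
  rw [h1]
  have h2 : ∀ r ∈ Finset.range (k + 1), (r : ℂ) * cc ℙ k r = if r = min k N then -(r : ℂ) else 0 := by
    intro r hr
    rw [Finset.mem_range] at hr
    rw [cc_value hN ℙ k hk r (by omega)]
    by_cases h0 : r = 0
    · simp [h0]
    · simp only [if_neg h0]; split_ifs <;> simp
  rw [Finset.sum_congr rfl h2, Finset.sum_ite_eq', if_pos (by rw [Finset.mem_range]; omega)]
  simp

end VC

open MeasureTheory Real Filter

namespace VC

variable {N : ℕ}

/-- angle in `[0,2π)` -/
noncomputable def ang (z : ℂ) : ℝ := if 0 ≤ Complex.arg z then Complex.arg z else Complex.arg z + 2 * π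

lemma ang_mem (z : ℂ) : ang z ∈ Set.Ico 0 (2 * π) := by
  have h1 := Complex.neg_pi_lt_arg z
  have h2 := Complex.arg_le_pi z
  have := Real.pi_pos
  unfold ang
  split_ifs with h
  · exact ⟨h, by linarith⟩
  · push Not at h; exact ⟨by linarith, by linarith⟩

lemma exp_ang (z : ℂ) (hz : ‖z‖ = 1) : Complex.exp (ang z * Complex.I) = z := by
  have h := Complex.norm_mul_exp_arg_mul_I z
  rw [hz] at h
  simp only [Complex.ofReal_one, one_mul] at h
  unfold ang
  split_ifs
  · exact h
  · push_cast
    rw [add_mul, Complex.exp_add, h, Complex.exp_two_pi_mul_I, mul_one]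

lemma exists_enum (U : Matrix.unitaryGroup (Fin N) ℂ) : ∃ z : Fin N → ℂ,
    (U : Matrix (Fin N) (Fin N) ℂ).charpoly.roots = Finset.univ.val.map z := by
  have h := card_roots U
  generalize (U : Matrix (Fin N) (Fin N) ℂ).charpoly.roots = s at h
  induction s using Quot.inductionOn with
  | _ l =>
    have hl : l.length = N := h
    subst hl
    refine ⟨l.get, ?_⟩
    rw [Fin.univ_val_map, List.ofFn_get]
    rfl

noncomputable def zz (U : Matrix.unitaryGroup (Fin N) ℂ) : Fin N → ℂ := (exists_enum U).choose

lemma zz_spec (U : Matrix.unitaryGroup (Fin N) ℂ) :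
    (U : Matrix (Fin N) (Fin N) ℂ).charpoly.roots = Finset.univ.val.map (zz U) := (exists_enum U).choose_spec

section
open scoped Matrix.Norms.L2Operator
lemma zz_norm (U : Matrix.unitaryGroup (Fin N) ℂ) (i : Fin N) : ‖zz U i‖ = 1 := by
  have h1 : zz U i ∈ (U : Matrix (Fin N) (Fin N) ℂ).charpoly.roots := by
    rw [zz_spec]; exact Multiset.mem_map_of_mem _ (Finset.mem_univ i)
  have h2 := Polynomial.isRoot_of_mem_roots h1
  rw [← Matrix.mem_spectrum_iff_isRoot_charpoly] at h2
  have := Unitary.spectrum_subset_circle U h2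
  simpa using this
end

noncomputable def xx (U : Matrix.unitaryGroup (Fin N) ℂ) (i : Fin N) : AddCircle (2 * π) := (ang (zz U i) : ℝ)

lemma fourier_xx (U : Matrix.unitaryGroup (Fin N) ℂ) (i : Fin N) (k : ℤ) :
    fourier k (xx U i) = zz U i ^ k := by
  rw [xx, fourier_coe_apply]
  conv_rhs => rw [← exp_ang _ (zz_norm U i)]
  rw [← Complex.exp_int_mul]
  congr 1
  have : (π : ℂ) ≠ 0 := Complex.ofReal_ne_zero.mpr Real.pi_ne_zero
  push_cast
  field_simp

noncomputable def T (g : AddCircle (2 * π) → ℂ) (U : Matrix.unitaryGroup (Fin N) ℂ) : ℂ := ∑ i, g (xx U i)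

noncomputable def Pz (k : ℤ) (U : Matrix.unitaryGroup (Fin N) ℂ) : ℂ :=
  ((U ^ k : Matrix.unitaryGroup (Fin N) ℂ) : Matrix (Fin N) (Fin N) ℂ).trace

lemma Pz_nat (n : ℕ) (U : Matrix.unitaryGroup (Fin N) ℂ) : Pz n U = pw 1 U n := by
  simp [Pz, pw]

lemma Pz_neg (k : ℤ) (U : Matrix.unitaryGroup (Fin N) ℂ) : Pz (-k) U = starRingEnd ℂ (Pz k U) := by
  rw [Pz, Pz, zpow_neg]
  have : (((U ^ k)⁻¹ : Matrix.unitaryGroup (Fin N) ℂ) : Matrix (Fin N) (Fin N) ℂ) = star ((U ^ k : Matrix.unitaryGroup (Fin N) ℂ) : Matrix (Fin N) (Fin N) ℂ) := rfl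
  rw [this, Matrix.star_eq_conjTranspose, Matrix.trace_conjTranspose]; rfl

lemma T_fourier (k : ℤ) (U : Matrix.unitaryGroup (Fin N) ℂ) : T (fourier k) U = Pz k U := by
  have hn : ∀ n : ℕ, T (fourier (n : ℤ)) U = Pz n U := by
    intro n
    rw [Pz_nat, pw, one_mul, trace_pow_roots, zz_spec, T]
    simp only [fourier_xx, zpow_natCast]
    rw [Multiset.map_map]
    rfl
  rcases Int.eq_nat_or_neg k with ⟨n, rfl | rfl⟩
  · exact hn n
  · rw [Pz_neg, ← hn, T, T, map_sum]
    apply Finset.sum_congr rfl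
    intro i _
    exact fourier_neg

lemma Pz_cont (k : ℤ) : Continuous (Pz (N := N) k) := by
  have h : Continuous (fun U : Matrix.unitaryGroup (Fin N) ℂ => U ^ k) := continuous_zpow k
  exact (continuous_subtype_val.comp h).matrix_trace

/-- scalar unitary matrices -/
noncomputable def sc : Circle →* Matrix.unitaryGroup (Fin N) ℂ where
  toFun c := ⟨(c : ℂ) • 1, by
    rw [Matrix.mem_unitaryGroup_iff, star_smul, star_one, smul_mul_smul_comm, one_mul]
    have : (c : ℂ) * star (c : ℂ) = 1 := by
      have := Complex.mul_conj (c : ℂ)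
      rw [Circle.normSq_coe] at this
      simpa using this
    rw [this, one_smul]⟩
  map_one' := by ext; simp
  map_mul' a b := by
    apply Subtype.ext
    simp [smul_smul, mul_comm]

lemma Pz_sc (c : Circle) (k : ℤ) (U : Matrix.unitaryGroup (Fin N) ℂ) : Pz k (sc c * U) = (c : ℂ) ^ k * Pz k U := by
  have hc : Commute (sc c) U := by
    apply Subtype.ext
    simp [sc]
  rw [Pz, hc.mul_zpow, ← map_zpow]
  simp [sc, Pz]

lemma exists_circle (m : ℤ) (hm : m ≠ 0) : ∃ c : Circle, (c : ℂ) ^ m = -1 := by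
  refine ⟨Circle.exp (π / m), ?_⟩
  rw [Circle.coe_exp, ← Complex.exp_int_mul]
  have : (m : ℂ) ≠ 0 := by exact_mod_cast hm
  rw [← Complex.exp_pi_mul_I]
  congr 1
  push_cast
  field_simp

lemma Pz_orth (ℙ : Measure (Matrix.unitaryGroup (Fin N) ℂ)) [IsProbabilityMeasure ℙ]
    [ℙ.IsMulLeftInvariant] (k l : ℤ) (hkl : k ≠ l) :
    ∫ U, starRingEnd ℂ (Pz l U) * Pz k U ∂ℙ = 0 := by
  obtain ⟨c, hc⟩ := exists_circle (k - l) (sub_ne_zero.mpr hkl)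
  have h := integral_mul_left_eq_self (μ := ℙ) (fun U => starRingEnd ℂ (Pz l U) * Pz k U) (sc c)
  have e : ∀ U : Matrix.unitaryGroup (Fin N) ℂ, starRingEnd ℂ (Pz l (sc c * U)) * Pz k (sc c * U) = - (starRingEnd ℂ (Pz l U) * Pz k U) := by
    intro U
    rw [Pz_sc, Pz_sc, map_mul, map_zpow₀]
    have hcz : (c : ℂ) ≠ 0 := Circle.coe_ne_zero c
    have : (starRingEnd ℂ) (c : ℂ) = (c : ℂ)⁻¹ := by rw [← Circle.coe_inv_eq_conj, Circle.coe_inv]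
    rw [this]
    have h2 : ((c : ℂ)⁻¹) ^ l * (c : ℂ) ^ k = -1 := by
      rw [← hc, zpow_sub₀ hcz, inv_zpow]; field_simp
    linear_combination (starRingEnd ℂ (Pz l U) * Pz k U) * h2
  simp only [e, integral_neg] at h
  have h3 : (2:ℂ) * ∫ U, starRingEnd ℂ (Pz l U) * Pz k U ∂ℙ = 0 := by linear_combination -h
  simpa using h3

lemma Pz_zero (U : Matrix.unitaryGroup (Fin N) ℂ) : Pz 0 U = N := by simp [Pz]

lemma Pz_mean (hN : 1 ≤ N) (ℙ : Measure (Matrix.unitaryGroup (Fin N) ℂ)) [IsProbabilityMeasure ℙ]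
    [ℙ.IsMulLeftInvariant] (k : ℤ) (hk : k ≠ 0) : ∫ U, Pz k U ∂ℙ = 0 := by
  have h := Pz_orth ℙ k 0 hk
  simp only [Pz_zero, integral_const_mul] at h
  have : (N : ℂ) ≠ 0 := by exact_mod_cast (by omega : N ≠ 0)
  simpa [this] using h

lemma Pz_sq (hN : 1 ≤ N) (ℙ : Measure (Matrix.unitaryGroup (Fin N) ℂ)) [IsProbabilityMeasure ℙ]
    [ℙ.IsMulLeftInvariant] (k : ℤ) (hk : k ≠ 0) :
    ∫ U, starRingEnd ℂ (Pz k U) * Pz k U ∂ℙ = ((min k.natAbs N : ℕ) : ℂ) := by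
  rcases Int.eq_nat_or_neg k with ⟨n, rfl | rfl⟩
  · simp only [Pz_nat]
    rw [second_moment hN ℙ n (by omega)]; simp
  · simp only [Pz_neg, Pz_nat]
    have := second_moment hN ℙ n (by omega)
    simp only [mul_comm, Complex.conj_conj] at this ⊢
    rw [this]; simp

end VC

open MeasureTheory Real Filter

namespace VC

variable {N : ℕ}

lemma fact_two_pi : Fact (0 < 2 * π) := ⟨Real.two_pi_pos⟩
attribute [local instance] fact_two_pi

noncomputable abbrev haarC : Measure (AddCircle (2 * π)) := AddCircle.haarAddCircle

structure Good (ℙ : Measure (Matrix.unitaryGroup (Fin N) ℂ)) (g : AddCircle (2 * π) → ℂ) : Prop where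
  meas : StronglyMeasurable (T (N := N) g)
  gmeas : StronglyMeasurable g
  bdd : ∃ C, ∀ x, ‖g x‖ ≤ C
  eq : ∫ U, T g U ∂ℙ = N * ∫ x, g x ∂haarC

lemma T_bound {g : AddCircle (2 * π) → ℂ} {C : ℝ} (h : ∀ x, ‖g x‖ ≤ C) (U : Matrix.unitaryGroup (Fin N) ℂ) :
    ‖T g U‖ ≤ N * C := by
  refine (norm_sum_le _ _).trans ((Finset.sum_le_sum (fun i _ => h _)).trans ?_)
  simp

lemma Good.lim (ℙ : Measure (Matrix.unitaryGroup (Fin N) ℂ)) [IsProbabilityMeasure ℙ]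
    {g : ℕ → AddCircle (2 * π) → ℂ} {g' : AddCircle (2 * π) → ℂ} (h : ∀ n, Good ℙ (g n))
    {C : ℝ} (hC : ∀ n x, ‖g n x‖ ≤ C) (hlim : ∀ x, Tendsto (fun n => g n x) atTop (nhds (g' x))) : Good ℙ g' := by
  have hT : ∀ U, Tendsto (fun n => T (N := N) (g n) U) atTop (nhds (T g' U)) := fun U =>
    tendsto_finsetSum _ (fun i _ => hlim _)
  refine ⟨?_, ?_, ?_, ?_⟩
  · exact stronglyMeasurable_of_tendsto atTop (fun n => (h n).meas) (tendsto_pi_nhds.mpr hT)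
  · exact stronglyMeasurable_of_tendsto atTop (fun n => (h n).gmeas) (tendsto_pi_nhds.mpr hlim)
  · exact ⟨C, fun x => le_of_tendsto ((hlim x).norm) (Eventually.of_forall (fun n => hC n x))⟩
  · have h1 := tendsto_integral_of_dominated_convergence (μ := ℙ) (fun _ => N * C)
      (fun n => (h n).meas.aestronglyMeasurable) (integrable_const _)
      (fun n => ae_of_all _ (T_bound (hC n))) (ae_of_all _ hT)
    have h2 := tendsto_integral_of_dominated_convergence (μ := haarC) (fun _ => C)
      (fun n => (h n).gmeas.aestronglyMeasurable) (integrable_const _)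
      (fun n => ae_of_all _ (hC n)) (ae_of_all _ hlim)
    simp only [(h _).eq] at h1
    exact tendsto_nhds_unique h1 (h2.const_mul _)

lemma Good.integrable {ℙ : Measure (Matrix.unitaryGroup (Fin N) ℂ)} [IsProbabilityMeasure ℙ]
    {g : AddCircle (2 * π) → ℂ} (h : Good ℙ g) : Integrable (T g) ℙ := by
  obtain ⟨C, hC⟩ := h.bdd
  exact Integrable.of_bound h.meas.aestronglyMeasurable (N * C) (ae_of_all _ (T_bound hC))

lemma Good.integrable' {ℙ : Measure (Matrix.unitaryGroup (Fin N) ℂ)}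
    {g : AddCircle (2 * π) → ℂ} (h : Good ℙ g) : Integrable g haarC := by
  obtain ⟨C, hC⟩ := h.bdd
  exact Integrable.of_bound h.gmeas.aestronglyMeasurable C (ae_of_all _ hC)

lemma T_add (f g : AddCircle (2 * π) → ℂ) (U : Matrix.unitaryGroup (Fin N) ℂ) :
    T (fun x => f x + g x) U = T f U + T g U := by simp [T, Finset.sum_add_distrib]

lemma T_smul (c : ℂ) (g : AddCircle (2 * π) → ℂ) (U : Matrix.unitaryGroup (Fin N) ℂ) :
    T (fun x => c * g x) U = c * T g U := by simp [T, Finset.mul_sum]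

lemma Good.add {ℙ : Measure (Matrix.unitaryGroup (Fin N) ℂ)} [IsProbabilityMeasure ℙ]
    {f g : AddCircle (2 * π) → ℂ} (hf : Good ℙ f) (hg : Good ℙ g) : Good ℙ (fun x => f x + g x) := by
  have e : T (N := N) (fun x => f x + g x) = fun U => T f U + T g U := funext (T_add f g)
  refine ⟨?_, hf.gmeas.add hg.gmeas, ?_, ?_⟩
  · rw [e]; exact hf.meas.add hg.meas
  · obtain ⟨C, hC⟩ := hf.bdd
    obtain ⟨D, hD⟩ := hg.bdd
    exact ⟨C + D, fun x => (norm_add_le _ _).trans (add_le_add (hC x) (hD x))⟩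
  · rw [e, integral_add hf.integrable hg.integrable, integral_add hf.integrable' hg.integrable', hf.eq, hg.eq]
    ring

lemma Good.const_mul {ℙ : Measure (Matrix.unitaryGroup (Fin N) ℂ)} [IsProbabilityMeasure ℙ]
    {g : AddCircle (2 * π) → ℂ} (c : ℂ) (hg : Good ℙ g) : Good ℙ (fun x => c * g x) := by
  have e : T (N := N) (fun x => c * g x) = fun U => c * T g U := funext (T_smul c g)
  refine ⟨?_, stronglyMeasurable_const.mul hg.gmeas, ?_, ?_⟩
  · rw [e]; exact stronglyMeasurable_const.mul hg.meas
  · obtain ⟨D, hD⟩ := hg.bdd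
    exact ⟨‖c‖ * D, fun x => by rw [norm_mul]; exact mul_le_mul_of_nonneg_left (hD x) (norm_nonneg c)⟩
  · rw [e, integral_const_mul, integral_const_mul, hg.eq]
    ring

lemma integral_fourier (k : ℤ) : ∫ x, fourier k x ∂haarC = if k = 0 then 1 else 0 := by
  have h := congrFun (fourierCoeff_fourier (T := 2 * π) k) 0
  rw [fourierCoeff] at h
  simp only [neg_zero, fourier_zero, one_smul] at h
  rw [h]
  by_cases hk : k = 0
  · simp [hk]
  · rw [if_neg hk, Pi.single_apply, if_neg (Ne.symm hk)]

lemma Good.fourier (hN : 1 ≤ N) (ℙ : Measure (Matrix.unitaryGroup (Fin N) ℂ)) [IsProbabilityMeasure ℙ]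
    [ℙ.IsMulLeftInvariant] (k : ℤ) : Good ℙ (fun x => fourier k x) := by
  have e : T (N := N) (fun x => _root_.fourier k x) = Pz k := funext (T_fourier k)
  refine ⟨?_, (_root_.fourier k).continuous.stronglyMeasurable, ⟨1, fun x => ?_⟩, ?_⟩
  · rw [e]; exact (Pz_cont k).stronglyMeasurable
  · rw [fourier_apply]; exact (Circle.norm_coe _).le
  · rw [e, integral_fourier]
    by_cases hk : k = 0
    · simp [hk, Pz_zero]
    · simp [hk, Pz_mean hN ℙ k hk]

lemma Good.continuous (hN : 1 ≤ N) (ℙ : Measure (Matrix.unitaryGroup (Fin N) ℂ)) [IsProbabilityMeasure ℙ]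
    [ℙ.IsMulLeftInvariant] (g : C(AddCircle (2 * π), ℂ)) : Good ℙ (fun x => g x) := by
  have hspan : ∀ f ∈ Submodule.span ℂ (Set.range (@_root_.fourier (2 * π))), Good ℙ (fun x => f x) := by
    intro f hf
    induction hf using Submodule.span_induction with
    | mem f hf => obtain ⟨k, rfl⟩ := hf; exact Good.fourier hN ℙ k
    | zero => simpa using (Good.fourier hN ℙ 0).const_mul 0
    | add f g _ _ h1 h2 => exact h1.add h2
    | smul c f _ h => exact h.const_mul c
  have hg : g ∈ closure ((Submodule.span ℂ (Set.range (@_root_.fourier (2 * π))) : Submodule ℂ _) : Set C(AddCircle (2 * π), ℂ)) := by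
    rw [← Submodule.topologicalClosure_coe, span_fourier_closure_eq_top]; trivial
  obtain ⟨u, hu, hlim⟩ := mem_closure_iff_seq_limit.mp hg
  obtain ⟨C, hC⟩ := (Metric.isBounded_range_of_tendsto u hlim).exists_norm_le
  exact Good.lim ℙ (g := fun n x => u n x) (fun n => hspan _ (hu n)) (C := C)
    (fun n x => ((u n).norm_coe_le_norm x).trans (hC _ ⟨n, rfl⟩))
    (fun x => ((continuous_eval_const x).tendsto g).comp hlim)

/-- bounded pointwise limits of continuous functions, transformed continuously -/
lemma Good.comp_indicator (hN : 1 ≤ N) (ℙ : Measure (Matrix.unitaryGroup (Fin N) ℂ)) [IsProbabilityMeasure ℙ]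
    [ℙ.IsMulLeftInvariant] (K : Set (AddCircle (2 * π))) (hK : IsClosed K)
    (Φ : ℂ × AddCircle (2 * π) → ℂ) (hΦ : Continuous Φ) :
    Good ℙ (fun x => Φ (K.indicator (fun _ => (1:ℂ)) x, x)) := by
  have hδ : ∀ n : ℕ, 0 < 1 / ((n : ℝ) + 1) := fun n => by positivity
  have hl := thickenedIndicator_tendsto_indicator_closure hδ tendsto_one_div_add_atTop_nhds_zero_nat K
  rw [hK.closure_eq, tendsto_pi_nhds] at hl
  set u : ℕ → AddCircle (2 * π) → ℂ := fun n x => (((thickenedIndicator (hδ n) K x : NNReal) : ℝ) : ℂ) with hu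
  have hcu : ∀ n, Continuous (u n) := fun n => Complex.continuous_ofReal.comp
    (NNReal.continuous_coe.comp (thickenedIndicator (hδ n) K).continuous)
  obtain ⟨C, hC⟩ := ((isCompact_closedBall (0:ℂ) 1).prod (isCompact_univ (X := AddCircle (2 * π)))).exists_bound_of_continuousOn
    hΦ.continuousOn
  refine Good.lim ℙ (g := fun n x => Φ (u n x, x)) (C := C) (fun n => ?_) (fun n x => ?_) (fun x => ?_)
  · exact Good.continuous hN ℙ ⟨fun x => Φ (u n x, x), hΦ.comp ((hcu n).prodMk continuous_id)⟩
  · apply hC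
    refine ⟨?_, trivial⟩
    simp only [mem_closedBall_zero_iff, hu, Complex.norm_real, Real.norm_eq_abs, NNReal.abs_eq]
    exact_mod_cast thickenedIndicator_le_one (hδ n) K x
  · refine (hΦ.tendsto _).comp (Tendsto.prodMk_nhds ?_ tendsto_const_nhds)
    have h1 := (Complex.continuous_ofReal.comp NNReal.continuous_coe).tendsto _ |>.comp (hl x)
    have h2 : (Complex.ofReal ∘ NNReal.toReal) (K.indicator (fun x => 1) x) = K.indicator (fun _ => (1:ℂ)) x := by
      by_cases hx : x ∈ K <;> simp [hx]
    rw [h2] at h1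
    exact h1

end VC

open MeasureTheory Real Filter

namespace VC

attribute [local instance] fact_two_pi

variable {N : ℕ}

lemma tendsto_L2 {Ω ι : Type*} [MeasurableSpace Ω] (μ : Measure Ω) [IsProbabilityMeasure μ] (l : Filter ι)
    (Y : Ω → ℂ) (Z : ι → Ω → ℂ) (C : ℝ) (hY : ∀ x, ‖Y x‖ ≤ C) (hYm : StronglyMeasurable Y)
    (hZb : ∀ i, ∃ B, ∀ x, ‖Z i x‖ ≤ B) (hZm : ∀ i, StronglyMeasurable (Z i))
    (hlim : Tendsto (fun i => ∫ x, ‖Y x - Z i x‖ ^ 2 ∂μ) l (nhds 0)) :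
    Tendsto (fun i => ∫ x, ‖Z i x‖ ^ 2 ∂μ) l (nhds (∫ x, ‖Y x‖ ^ 2 ∂μ)) := by
  have hYi : Integrable (fun x => ‖Y x‖ ^ 2) μ := by
    refine Integrable.of_bound (hYm.norm.pow 2).aestronglyMeasurable (C ^ 2) (ae_of_all _ (fun x => ?_))
    rw [norm_pow, norm_norm]
    exact pow_le_pow_left₀ (norm_nonneg _) (hY x) 2
  have hZi : ∀ i, Integrable (fun x => ‖Z i x‖ ^ 2) μ := by
    intro i
    obtain ⟨B, hB⟩ := hZb i
    refine Integrable.of_bound ((hZm i).norm.pow 2).aestronglyMeasurable (B ^ 2) (ae_of_all _ (fun x => ?_))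
    rw [norm_pow, norm_norm]
    exact pow_le_pow_left₀ (norm_nonneg _) (hB x) 2
  have hDi : ∀ i, Integrable (fun x => ‖Y x - Z i x‖ ^ 2) μ := by
    intro i
    obtain ⟨B, hB⟩ := hZb i
    refine Integrable.of_bound ((hYm.sub (hZm i)).norm.pow 2).aestronglyMeasurable ((C + B) ^ 2) (ae_of_all _ (fun x => ?_))
    simp only [norm_pow, norm_norm]
    exact pow_le_pow_left₀ (norm_nonneg _) ((norm_sub_le _ _).trans (add_le_add (hY x) (hB x))) 2
  have key : ∀ ε > 0, ∀ i, |∫ x, ‖Z i x‖ ^ 2 ∂μ - ∫ x, ‖Y x‖ ^ 2 ∂μ| ≤ ε + (1 + C ^ 2 / ε) * ∫ x, ‖Y x - Z i x‖ ^ 2 ∂μ := by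
    intro ε hε i
    rw [← integral_sub (hZi i) hYi]
    have e : ε + (1 + C ^ 2 / ε) * ∫ x, ‖Y x - Z i x‖ ^ 2 ∂μ = ∫ x, (ε + (1 + C ^ 2 / ε) * ‖Y x - Z i x‖ ^ 2) ∂μ := by
      rw [integral_add (integrable_const _) ((hDi i).const_mul _), integral_const_mul]; simp
    rw [e]
    refine (abs_integral_le_integral_abs).trans (integral_mono ((hZi i).sub hYi).abs
      ((integrable_const _).add ((hDi i).const_mul _)) (fun x => ?_))
    simp only
    have h1 : ‖Z i x‖ ≤ ‖Y x‖ + ‖Y x - Z i x‖ := by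
      have := norm_sub_le (Y x) (Y x - Z i x); simpa using this
    have h2 : ‖Y x‖ ≤ ‖Z i x‖ + ‖Y x - Z i x‖ := by
      have := norm_add_le (Z i x) (Y x - Z i x); simpa using this
    have h3 := hY x
    have hn := norm_nonneg (Y x)
    have hz := norm_nonneg (Z i x)
    set d := ‖Y x - Z i x‖ with hd
    have hd0 : 0 ≤ d := norm_nonneg _
    have h4 : 2 * C * d ≤ ε + C ^ 2 / ε * d ^ 2 := by
      have : ε + C ^ 2 / ε * d ^ 2 - 2 * C * d = (ε - C * d) ^ 2 / ε := by field_simp; ring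
      have h5 : 0 ≤ (ε - C * d) ^ 2 / ε := by positivity
      linarith
    rw [abs_le]
    constructor <;> nlinarith
  rw [Metric.tendsto_nhds]
  intro ε hε
  have hl2 := (hlim.const_mul (1 + C ^ 2 / (ε / 2)))
  rw [mul_zero] at hl2
  filter_upwards [hl2.eventually (gt_mem_nhds (show (0:ℝ) < ε / 2 by linarith))] with i hi
  rw [Real.dist_eq]
  have := key (ε / 2) (by linarith) i
  linarith

/-- the closed arc -/
def arc (θ : ℝ) : Set (AddCircle (2 * π)) := (fun x : ℝ => (x : AddCircle (2 * π))) '' Set.Icc 0 θ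

lemma arc_closed (θ : ℝ) : IsClosed (arc θ) :=
  (isCompact_Icc.image (AddCircle.continuous_mk' (2 * π))).isClosed

lemma mem_arc {θ x : ℝ} (hθ : θ < 2 * π) (hx : x ∈ Set.Ico 0 (2 * π)) :
    ((x : ℝ) : AddCircle (2 * π)) ∈ arc θ ↔ x ∈ Set.Icc 0 θ := by
  constructor
  · rintro ⟨y, hy, hxy⟩
    have := (AddCircle.coe_eq_coe_iff_of_mem_Ico (p := 2 * π) (a := 0) (x := y) (y := x)
      ⟨hy.1, by linarith [hy.2]⟩ (by simpa using hx)).mp hxy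
    rwa [← this]
  · intro h; exact ⟨x, h, rfl⟩

noncomputable def ff (θ : ℝ) : AddCircle (2 * π) → ℂ := (arc θ).indicator (fun _ => (1:ℂ))

lemma countFun_eq (U : Matrix.unitaryGroup (Fin N) ℂ) {θ : ℝ} (hθ : θ < 2 * π) :
    ((countFun N U θ : ℕ) : ℂ) = T (ff θ) U := by
  classical
  have h1 : eigenAngles N U = Finset.univ.val.map (fun i => ang (zz U i)) := by
    rw [eigenAngles, zz_spec, Multiset.map_map]; rfl
  rw [countFun, countAngles, h1, T, ← Multiset.countP_eq_card_filter, Multiset.countP_map]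
  have h2 : ∀ i, ff θ (xx U i) = if ang (zz U i) ∈ Set.Icc 0 θ then 1 else 0 := by
    intro i
    rw [ff, Set.indicator_apply]
    exact if_congr (mem_arc hθ (ang_mem _)) rfl rfl
  simp only [h2]
  rw [Finset.sum_boole, Finset.card_def, Finset.filter_val]
  congr!

noncomputable def SS (a : ℤ → ℂ) (s : Finset ℤ) : C(AddCircle (2 * π), ℂ) := ∑ k ∈ s, a k • fourier k

lemma SS_apply (a : ℤ → ℂ) (s : Finset ℤ) (x) : SS a s x = ∑ k ∈ s, a k * fourier k x := by
  rw [SS, ContinuousMap.coe_sum, Finset.sum_apply]; rfl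

lemma T_SS (a : ℤ → ℂ) (s : Finset ℤ) (U : Matrix.unitaryGroup (Fin N) ℂ) :
    T (SS a s) U = ∑ k ∈ s, a k * Pz k U := by
  simp only [← T_fourier, T, SS_apply, Finset.mul_sum]
  rw [Finset.sum_comm]

lemma ff_memLp (θ : ℝ) : MemLp (ff θ) 2 haarC := by
  apply MemLp.of_bound (C := 1)
  · exact (stronglyMeasurable_const.indicator (arc_closed θ).measurableSet).aestronglyMeasurable
  · refine ae_of_all _ (fun x => ?_)
    rw [ff]; by_cases hx : x ∈ arc θ <;> simp [hx]

lemma norm_sq_Lp (G : Lp ℂ 2 haarC) : ‖G‖ ^ 2 = ∫ x, ‖G x‖ ^ 2 ∂haarC := by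
  have h : inner ℂ G G = ∫ x, inner ℂ (G x) (G x) ∂haarC := L2.inner_def G G
  rw [inner_self_eq_norm_sq_to_K] at h
  have h2 : ∀ x, inner ℂ (G x) (G x) = ((‖G x‖ ^ 2 : ℝ) : ℂ) := by
    intro x; rw [inner_self_eq_norm_sq_to_K]; push_cast; rfl
  simp only [h2] at h
  rw [integral_complex_ofReal] at h
  apply Complex.ofReal_injective
  rw [← h, Complex.ofReal_pow]
  rfl

lemma fourier_L2 (θ : ℝ) :
    Tendsto (fun s : Finset ℤ => ∫ x, ‖ff θ x - SS (fourierCoeff (ff θ)) s x‖ ^ 2 ∂haarC) atTop (nhds 0) := by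
  set F := (ff_memLp θ).toLp (ff θ) with hF
  have hc : ∀ k, fourierCoeff F k = fourierCoeff (ff θ) k := fun k =>
    congrFun (fourierCoeff_congr_ae (ff_memLp θ).coeFn_toLp) k
  have h := hasSum_fourier_series_L2 F
  simp only [hc] at h
  have h1 : Tendsto (fun s : Finset ℤ => ‖F - ∑ k ∈ s, fourierCoeff (ff θ) k • fourierLp 2 k‖ ^ 2) atTop (nhds 0) := by
    have h2 : Tendsto (fun s : Finset ℤ => F - ∑ k ∈ s, fourierCoeff (ff θ) k • fourierLp 2 k) atTop (nhds (F - F)) :=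
      tendsto_const_nhds.sub h
    have h3 := (h2.norm).pow 2
    simpa using h3
  refine h1.congr (fun s => ?_)
  rw [norm_sq_Lp]
  apply integral_congr_ae
  have e : ∑ k ∈ s, fourierCoeff (ff θ) k • fourierLp (T := 2 * π) 2 k =
      ContinuousMap.toLp (E := ℂ) 2 haarC ℂ (SS (fourierCoeff (ff θ)) s) := by
    rw [SS, map_sum]; rfl
  rw [e]
  filter_upwards [Lp.coeFn_sub F (ContinuousMap.toLp (E := ℂ) 2 haarC ℂ (SS (fourierCoeff (ff θ)) s)),
    (ff_memLp θ).coeFn_toLp, ContinuousMap.coeFn_toLp (E := ℂ) (p := 2) (𝕜 := ℂ) haarC (SS (fourierCoeff (ff θ)) s)] with x h1 h2 h3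
  rw [h1, Pi.sub_apply, hF, h2, h3]

end VC

open MeasureTheory Real Filter

namespace VC

attribute [local instance] fact_two_pi

variable {N : ℕ}

lemma good_ff (hN : 1 ≤ N) (ℙ : Measure (Matrix.unitaryGroup (Fin N) ℂ)) [IsProbabilityMeasure ℙ]
    [ℙ.IsMulLeftInvariant] (θ : ℝ) : Good ℙ (ff θ) :=
  Good.comp_indicator hN ℙ (arc θ) (arc_closed θ) Prod.fst continuous_fst

lemma integral_ofReal_C {Ω : Type*} [MeasurableSpace Ω] (μ : Measure Ω) (f : Ω → ℝ) :
    ∫ x, ((f x : ℝ) : ℂ) ∂μ = ((∫ x, f x ∂μ : ℝ) : ℂ) := integral_complex_ofReal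

lemma T_sub (f g : AddCircle (2 * π) → ℂ) (U : Matrix.unitaryGroup (Fin N) ℂ) :
    T f U - T g U = T (fun x => f x - g x) U := by simp [T, Finset.sum_sub_distrib]

lemma L2_le (hN : 1 ≤ N) (ℙ : Measure (Matrix.unitaryGroup (Fin N) ℂ)) [IsProbabilityMeasure ℙ]
    [ℙ.IsMulLeftInvariant] (θ : ℝ) (h : C(AddCircle (2 * π), ℂ)) :
    ∫ U, ‖T (ff θ) U - T h U‖ ^ 2 ∂ℙ ≤ N * (N * ∫ x, ‖ff θ x - h x‖ ^ 2 ∂haarC) := by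
  have hg : Good ℙ (fun x => ((‖ff θ x - h x‖ ^ 2 : ℝ) : ℂ)) :=
    Good.comp_indicator hN ℙ (arc θ) (arc_closed θ) (fun p => ((‖p.1 - h p.2‖ ^ 2 : ℝ) : ℂ)) (by fun_prop)
  have hT : ∀ U : Matrix.unitaryGroup (Fin N) ℂ, T (fun x => ((‖ff θ x - h x‖ ^ 2 : ℝ) : ℂ)) U
      = ((∑ i, ‖ff θ (xx U i) - h (xx U i)‖ ^ 2 : ℝ) : ℂ) := by
    intro U; rw [T]; push_cast; rfl
  have heq := hg.eq
  have hint := hg.integrable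
  rw [show T (N := N) (fun x => ((‖ff θ x - h x‖ ^ 2 : ℝ) : ℂ)) = fun U => ((∑ i, ‖ff θ (xx U i) - h (xx U i)‖ ^ 2 : ℝ) : ℂ) from funext hT] at hint
  simp only [hT] at heq
  rw [integral_ofReal_C, integral_ofReal_C] at heq
  have heq' : ∫ U : Matrix.unitaryGroup (Fin N) ℂ, ∑ i, ‖ff θ (xx U i) - h (xx U i)‖ ^ 2 ∂ℙ = N * ∫ x, ‖ff θ x - h x‖ ^ 2 ∂haarC := by
    exact_mod_cast heq
  rw [← heq', ← integral_const_mul]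
  have hint' : Integrable (fun U : Matrix.unitaryGroup (Fin N) ℂ => ∑ i, ‖ff θ (xx U i) - h (xx U i)‖ ^ 2) ℙ := by
    exact hint.re
  apply integral_mono_of_nonneg (ae_of_all _ (fun U => by positivity)) (hint'.const_mul _)
  refine ae_of_all _ (fun U => ?_)
  simp only
  rw [T_sub, T]
  calc ‖∑ i, (ff θ (xx U i) - h (xx U i))‖ ^ 2 ≤ (∑ i, ‖ff θ (xx U i) - h (xx U i)‖) ^ 2 :=
        pow_le_pow_left₀ (norm_nonneg _) (norm_sum_le _ _) 2
    _ ≤ _ := by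
        have := sq_sum_le_card_mul_sum_sq (s := (Finset.univ : Finset (Fin N))) (f := fun i => ‖ff θ (xx U i) - h (xx U i)‖)
        simpa using this

lemma norm_sq_sum (hN : 1 ≤ N) (ℙ : Measure (Matrix.unitaryGroup (Fin N) ℂ)) [IsProbabilityMeasure ℙ]
    [ℙ.IsMulLeftInvariant] (a : ℤ → ℂ) (s : Finset ℤ) (hs : 0 ∉ s) :
    ∫ U, ‖∑ k ∈ s, a k * Pz k U‖ ^ 2 ∂ℙ = ∑ k ∈ s, ‖a k‖ ^ 2 * ((min k.natAbs N : ℕ) : ℝ) := by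
  apply Complex.ofReal_injective
  rw [← integral_ofReal_C]
  have e : ∀ U : Matrix.unitaryGroup (Fin N) ℂ, ((‖∑ k ∈ s, a k * Pz k U‖ ^ 2 : ℝ) : ℂ)
      = ∑ l ∈ s, ∑ k ∈ s, (starRingEnd ℂ (a l) * a k) * (starRingEnd ℂ (Pz l U) * Pz k U) := by
    intro U
    rw [Complex.ofReal_pow, ← Complex.conj_mul', map_sum, Finset.sum_mul_sum]
    refine Finset.sum_congr rfl (fun l _ => Finset.sum_congr rfl (fun k _ => ?_))
    rw [map_mul]; ring
  simp only [e]
  have hi : ∀ l k, Integrable (fun U : Matrix.unitaryGroup (Fin N) ℂ => (starRingEnd ℂ (a l) * a k) * (starRingEnd ℂ (Pz l U) * Pz k U)) ℙ := by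
    intro l k
    apply integrable_of_cont
    exact continuous_const.mul ((Complex.continuous_conj.comp (Pz_cont l)).mul (Pz_cont k))
  rw [integral_finsetSum _ (fun l _ => integrable_finsetSum _ (fun k _ => hi l k))]
  rw [Complex.ofReal_sum]
  refine Finset.sum_congr rfl (fun l hl => ?_)
  rw [integral_finsetSum _ (fun k _ => hi l k), Finset.sum_eq_single l]
  · rw [integral_const_mul, Pz_sq hN ℙ l (fun h => hs (h ▸ hl)), Complex.conj_mul']
    rw [Complex.ofReal_mul, Complex.ofReal_pow, Complex.ofReal_natCast]
  · intro k _ hk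
    rw [integral_const_mul, Pz_orth ℙ k l hk, mul_zero]
  · intro h; exact absurd hl h

lemma var_lim (hN : 1 ≤ N) (ℙ : Measure (Matrix.unitaryGroup (Fin N) ℂ)) [IsProbabilityMeasure ℙ]
    [ℙ.IsMulLeftInvariant] {θ : ℝ} (hθ : θ < 2 * π) :
    Tendsto (fun n : ℕ => ∑ k ∈ (Finset.Icc (-n : ℤ) n).erase 0,
      ‖fourierCoeff (ff θ) k‖ ^ 2 * ((min k.natAbs N : ℕ) : ℝ)) atTop
      (nhds (ProbabilityTheory.variance (fun U => (countFun N U θ : ℝ)) ℙ)) := by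
  set a := fourierCoeff (ff θ) with ha
  have hg := good_ff hN ℙ θ
  have ha0 : a 0 = ∫ x, ff θ x ∂haarC := by
    rw [ha, fourierCoeff]; simp
  have hre : ∀ U : Matrix.unitaryGroup (Fin N) ℂ, T (ff θ) U = (((countFun N U θ : ℕ) : ℝ) : ℂ) := by
    intro U; rw [← countFun_eq U hθ]; simp
  have hmean : (N : ℂ) * a 0 = ((∫ U, (countFun N U θ : ℝ) ∂ℙ : ℝ) : ℂ) := by
    rw [ha0, ← hg.eq, ← integral_ofReal_C]
    simp only [hre]
  have hmeas : AEMeasurable (fun U => (countFun N U θ : ℝ)) ℙ := by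
    have : (fun U => (countFun N U θ : ℝ)) = fun U => (T (ff θ) U).re := by
      funext U; rw [hre, Complex.ofReal_re]
    rw [this]
    exact (Complex.measurable_re.comp hg.meas.measurable).aemeasurable
  rw [ProbabilityTheory.variance_eq_integral hmeas]
  have hv : ∫ U, ((countFun N U θ : ℝ) - ∫ U, (countFun N U θ : ℝ) ∂ℙ) ^ 2 ∂ℙ
      = ∫ U, ‖T (ff θ) U - N * a 0‖ ^ 2 ∂ℙ := by
    congr 1; funext U
    rw [hre, hmean, ← Complex.ofReal_sub, Complex.norm_real, Real.norm_eq_abs, sq_abs]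
  rw [hv]
  have hns : ∀ n : ℕ, (0:ℤ) ∉ (Finset.Icc (-n : ℤ) n).erase 0 := fun n => by simp
  simp only [← norm_sq_sum hN ℙ a _ (hns _)]
  have hbd : ∀ x, ‖ff θ x‖ ≤ 1 := by
    intro x; rw [ff]; by_cases hx : x ∈ arc θ <;> simp [hx]
  refine tendsto_L2 ℙ atTop (fun U => T (ff θ) U - N * a 0)
    (fun (n : ℕ) U => ∑ k ∈ (Finset.Icc (-n : ℤ) n).erase 0, a k * Pz k U) (N * 1 + ‖(N:ℂ) * a 0‖)
    (fun U => (norm_sub_le _ _).trans (add_le_add (T_bound hbd U) le_rfl))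
    (hg.meas.sub stronglyMeasurable_const) (fun n => ?_) (fun n => ?_) ?_
  · have hc : Continuous (fun U : Matrix.unitaryGroup (Fin N) ℂ => ∑ k ∈ (Finset.Icc (-n : ℤ) n).erase 0, a k * Pz k U) :=
      continuous_finsetSum _ (fun k _ => continuous_const.mul (Pz_cont k))
    obtain ⟨C, hC⟩ := IsCompact.exists_bound_of_continuousOn isCompact_univ hc.continuousOn
    exact ⟨C, fun x => hC x (Set.mem_univ x)⟩
  · have hc : Continuous (fun U : Matrix.unitaryGroup (Fin N) ℂ => ∑ k ∈ (Finset.Icc (-n : ℤ) n).erase 0, a k * Pz k U) :=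
      continuous_finsetSum _ (fun k _ => continuous_const.mul (Pz_cont k))
    exact hc.stronglyMeasurable
  · have hl := (((fourier_L2 θ).comp (Finset.tendsto_Icc_neg (R := ℤ))).const_mul (N:ℝ)).const_mul (N:ℝ)
    rw [mul_zero, mul_zero] at hl
    refine squeeze_zero (fun n => integral_nonneg (fun U => by positivity)) (fun n => ?_) hl
    refine le_trans (le_of_eq ?_) (L2_le hN ℙ θ (SS a (Finset.Icc (-n : ℤ) n)))
    congr 1; funext U
    rw [T_SS, ← Finset.add_sum_erase _ _ (show (0:ℤ) ∈ Finset.Icc (-n : ℤ) n by simp), Pz_zero]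
    congr 2; ring

end VC

open MeasureTheory Real Filter

namespace VC

attribute [local instance] fact_two_pi

variable {N : ℕ}

lemma coeff_eq {θ : ℝ} (h0 : 0 ≤ θ) (hθ : θ < 2 * π) (k : ℤ) :
    fourierCoeff (ff θ) k = (1 / (2 * π) : ℝ) • ∫ x in (0:ℝ)..θ, Complex.exp ((-(k:ℂ) * Complex.I) * x) := by
  rw [fourierCoeff_eq_intervalIntegral _ _ 0, zero_add]
  congr 1
  have hF : ∀ x : ℝ, fourier (-k) (x : AddCircle (2 * π)) = Complex.exp ((-(k:ℂ) * Complex.I) * x) := by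
    intro x
    rw [fourier_coe_apply]
    congr 1
    have : (π : ℂ) ≠ 0 := by exact_mod_cast Real.pi_ne_zero
    push_cast
    field_simp
  have hc : Continuous (fun x : ℝ => Complex.exp ((-(k:ℂ) * Complex.I) * x)) := by fun_prop
  have e1 : ∀ᵐ x : ℝ, x ∈ Set.uIoc 0 θ → fourier (-k) (x : AddCircle (2 * π)) • ff θ (x : AddCircle (2 * π)) = Complex.exp ((-(k:ℂ) * Complex.I) * x) := by
    refine ae_of_all _ (fun x hx => ?_)
    rw [Set.uIoc_of_le h0] at hx
    have : (x : AddCircle (2 * π)) ∈ arc θ := (mem_arc hθ ⟨hx.1.le, by linarith [hx.2]⟩).mpr ⟨hx.1.le, hx.2⟩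
    rw [hF, ff, Set.indicator_of_mem this, smul_eq_mul, mul_one]
  have e2 : ∀ᵐ x : ℝ, x ∈ Set.uIoc θ (2 * π) → fourier (-k) (x : AddCircle (2 * π)) • ff θ (x : AddCircle (2 * π)) = 0 := by
    have h2 : ∀ᵐ x : ℝ, x ≠ 2 * π := by
      rw [ae_iff]; simp
    filter_upwards [h2] with x hx2 hx
    rw [Set.uIoc_of_le hθ.le] at hx
    have : (x : AddCircle (2 * π)) ∉ arc θ := by
      rw [mem_arc hθ ⟨by linarith [hx.1], lt_of_le_of_ne hx.2 hx2⟩]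
      intro h; linarith [h.2, hx.1]
    rw [ff, Set.indicator_of_notMem this, smul_zero]
  have i1 : IntervalIntegrable (fun x : ℝ => fourier (-k) (x : AddCircle (2 * π)) • ff θ (x : AddCircle (2 * π))) volume 0 θ := by
    refine (hc.intervalIntegrable 0 θ).congr_ae ?_
    rw [Filter.EventuallyEq, ae_restrict_iff' measurableSet_uIoc]
    filter_upwards [e1] with x hx h using (hx h).symm
  have i2 : IntervalIntegrable (fun x : ℝ => fourier (-k) (x : AddCircle (2 * π)) • ff θ (x : AddCircle (2 * π))) volume θ (2 * π) := by
    refine (intervalIntegrable_const (c := (0:ℂ))).congr_ae ?_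
    rw [Filter.EventuallyEq, ae_restrict_iff' measurableSet_uIoc]
    filter_upwards [e2] with x hx h using (hx h).symm
  rw [← intervalIntegral.integral_add_adjacent_intervals i1 i2, intervalIntegral.integral_congr_ae e1,
    intervalIntegral.integral_congr_ae e2]
  simp

lemma norm_exp_sub_one_sq (t : ℝ) : ‖Complex.exp (t * Complex.I) - 1‖ ^ 2 = 2 * (1 - cos t) := by
  rw [← Complex.normSq_eq_norm_sq, Complex.normSq_apply, Complex.exp_mul_I]
  have h1 : (Complex.cos t + Complex.sin t * Complex.I - 1).re = cos t - 1 := by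
    simp [Complex.cos_ofReal_re]
  have h2 : (Complex.cos t + Complex.sin t * Complex.I - 1).im = sin t := by
    simp [Complex.sin_ofReal_re]
  rw [h1, h2]
  nlinarith [Real.sin_sq_add_cos_sq t]

lemma coeff_norm {θ : ℝ} (h0 : 0 ≤ θ) (hθ : θ < 2 * π) (k : ℤ) (hk : k ≠ 0) :
    ‖fourierCoeff (ff θ) k‖ ^ 2 = (1 - cos (k.natAbs * θ)) / (2 * π ^ 2 * (k.natAbs : ℝ) ^ 2) := by
  have hkC : (k : ℂ) ≠ 0 := by exact_mod_cast hk
  have hc : (-(k:ℂ) * Complex.I) ≠ 0 := mul_ne_zero (neg_ne_zero.mpr hkC) Complex.I_ne_zero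
  rw [coeff_eq h0 hθ, integral_exp_mul_complex hc, norm_smul, norm_div (Complex.exp _ - Complex.exp _), norm_mul (-(k:ℂ)), norm_neg, Complex.norm_I, mul_one]
  have e : (-(k:ℂ) * Complex.I) * (θ:ℝ) = ((-(k * θ) : ℝ) : ℂ) * Complex.I := by push_cast; ring
  rw [e, mul_pow, div_pow]
  simp only [Complex.ofReal_zero, mul_zero, Complex.exp_zero]
  rw [norm_exp_sub_one_sq, cos_neg]
  have h1 : (‖(k:ℂ)‖) ^ 2 = (k.natAbs : ℝ) ^ 2 := by
    rw [Complex.norm_intCast, Nat.cast_natAbs, Int.cast_abs]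
  have h2 : cos (k * θ) = cos (k.natAbs * θ) := by
    rw [← cos_abs, abs_mul, Nat.cast_natAbs, Int.cast_abs, abs_of_nonneg h0]
  have hk' : (k.natAbs : ℝ) ≠ 0 := by exact_mod_cast Int.natAbs_ne_zero.mpr hk
  rw [h1, h2, Real.norm_eq_abs, sq_abs]
  field_simp

lemma sum_symm (f : ℕ → ℝ) (n : ℕ) :
    ∑ k ∈ (Finset.Icc (-n : ℤ) n).erase 0, f k.natAbs = ∑ k ∈ Finset.Icc 1 n, 2 * f k := by
  induction n with
  | zero => simp
  | succ n ih =>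
    rw [Finset.sum_Icc_succ_top (by omega), ← ih]
    have : (Finset.Icc (-(n + 1 : ℕ) : ℤ) (n + 1 : ℕ)).erase 0 =
        insert (-(n + 1 : ℕ) : ℤ) (insert ((n + 1 : ℕ) : ℤ) ((Finset.Icc (-n : ℤ) n).erase 0)) := by
      ext x; simp only [Finset.mem_erase, Finset.mem_Icc, Finset.mem_insert]; omega
    rw [this, Finset.sum_insert, Finset.sum_insert]
    · rw [Int.natAbs_neg, Int.natAbs_natCast]; ring
    · simp
    · simp only [Finset.mem_erase, Finset.mem_Icc, Finset.mem_insert]; omega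

lemma var_lim' (hN : 1 ≤ N) (ℙ : Measure (Matrix.unitaryGroup (Fin N) ℂ)) [IsProbabilityMeasure ℙ]
    [ℙ.IsMulLeftInvariant] {θ : ℝ} (h0 : 0 ≤ θ) (hθ : θ < 2 * π) :
    Tendsto (fun n : ℕ => (1 / π ^ 2) * ∑ k ∈ Finset.Icc 1 n, (1 - cos (k * θ)) * ((min k N : ℕ) : ℝ) / (k:ℝ) ^ 2) atTop
      (nhds (ProbabilityTheory.variance (fun U => (countFun N U θ : ℝ)) ℙ)) := by
  refine (var_lim hN ℙ hθ).congr (fun n => ?_)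
  rw [Finset.sum_congr rfl (g := fun k : ℤ => (fun m : ℕ => (1 - cos (m * θ)) / (2 * π ^ 2 * (m : ℝ) ^ 2) * ((min m N : ℕ) : ℝ)) k.natAbs)
    (fun k hk => by rw [coeff_norm h0 hθ k (Finset.ne_of_mem_erase hk)]),
    sum_symm (fun m : ℕ => (1 - cos (m * θ)) / (2 * π ^ 2 * (m : ℝ) ^ 2) * ((min m N : ℕ) : ℝ)), Finset.mul_sum]
  refine Finset.sum_congr rfl (fun k hk => ?_)
  have hk' : (k : ℝ) ≠ 0 := by
    have := (Finset.mem_Icc.mp hk).1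
    exact_mod_cast (by omega : k ≠ 0)
  field_simp

end VC

open MeasureTheory Real Filter

namespace VC

noncomputable def tt (N : ℕ) (θ : ℝ) (k : ℕ) : ℝ := (1 - cos (k * θ)) * ((min k N : ℕ) : ℝ) / (k:ℝ) ^ 2

noncomputable def Sn (N : ℕ) (θ : ℝ) (n : ℕ) : ℝ := ∑ k ∈ Finset.Icc 1 n, tt N θ k

lemma Sn_succ (N : ℕ) (θ : ℝ) (n : ℕ) : Sn N θ (n + 1) = Sn N θ n + tt N θ (n + 1) := by
  rw [Sn, Sn, Finset.sum_Icc_succ_top (by omega)]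

lemma tt_nonneg (N : ℕ) (θ : ℝ) (k : ℕ) : 0 ≤ tt N θ k := by
  have := cos_le_one (k * θ)
  unfold tt
  have h : 0 ≤ 1 - cos (k * θ) := by linarith
  positivity

lemma Sn_mono (N : ℕ) (θ : ℝ) : Monotone (Sn N θ) :=
  monotone_nat_of_le_succ (fun n => by rw [Sn_succ]; linarith [tt_nonneg N θ (n + 1)])

lemma tt_small (N : ℕ) (θ : ℝ) (k : ℕ) (h1 : 1 ≤ k) (hk : k ≤ N) : tt N θ k = (1 - cos (k * θ)) / k := by
  have : (k : ℝ) ≠ 0 := by exact_mod_cast (by omega : k ≠ 0)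
  rw [tt, min_eq_left hk]; field_simp

lemma log_step (n : ℕ) (c : ℝ) (hc : 0 < c) (hn : 1 ≤ n) :
    1 / ((n:ℝ) + 1) ≤ log (((n:ℝ) + 1) / c) - log ((n:ℝ) / c) := by
  have hn' : (0:ℝ) < n := by exact_mod_cast hn
  rw [Real.log_div (by positivity) hc.ne', Real.log_div hn'.ne' hc.ne']
  have := Real.log_le_sub_one_of_pos (show 0 < (n:ℝ) / (n + 1) by positivity)
  rw [Real.log_div hn'.ne' (by positivity)] at this
  have e : (n:ℝ) / (n + 1) - 1 = - (1 / ((n:ℝ) + 1)) := by field_simp; ring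
  linarith

lemma log_step' (n : ℕ) (c : ℝ) (hc : 0 < c) :
    log (((n:ℝ) + 2) / c) - log (((n:ℝ) + 1) / c) ≤ 1 / ((n:ℝ) + 1) := by
  rw [Real.log_div (by positivity) hc.ne', Real.log_div (by positivity) hc.ne']
  have := Real.log_le_sub_one_of_pos (show 0 < ((n:ℝ) + 2) / (n + 1) by positivity)
  rw [Real.log_div (by positivity) (by positivity)] at this
  have e : ((n:ℝ) + 2) / (n + 1) - 1 = (1 / ((n:ℝ) + 1)) := by field_simp; ring
  linarith

lemma upper (N : ℕ) (θ : ℝ) (h0 : 0 < θ) (h1 : 3 * π / 2 ≤ N * θ) (h2 : θ ≤ π / 2) (n : ℕ) :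
    (1 / π ^ 2) * Sn N θ n ≤ 1 / 2 * (3 / 2 + log (N * θ)) := by
  have hpi := Real.pi_gt_three
  have hpi4 := Real.pi_lt_four
  have hN3 : (3:ℝ) ≤ N := by
    by_contra h; push Not at h
    nlinarith
  have hN3' : 3 ≤ N := by exact_mod_cast hN3
  set K := ⌊1 / θ⌋₊ with hK
  have hK1 : (K:ℝ) * θ ≤ 1 := by
    have := Nat.floor_le (show 0 ≤ 1 / θ by positivity)
    rw [← hK, le_div_iff₀ h0] at this; exact this
  have hK2 : 1 < ((K:ℝ) + 1) * θ := by
    have := Nat.lt_floor_add_one (1 / θ)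
    rw [← hK, div_lt_iff₀ h0] at this; exact this
  have hKN : K + 1 ≤ N := by
    have : (K:ℝ) * 4 < N := by
      by_contra h; push Not at h
      nlinarith
    have : K * 4 < N := by exact_mod_cast this
    omega
  have a1 : ∀ n, n ≤ K → Sn N θ n ≤ θ ^ 2 * (n * (n + 1)) / 4 := by
    intro n
    induction n with
    | zero => intro _; simp [Sn]
    | succ n ih =>
      intro hn
      rw [Sn_succ, tt_small N θ (n + 1) (by omega) (by omega)]
      have h := ih (by omega)
      have hc := Real.one_sub_sq_div_two_le_cos (x := ((n + 1 : ℕ) : ℝ) * θ)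
      have : (1 - cos (((n + 1 : ℕ) : ℝ) * θ)) / ((n + 1 : ℕ) : ℝ) ≤ θ ^ 2 * ((n:ℝ) + 1) / 2 := by
        rw [div_le_iff₀ (by positivity)]
        push_cast at hc ⊢
        nlinarith
      push_cast at this ⊢
      nlinarith
  have a2 : ∀ n, K + 1 ≤ n → n ≤ N → Sn N θ n ≤ θ ^ 2 * (K * (K + 1)) / 4 + 2 + 2 * log ((n:ℝ) / (K + 1)) := by
    intro n hn
    induction n, hn using Nat.le_induction with
    | base =>
      intro _
      rw [Sn_succ, tt_small N θ (K + 1) (by omega) (by omega)]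
      have h := a1 K le_rfl
      have hl : log (((K + 1 : ℕ) : ℝ) / (K + 1)) = 0 := by
        push_cast
        rw [div_self (by positivity), log_one]
      rw [hl]
      have : (1 - cos (((K + 1 : ℕ) : ℝ) * θ)) / ((K + 1 : ℕ) : ℝ) ≤ 2 := by
        rw [div_le_iff₀ (by positivity)]
        push_cast
        have := neg_one_le_cos (((K : ℝ) + 1) * θ)
        have : (0:ℝ) ≤ K := by positivity
        linarith
      linarith
    | succ n hn ih =>
      intro hnN
      rw [Sn_succ, tt_small N θ (n + 1) (by omega) (by omega)]
      have h := ih (by omega)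
      have hl := log_step n ((K:ℝ) + 1) (by positivity) (by omega)
      have : (1 - cos (((n + 1 : ℕ) : ℝ) * θ)) / ((n + 1 : ℕ) : ℝ) ≤ 2 * (1 / ((n:ℝ) + 1)) := by
        rw [div_le_iff₀ (by positivity)]
        push_cast
        have := neg_one_le_cos (((n : ℝ) + 1) * θ)
        have e : 2 * (1 / ((n:ℝ) + 1)) * ((n:ℝ) + 1) = 2 := by field_simp
        linarith
      push_cast at this ⊢
      linarith
  have a3 : ∀ n, N ≤ n → Sn N θ n ≤ Sn N θ N + 2 - 2 * N / n := by
    intro n hn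
    induction n, hn using Nat.le_induction with
    | base =>
      have : 2 * (N:ℝ) / N = 2 := by field_simp
      rw [this]; linarith
    | succ n hn ih =>
      rw [Sn_succ]
      have hn0 : (0:ℝ) < n := by exact_mod_cast (by omega : 0 < n)
      have : tt N θ (n + 1) ≤ 2 * N / n - 2 * N / ((n + 1 : ℕ) : ℝ) := by
        rw [tt, min_eq_right (by omega)]
        have hc := neg_one_le_cos (((n + 1 : ℕ) : ℝ) * θ)
        calc (1 - cos (((n + 1 : ℕ) : ℝ) * θ)) * N / ((n + 1 : ℕ) : ℝ) ^ 2 ≤ 2 * N / ((n + 1 : ℕ) : ℝ) ^ 2 := by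
              gcongr; linarith
          _ ≤ _ := by
              push_cast
              have e : 2 * (N:ℝ) / n - 2 * N / (n + 1) = 2 * N / (n * (n + 1)) := by field_simp; ring
              rw [e]
              gcongr
              nlinarith
      linarith
  have hSN := a2 N hKN le_rfl
  have hall : Sn N θ n ≤ Sn N θ N + 2 := by
    rcases le_total n N with h | h
    · linarith [Sn_mono N θ h]
    · have := a3 n h
      have : 0 ≤ 2 * (N:ℝ) / n := by positivity
      linarith
  have hlog : log ((N:ℝ) / (K + 1)) ≤ log (N * θ) := by
    apply Real.log_le_log (by positivity)
    rw [div_le_iff₀ (by positivity)]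
    nlinarith
  have hL0 : 0 ≤ log (N * θ) := Real.log_nonneg (by linarith)
  have hKK : θ ^ 2 * (K * (K + 1)) ≤ 3 := by
    have h3 : 0 ≤ (K:ℝ) * θ := by positivity
    have : θ ^ 2 * (K * (K + 1)) = (K * θ) * (K * θ) + (K * θ) * θ := by ring
    nlinarith
  rw [one_div, inv_mul_le_iff₀ (by positivity)]
  have hpi9 : 9 ≤ π ^ 2 := by nlinarith
  have h9 : 9 * (1 / 2 * (3 / 2 + log (N * θ))) ≤ π ^ 2 * (1 / 2 * (3 / 2 + log (N * θ))) := by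
    gcongr
  linarith

lemma lower (N : ℕ) (θ : ℝ) (h0 : 0 < θ) (h1 : 3 * π / 2 ≤ N * θ) (h2 : θ ≤ π / 2) (n : ℕ) (hn : N ≤ n) :
    1 / (3 * π ^ 2) * log (2 * N * θ / (3 * π)) ≤ (1 / π ^ 2) * Sn N θ n := by
  have hpi := Real.pi_gt_three
  set K := ⌊π / θ⌋₊ with hK
  have hK1 : (K:ℝ) * θ ≤ π := by
    have := Nat.floor_le (show 0 ≤ π / θ by positivity)
    rw [← hK, le_div_iff₀ h0] at this; exact this
  have hK2 : π < ((K:ℝ) + 1) * θ := by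
    have := Nat.lt_floor_add_one (π / θ)
    rw [← hK, div_lt_iff₀ h0] at this; exact this
  have hK3 : 2 ≤ K := by
    apply Nat.le_floor
    rw [le_div_iff₀ h0]; push_cast; linarith
  have hK3' : (2:ℝ) ≤ K := by exact_mod_cast hK3
  have hKN : K ≤ N := by
    have : (K:ℝ) ≤ N := by
      by_contra h; push Not at h
      nlinarith
    exact_mod_cast this
  have hN0 : (0:ℝ) < N := by exact_mod_cast (by omega : 0 < N)
  have a1 : ∀ n, n ≤ K → θ ^ 2 * (n * (n + 1)) / π ^ 2 ≤ Sn N θ n := by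
    intro n
    induction n with
    | zero => intro _; simp [Sn]
    | succ n ih =>
      intro hn
      rw [Sn_succ, tt_small N θ (n + 1) (by omega) (by omega)]
      have h := ih (by omega)
      have hnK : ((n + 1 : ℕ) : ℝ) ≤ K := by exact_mod_cast hn
      have hc := Real.cos_le_one_sub_mul_cos_sq (x := ((n + 1 : ℕ) : ℝ) * θ) (by
        rw [abs_of_nonneg (by positivity)]
        nlinarith)
      have : 2 / π ^ 2 * (θ ^ 2 * ((n:ℝ) + 1)) ≤ (1 - cos (((n + 1 : ℕ) : ℝ) * θ)) / ((n + 1 : ℕ) : ℝ) := by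
        rw [le_div_iff₀ (by positivity)]
        push_cast at hc ⊢
        nlinarith
      have e : θ ^ 2 * (((n + 1 : ℕ) : ℝ) * (((n + 1 : ℕ) : ℝ) + 1)) / π ^ 2 =
        θ ^ 2 * (n * (n + 1)) / π ^ 2 + 2 / π ^ 2 * (θ ^ 2 * ((n:ℝ) + 1)) := by
        push_cast; ring
      rw [e]; linarith
  have b1 : 2 / 3 ≤ Sn N θ K := by
    refine le_trans ?_ (a1 K le_rfl)
    rw [le_div_iff₀ (by positivity)]
    have h3 : π ^ 2 ≤ (((K:ℝ) + 1) * θ) ^ 2 := by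
      apply pow_le_pow_left₀ (by positivity) hK2.le
    have h4 : 2 / 3 * (((K:ℝ) + 1) * θ) ^ 2 ≤ θ ^ 2 * (K * (K + 1)) := by
      have : 0 ≤ θ ^ 2 * ((K:ℝ) + 1) * (K - 2) / 3 := by
        have : (0:ℝ) ≤ K - 2 := by linarith
        positivity
      nlinarith
    linarith
  set σ := sin (θ / 2) with hσ
  have hσ1 : θ / π ≤ σ := by
    have := Real.mul_le_sin (x := θ / 2) (by linarith) (by linarith)
    have e : 2 / π * (θ / 2) = θ / π := by field_simp
    rwa [e] at this
  have hσ0 : 0 < σ := lt_of_lt_of_le (by positivity) hσ1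
  set s : ℕ → ℝ := fun k => sin (((k:ℝ) + 1 / 2) * θ) with hs
  have hcos : ∀ k : ℕ, cos (((k + 1 : ℕ) : ℝ) * θ) = (s (k + 1) - s k) / (2 * σ) := by
    intro k
    rw [eq_div_iff (by positivity)]
    simp only [hs, hσ]
    have e1 : (((k + 1 : ℕ) : ℝ) + 1 / 2) * θ = ((k + 1 : ℕ) : ℝ) * θ + θ / 2 := by ring
    have e2 : ((k : ℝ) + 1 / 2) * θ = ((k + 1 : ℕ) : ℝ) * θ - θ / 2 := by push_cast; ring
    rw [e1, e2, sin_add, sin_sub]; ring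
  have a2 : ∀ n, K ≤ n → n ≤ N → 2 / 3 + log (((n:ℝ) + 1) / (K + 1)) - (2 / (K + 1) - (1 - s n) / (n + 1)) / (2 * σ) ≤ Sn N θ n := by
    intro n hn
    induction n, hn using Nat.le_induction with
    | base =>
      intro _
      rw [div_self (by positivity), log_one]
      have : 0 ≤ (2 / ((K:ℝ) + 1) - (1 - s K) / (K + 1)) / (2 * σ) := by
        rw [← sub_div]
        have : 0 ≤ 2 - (1 - s K) := by
          have := neg_one_le_sin (((K:ℝ) + 1 / 2) * θ)
          simp only [hs]; linarith
        positivity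
      linarith
    | succ n hn ih =>
      intro hnN
      rw [Sn_succ, tt_small N θ (n + 1) (by omega) (by omega), hcos]
      have h := ih (by omega)
      have hl := log_step' n ((K:ℝ) + 1) (by positivity)
      have hs1 : s (n + 1) ≤ 1 := sin_le_one _
      have e1 : (1 - (s (n + 1) - s n) / (2 * σ)) / ((n + 1 : ℕ) : ℝ) = 1 / ((n:ℝ) + 1) - ((s (n + 1) - s n) / (n + 1)) / (2 * σ) := by
        push_cast; field_simp
      have e2 : (1 - s (n + 1)) / (((n + 1 : ℕ) : ℝ) + 1) ≤ (1 - s (n + 1)) / ((n:ℝ) + 1) := by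
        apply div_le_div_of_nonneg_left (by linarith) (by positivity)
        push_cast; linarith
      have e3 : (1 - s (n + 1)) / ((n:ℝ) + 1) = (1 - s n) / (n + 1) - (s (n + 1) - s n) / (n + 1) := by
        rw [← sub_div]; ring
      have e4 : (1 - s (n + 1)) / (((n + 1 : ℕ) : ℝ) + 1) / (2 * σ) ≤ ((1 - s n) / (n + 1) - (s (n + 1) - s n) / (n + 1)) / (2 * σ) := by
        rw [← e3]; gcongr
      rw [e1]
      have e5 : (((n + 1 : ℕ) : ℝ) + 1) = (n:ℝ) + 2 := by push_cast; ring
      rw [sub_div] at h ⊢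
      rw [sub_div _ ((s (n + 1) - s n) / (n + 1))] at e4
      rw [e5] at e4 ⊢
      linarith
  have hx0 : 0 < 2 * N * θ / (3 * π) := by positivity
  have b2 : log (2 * N * θ / (3 * π)) - 1 / 3 ≤ Sn N θ N := by
    refine le_trans ?_ (a2 N hKN le_rfl)
    have hl : log (2 * N * θ / (3 * π)) ≤ log (((N:ℝ) + 1) / (K + 1)) := by
      apply Real.log_le_log hx0
      rw [div_le_div_iff₀ (by positivity) (by positivity)]
      have : 2 * θ * ((K:ℝ) + 1) ≤ 3 * π := by nlinarith
      nlinarith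
    have hs1 : s N ≤ 1 := sin_le_one _
    have : (2 / ((K:ℝ) + 1) - (1 - s N) / (N + 1)) / (2 * σ) ≤ 1 := by
      rw [div_le_one (by positivity)]
      have h3 : 0 ≤ (1 - s N) / ((N:ℝ) + 1) := div_nonneg (by linarith) (by positivity)
      have h4 : 2 / ((K:ℝ) + 1) ≤ 2 * σ := by
        rw [div_le_iff₀ (by positivity)]
        have : θ / π * ((K:ℝ) + 1) ≤ σ * (K + 1) := by gcongr
        have h5 : 1 ≤ θ / π * ((K:ℝ) + 1) := by
          rw [div_mul_eq_mul_div, le_div_iff₀ (by positivity)]; linarith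
        linarith
      linarith
    linarith
  have hm := Sn_mono N θ hn
  have hm2 := Sn_mono N θ hKN
  have hfin : log (2 * N * θ / (3 * π)) / 3 ≤ Sn N θ n := by
    rcases le_total (log (2 * N * θ / (3 * π))) 2 with h | h <;> linarith
  have e : 1 / (3 * π ^ 2) * log (2 * N * θ / (3 * π)) = (1 / π ^ 2) * (log (2 * N * θ / (3 * π)) / 3) := by
    field_simp
  rw [e]
  gcongr

end VC

/-- For a Haar-distributed `N × N` unitary matrix and `3π/(2N) ≤ θ ≤ π/2`,
`(1/(3π²)) log(2Nθ/(3π)) ≤ Var 𝒩_θ ≤ (1/2) log(e^{3/2} N θ)`. -/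
theorem variance_counting_function_bounds
    (N : ℕ) (hN : 1 ≤ N) (ℙ : Measure (Matrix.unitaryGroup (Fin N) ℂ))
    (hprob : IsProbabilityMeasure ℙ) (hhaar : ℙ.IsHaarMeasure)
    (θ : ℝ) (hθ₁ : 3 * π / (2 * N) ≤ θ) (hθ₂ : θ ≤ π / 2) :
    (1 / (3 * π ^ 2)) * Real.log (2 * N * θ / (3 * π)) ≤
        ProbabilityTheory.variance (fun U => (countFun N U θ : ℝ)) ℙ ∧
      ProbabilityTheory.variance (fun U => (countFun N U θ : ℝ)) ℙ ≤
        (1 / 2) * Real.log (Real.exp (3 / 2) * N * θ) := by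
  have hπ := Real.pi_pos
  have hN0 : (0:ℝ) < N := by exact_mod_cast hN
  have h0 : 0 < θ := lt_of_lt_of_le (by positivity) hθ₁
  have h1 : 3 * π / 2 ≤ N * θ := by
    rw [div_le_iff₀ (by positivity)] at hθ₁
    linarith
  have hlim := VC.var_lim' hN ℙ h0.le (show θ < 2 * π by linarith)
  constructor
  · refine ge_of_tendsto hlim ?_
    filter_upwards [eventually_ge_atTop N] with n hn
    exact VC.lower N θ h0 h1 hθ₂ n hn
  · refine le_of_tendsto hlim (Eventually.of_forall (fun n => ?_))
    have e : Real.log (Real.exp (3 / 2) * N * θ) = 3 / 2 + Real.log (N * θ) := by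
      rw [mul_assoc, Real.log_mul (Real.exp_ne_zero _) (by positivity), Real.log_exp]
    rw [e]
    exact VC.upper N θ h0 h1 hθ₂ n
end

section
/- Let U be an N × N random unitary matrix distributed according to Haar measure on U(N). Then P[ max_{1 ≤ k ≤ N} |𝒩_{2πk/N} − k| > 6 log(eN) ] ≤ 2/(e³ N²). -/
open MeasureTheory Real Filter

open Matrix in
lemma aux_charpoly_roots_conj {n : ℕ} (Q : Matrix.unitaryGroup (Fin n) ℂ) (z : Fin n → ℂ) :
    ((Q : Matrix (Fin n) (Fin n) ℂ) * diagonal z * star (Q : Matrix (Fin n) (Fin n) ℂ)).charpoly.roots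
      = Finset.univ.val.map z := by
  rw [mul_assoc, Matrix.charpoly_mul_comm, mul_assoc, Unitary.star_mul_self_of_mem Q.2, mul_one,
    Matrix.charpoly_diagonal]
  have := Polynomial.roots_multiset_prod_X_sub_C (Finset.univ.val.map z)
  rwa [Multiset.map_map] at this

/-- sum of the arguments of `1 - z` over the eigenvalues -/
noncomputable def argSum {n : ℕ} (A : Matrix (Fin n) (Fin n) ℂ) : ℝ :=
  (A.charpoly.roots.map (fun z => Complex.arg (1 - z))).sum

/-- The Hermitian part in the Cayley transform. -/
noncomputable def cay {n : ℕ} (A : Matrix (Fin n) (Fin n) ℂ) : Matrix (Fin n) (Fin n) ℂ :=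
  (-Complex.I) • ((1 - A)⁻¹ - (1/2 : ℂ) • 1)

lemma cay_eq {n : ℕ} (A : Matrix (Fin n) (Fin n) ℂ) :
    (1 - A)⁻¹ = (1/2 : ℂ) • 1 + Complex.I • cay A := by
  rw [cay, smul_smul]; simp

lemma cay_herm {n : ℕ} (U : Matrix.unitaryGroup (Fin n) ℂ)
    (h : (1 - (U : Matrix (Fin n) (Fin n) ℂ)).det ≠ 0) : (cay (U : Matrix (Fin n) (Fin n) ℂ)).IsHermitian := by
  set A : Matrix (Fin n) (Fin n) ℂ := (U : Matrix (Fin n) (Fin n) ℂ) with hA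
  have hu : IsUnit (1 - A).det := isUnit_iff_ne_zero.mpr h
  have hAA : A * star A = 1 := Unitary.mul_star_self_of_mem U.2
  have hAA' : star A * A = 1 := Unitary.star_mul_self_of_mem U.2
  have key : (1 - A)⁻¹ + star ((1 - A)⁻¹) = 1 := by
    have e1 : star ((1 - A)⁻¹) * (1 - star A) = 1 := by
      have := congrArg star (Matrix.mul_nonsing_inv (1 - A) hu)
      simpa [star_mul] using this
    have e3 : (1 - star A) * A = -(1 - A) := by
      rw [sub_mul, hAA', one_mul]; abel
    have e2 : star ((1 - A)⁻¹) = - A * (1 - A)⁻¹ := by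
      calc star ((1 - A)⁻¹) = star ((1 - A)⁻¹) * ((1 - A) * (1 - A)⁻¹) := by
              rw [Matrix.mul_nonsing_inv _ hu, mul_one]
        _ = - (star ((1 - A)⁻¹) * (1 - star A) * A) * (1 - A)⁻¹ := by
              rw [mul_assoc _ (1 - star A), e3, mul_neg, neg_neg, mul_assoc]
        _ = _ := by rw [e1]; simp
    rw [e2]
    calc (1 - A)⁻¹ + -A * (1 - A)⁻¹ = (1 - A) * (1 - A)⁻¹ := by rw [sub_mul]; simp [sub_eq_add_neg]
      _ = 1 := Matrix.mul_nonsing_inv _ hu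
  have : star ((1 - A)⁻¹) = 1 - (1 - A)⁻¹ := eq_sub_of_add_eq' key
  unfold cay Matrix.IsHermitian
  rw [← Matrix.star_eq_conjTranspose, star_smul, star_sub, this, star_smul]
  ext i j
  simp
  by_cases hij : i = j
  · subst hij; simp; ring
  · simp [hij]

open Matrix in
lemma herm_det {n : ℕ} {K : Matrix (Fin n) (Fin n) ℂ} (hK : K.IsHermitian) (t : ℂ) :
    ((1/2 : ℂ) • 1 + t • K).det = ∏ j, (1/2 + t * (hK.eigenvalues j : ℂ)) := by
  have hs := hK.spectral_theorem
  rw [Unitary.conjStarAlgAut_apply] at hs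
  set Q := hK.eigenvectorUnitary
  have : (1/2 : ℂ) • 1 + t • K = (Q : Matrix (Fin n) (Fin n) ℂ) *
      diagonal (fun j => 1/2 + t * (hK.eigenvalues j : ℂ)) * star (Q : Matrix (Fin n) (Fin n) ℂ) := by
    have e : diagonal (fun j => 1/2 + t * (hK.eigenvalues j : ℂ)) = (1/2 : ℂ) • (1 : Matrix (Fin n) (Fin n) ℂ)
      + t • diagonal (RCLike.ofReal ∘ hK.eigenvalues) := by
      ext i j
      by_cases hij : i = j
      · subst hij; simp
      · simp [hij]
    rw [e, mul_add, add_mul]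
    simp only [mul_smul_comm, smul_mul_assoc, mul_one, Unitary.mul_star_self_of_mem Q.2]
    rw [← hs]
  rw [this, det_mul_right_comm, Unitary.mul_star_self_of_mem Q.2, one_mul, det_diagonal]

lemma half_ne (k : ℝ) : (1/2 + Complex.I * (k : ℂ)) ≠ 0 := by
  intro h
  have := congrArg Complex.re h
  simp at this

open Matrix in
lemma unitary_diag {n : ℕ} (U : Matrix.unitaryGroup (Fin n) ℂ)
    (h : (1 - (U : Matrix (Fin n) (Fin n) ℂ)).det ≠ 0) :
    ∃ Q : Matrix.unitaryGroup (Fin n) ℂ, (U : Matrix (Fin n) (Fin n) ℂ) =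
      (Q : Matrix (Fin n) (Fin n) ℂ) * diagonal (fun j => 1 - (1/2 + Complex.I * ((cay_herm U h).eigenvalues j : ℂ))⁻¹)
        * star (Q : Matrix (Fin n) (Fin n) ℂ) := by
  set hK := cay_herm U h
  have hs := hK.spectral_theorem
  rw [Unitary.conjStarAlgAut_apply] at hs
  set Q := hK.eigenvectorUnitary
  refine ⟨Q, ?_⟩
  set A : Matrix (Fin n) (Fin n) ℂ := (U : Matrix (Fin n) (Fin n) ℂ) with hA
  set q : Matrix (Fin n) (Fin n) ℂ := (Q : Matrix (Fin n) (Fin n) ℂ) with hq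
  have hqq : q * star q = 1 := Unitary.mul_star_self_of_mem Q.2
  have hqq' : star q * q = 1 := Unitary.star_mul_self_of_mem Q.2
  have hu : IsUnit (1 - A).det := isUnit_iff_ne_zero.mpr h
  set d : Fin n → ℂ := fun j => 1/2 + Complex.I * (hK.eigenvalues j : ℂ) with hd
  have hinv : (1 - A)⁻¹ = q * diagonal d * star q := by
    rw [cay_eq]
    have e : diagonal d = (1/2 : ℂ) • (1 : Matrix (Fin n) (Fin n) ℂ)
      + Complex.I • diagonal (RCLike.ofReal ∘ hK.eigenvalues) := by
      ext i j
      by_cases hij : i = j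
      · subst hij; simp [hd]
      · simp [hij]
    rw [e, mul_add, add_mul]
    simp only [mul_smul_comm, smul_mul_assoc, mul_one, hqq]
    rw [← hs]
  have hA' : 1 - A = q * diagonal (fun j => (d j)⁻¹) * star q := by
    have : (q * diagonal (fun j => (d j)⁻¹) * star q) * (1 - A)⁻¹ = 1 := by
      rw [hinv]
      calc _ = q * diagonal (fun j => (d j)⁻¹) * (star q * q) * diagonal d * star q := by
            simp only [mul_assoc]
        _ = q * (diagonal (fun j => (d j)⁻¹) * diagonal d) * star q := by
            rw [hqq']; simp only [mul_assoc, mul_one, one_mul]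
        _ = 1 := by
            rw [diagonal_mul_diagonal]
            have : (fun j => (d j)⁻¹ * d j) = fun _ => 1 := by
              ext j; exact inv_mul_cancel₀ (half_ne _)
            rw [this, diagonal_one, mul_one, hqq]
    calc 1 - A = ((q * diagonal (fun j => (d j)⁻¹) * star q) * (1 - A)⁻¹) * (1 - A) := by
          rw [this, one_mul]
      _ = _ := by rw [mul_assoc, Matrix.nonsing_inv_mul _ hu, mul_one]
  calc A = 1 - (1 - A) := by abel
    _ = q * 1 * star q - q * diagonal (fun j => (d j)⁻¹) * star q := by rw [hA', mul_one, hqq]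
    _ = _ := by
      rw [← sub_mul, ← mul_sub, ← diagonal_one, diagonal_sub]

lemma argSum_eq {n : ℕ} (U : Matrix.unitaryGroup (Fin n) ℂ)
    (h : (1 - (U : Matrix (Fin n) (Fin n) ℂ)).det ≠ 0) :
    argSum (U : Matrix (Fin n) (Fin n) ℂ) =
      - ∑ j, Complex.arg (1/2 + Complex.I * ((cay_herm U h).eigenvalues j : ℂ)) := by
  obtain ⟨Q, hQ⟩ := unitary_diag U h
  unfold argSum
  conv_lhs => rw [hQ]
  rw [aux_charpoly_roots_conj, Multiset.map_map]
  simp only [Function.comp_def, sub_sub_cancel]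
  rw [← Finset.sum_neg_distrib]
  change ∑ j, _ = _
  refine Finset.sum_congr rfl fun j _ => ?_
  rw [Complex.arg_inv, if_neg]
  intro h
  rw [Complex.arg_eq_pi_iff] at h
  have := h.1
  simp at this
  norm_num at this

lemma exp_theta {n : ℕ} (k : Fin n → ℝ) (t : ℝ) :
    ∏ j, (1/2 + (Complex.I * t) * (k j : ℂ)) = 
      ((∏ j, ‖(1/2 + (Complex.I * t) * (k j : ℂ))‖ : ℝ) : ℂ) * 
        Complex.exp (((∑ j, Complex.arg (1/2 + (Complex.I * t) * (k j : ℂ)) : ℝ) : ℂ) * Complex.I) := by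
  push_cast
  rw [Finset.sum_mul, Complex.exp_sum, ← Finset.prod_mul_distrib]
  refine Finset.prod_congr rfl fun j _ => ?_
  rw [Complex.norm_mul_exp_arg_mul_I]

lemma theta_cont {n : ℕ} (k : Fin n → ℝ) :
    Continuous fun t : ℝ => ∑ j, Complex.arg (1/2 + (Complex.I * t) * (k j : ℂ)) := by
  refine continuous_finsetSum _ fun j _ => ?_
  rw [continuous_iff_continuousAt]
  intro t
  refine ContinuousAt.comp (f := fun t : ℝ => (1/2 + (Complex.I * t) * (k j : ℂ)))
    (Complex.continuousAt_arg ?_) ?_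
  · left; simp
  · fun_prop

lemma herm_minor {n : ℕ} {K : Matrix (Fin (n+1)) (Fin (n+1)) ℂ} (hK : K.IsHermitian)
    (hK' : (K.submatrix Fin.succ Fin.succ).IsHermitian) :
    ∑ j, Complex.arg (1/2 + Complex.I * (hK.eigenvalues j : ℂ)) =
      ∑ j, Complex.arg (1/2 + Complex.I * (hK'.eigenvalues j : ℂ)) -
        Complex.arg (((1/2 : ℂ) • 1 + Complex.I • K)⁻¹ 0 0) := by
  set k := hK.eigenvalues
  set k' := hK'.eigenvalues
  set M : ℝ → Matrix (Fin (n+1)) (Fin (n+1)) ℂ := fun t => (1/2 : ℂ) • 1 + (Complex.I * t) • K with hM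
  have hne : ∀ {m : ℕ} (l : Fin m → ℝ) (t : ℝ) j, (1/2 + (Complex.I * t) * (l j : ℂ)) ≠ 0 := by
    intro m l t j
    have := half_ne (t * l j)
    rwa [Complex.ofReal_mul, ← mul_assoc] at this
  have hdet : ∀ t, (M t).det = ∏ j, (1/2 + (Complex.I * t) * (k j : ℂ)) := fun t => herm_det hK _
  have hdet0 : ∀ t, (M t).det ≠ 0 := fun t => by
    rw [hdet]; exact Finset.prod_ne_zero_iff.mpr fun j _ => hne _ _ _
  have hdet' : ∀ t, ((M t).submatrix Fin.succ Fin.succ).det =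
      ∏ j, (1/2 + (Complex.I * t) * (k' j : ℂ)) := fun t => by
    rw [← herm_det hK']
    congr 1
    ext i j
    by_cases hij : i = j
    · subst hij; simp [hM]
    · simp [hM, hij]
  set P : ℝ → ℂ := fun t => (M t)⁻¹ 0 0 with hP
  have hPeq : ∀ t, P t = ((M t).submatrix Fin.succ Fin.succ).det / (M t).det := by
    intro t
    simp only [hP]
    rw [Matrix.inv_def, Matrix.smul_apply, Matrix.adjugate_fin_succ_eq_det_submatrix]
    simp [div_eq_inv_mul]
  have hPre : ∀ t, 0 < (P t).re := by
    intro t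
    have hu : IsUnit (M t).det := isUnit_iff_ne_zero.mpr (hdet0 t)
    have hMM : M t + star (M t) = 1 := by
      have hs : star K = K := hK
      simp only [hM, star_add, star_smul, hs, star_one]
      ext i j
      by_cases hij : i = j
      · subst hij; simp; ring
      · simp [hij]
    have h1 : star ((M t)⁻¹) * (M t + star (M t)) * (M t)⁻¹ = star ((M t)⁻¹) + (M t)⁻¹ := by
      rw [mul_add, add_mul, mul_assoc, Matrix.mul_nonsing_inv _ hu, mul_one, ← star_mul,
        Matrix.mul_nonsing_inv _ hu, star_one, one_mul]
    rw [hMM, mul_one] at h1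
    have h2 := congrArg Complex.re (congrFun (congrFun h1 0) 0)
    rw [Matrix.mul_apply] at h2
    simp only [Matrix.star_apply, Matrix.add_apply, Complex.re_sum, Complex.add_re] at h2
    have h3 : ∀ i, (star ((M t)⁻¹ i 0) * (M t)⁻¹ i 0).re = ‖(M t)⁻¹ i 0‖ ^ 2 := by
      intro i
      rw [← Complex.normSq_eq_norm_sq, Complex.normSq_apply]; simp
    simp only [h3] at h2
    have h4 : 0 < ∑ i, ‖(M t)⁻¹ i 0‖ ^ 2 := by
      by_contra hcon
      have h5 : ∑ i, ‖(M t)⁻¹ i 0‖ ^ 2 = 0 := le_antisymm (not_lt.mp hcon) (by positivity)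
      rw [Finset.sum_eq_zero_iff_of_nonneg (fun i _ => by positivity)] at h5
      have h6 := congrFun (congrFun (Matrix.mul_nonsing_inv (M t) hu) 0) 0
      rw [Matrix.mul_apply, Finset.sum_eq_zero] at h6
      · simp at h6
      · intro i _
        have := h5 i (Finset.mem_univ i)
        simp at this
        simp [this]
    have h7 : (star ((M t)⁻¹ 0 0)).re = (P t).re := by simp [hP]
    rw [h7] at h2
    have h8 : ((M t)⁻¹ 0 0).re = (P t).re := rfl
    rw [h8] at h2
    linarith
  have hPcont : Continuous P := by
    have : P = fun t : ℝ => (∏ j, (1/2 + (Complex.I * t) * (k' j : ℂ))) / ∏ j, (1/2 + (Complex.I * t) * (k j : ℂ)) := by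
      ext t; rw [hPeq, hdet, hdet']
    rw [this]
    refine Continuous.div (by fun_prop) (by fun_prop) fun t => ?_
    rw [← hdet]; exact hdet0 t
  set D : ℝ → ℝ := fun t => ∑ j, Complex.arg (1/2 + (Complex.I * t) * (k j : ℂ)) -
    ∑ j, Complex.arg (1/2 + (Complex.I * t) * (k' j : ℂ)) + Complex.arg (P t) with hD
  have hDcont : Continuous D := by
    refine ((theta_cont k).sub (theta_cont k')).add ?_
    rw [continuous_iff_continuousAt]
    intro t
    exact ContinuousAt.comp (f := P) (Complex.continuousAt_arg (Or.inl (hPre t))) hPcont.continuousAt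
  have hDexp : ∀ t, Complex.exp ((D t : ℂ) * Complex.I) = 1 := by
    intro t
    have e1 := exp_theta k t
    have e2 := exp_theta k' t
    have e3 := Complex.norm_mul_exp_arg_mul_I (P t)
    have e4 : P t * (M t).det = ((M t).submatrix Fin.succ Fin.succ).det := by
      rw [hPeq]; exact div_mul_cancel₀ _ (hdet0 t)
    have e5 : ‖P t‖ * (∏ j, ‖(1/2 + (Complex.I * t) * (k j : ℂ))‖) = ∏ j, ‖(1/2 + (Complex.I * t) * (k' j : ℂ))‖ := by
      rw [← norm_prod, ← norm_prod, ← hdet, ← hdet', ← e4, norm_mul]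
    rw [hdet, hdet', e1, e2, ← e3, ← e5] at e4
    have e6 : ((∏ j, ‖(1/2 + (Complex.I * t) * (k j : ℂ))‖ : ℝ) : ℂ) ≠ 0 := by
      rw [Complex.ofReal_ne_zero]
      exact Finset.prod_ne_zero_iff.mpr fun j _ => norm_ne_zero_iff.mpr (hne _ _ _)
    have e7 : ((‖P t‖ : ℝ) : ℂ) ≠ 0 := by
      rw [Complex.ofReal_ne_zero, norm_ne_zero_iff]
      intro h; have := hPre t; rw [h] at this; simp at this
    have e8 : Complex.exp ((Complex.arg (P t) : ℂ) * Complex.I) * Complex.exp (((∑ j, Complex.arg (1/2 + (Complex.I * t) * (k j : ℂ)) : ℝ) : ℂ) * Complex.I)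
      = Complex.exp (((∑ j, Complex.arg (1/2 + (Complex.I * t) * (k' j : ℂ)) : ℝ) : ℂ) * Complex.I) := by
      have := mul_ne_zero e7 e6
      apply mul_left_cancel₀ this
      rw [Complex.ofReal_mul] at e4
      linear_combination e4
    simp only [hD]
    rw [Complex.ofReal_add, Complex.ofReal_sub, add_mul, sub_mul, Complex.exp_add, Complex.exp_sub, ← e8]
    field_simp [Complex.exp_ne_zero]
  have hD0 : D 0 = 0 := by
    have hP0 : P 0 = 2 := by
      have : M 0 = (1/2 : ℂ) • 1 := by simp [hM]
      simp only [hP]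
      rw [this]
      have : ((1/2 : ℂ) • (1 : Matrix (Fin (n+1)) (Fin (n+1)) ℂ))⁻¹ = (2 : ℂ) • 1 := by
        apply Matrix.inv_eq_right_inv
        rw [smul_mul_smul_comm]; norm_num
      rw [this]; simp
    have a1 : Complex.arg (1/2) = 0 := by
      have := Complex.arg_ofReal_of_nonneg (x := 1/2) (by norm_num)
      simpa using this
    have a2 : Complex.arg 2 = 0 := by
      have := Complex.arg_ofReal_of_nonneg (x := 2) (by norm_num)
      simpa using this
    rw [one_div] at a1
    simp [hD, hP0, a1]
  have hD1 : D 1 = 0 := by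
    have hmaps : Set.MapsTo D Set.univ (Set.range fun m : ℤ => (m : ℝ) * (2 * π)) := by
      intro t _
      obtain ⟨m, hm⟩ := Complex.exp_eq_one_iff.mp (hDexp t)
      refine ⟨m, ?_⟩
      have : (D t : ℂ) = ((m * (2 * π) : ℝ) : ℂ) := by
        apply mul_right_cancel₀ Complex.I_ne_zero
        rw [hm]; push_cast; ring
      exact (Complex.ofReal_injective this).symm
    by_contra hne1
    have hIVT : ∀ y, y ∈ Set.uIcc (D 0) (D 1) → ∃ t, D t = y := by
      intro y hy
      obtain ⟨t, _, ht⟩ := intermediate_value_uIcc (a := 0) (b := 1) hDcont.continuousOn hy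
      exact ⟨t, ht⟩
    obtain ⟨m, hm⟩ := hmaps (Set.mem_univ 1)
    simp only at hm
    have hm0 : m ≠ 0 := by rintro rfl; simp at hm; exact hne1 hm.symm
    have h1 : (1:ℝ) ≤ |(m:ℝ)| := by exact_mod_cast Int.one_le_abs hm0
    have hc0 : 0 ≤ 1 / (2 * |(m:ℝ)|) := by positivity
    have hc1 : 1 / (2 * |(m:ℝ)|) ≤ 1 := by
      rw [div_le_one (by linarith)]; linarith
    obtain ⟨t, ht⟩ := hIVT (1 / (2 * |(m:ℝ)|) * D 1) (by
      rw [hD0]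
      rcases le_total 0 (D 1) with h | h
      · rw [Set.uIcc_of_le h]
        exact ⟨mul_nonneg hc0 h, mul_le_of_le_one_left h hc1⟩
      · rw [Set.uIcc_of_ge h]
        exact ⟨by nlinarith, mul_nonpos_of_nonneg_of_nonpos hc0 h⟩)
    obtain ⟨l, hl⟩ := hmaps (Set.mem_univ t)
    simp only at hl
    rw [ht, ← hm] at hl
    have hl2 := congrArg abs hl
    simp only [abs_mul, abs_div, abs_abs, abs_one] at hl2
    have hpi := Real.pi_pos
    rw [abs_of_pos hpi, abs_of_pos (by norm_num : (0:ℝ) < 2)] at hl2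
    have hmne : |(m:ℝ)| ≠ 0 := by linarith
    field_simp at hl2
    have h3 : (|l| : ℤ) * 2 = 1 := by
      have : |(l:ℝ)| * 2 = 1 := by linarith
      exact_mod_cast this
    omega
  have := hD1
  simp only [hD, hP, hM] at this
  simp only [Complex.ofReal_one, mul_one] at this
  linarith


/-- reduction of a matrix to size one less -/
noncomputable def redM {n : ℕ} (A : Matrix (Fin (n+1)) (Fin (n+1)) ℂ) : Matrix (Fin n) (Fin n) ℂ :=
  Matrix.of fun i j => A i.succ j.succ + (1 - A 0 0)⁻¹ * A i.succ 0 * A 0 j.succ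

lemma unitary_col {n : ℕ} (U : Matrix.unitaryGroup (Fin n) ℂ) (j l : Fin n) :
    ∑ k, star ((U : Matrix (Fin n) (Fin n) ℂ) k j) * (U : Matrix (Fin n) (Fin n) ℂ) k l
      = if j = l then 1 else 0 := by
  have := congrFun (congrFun (show star (U : Matrix (Fin n) (Fin n) ℂ) * (U : Matrix (Fin n) (Fin n) ℂ) = 1 from Unitary.star_mul_self_of_mem U.2) j) l
  rw [Matrix.mul_apply, Matrix.one_apply] at this
  simpa using this

lemma unitary_row {n : ℕ} (U : Matrix.unitaryGroup (Fin n) ℂ) (j l : Fin n) :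
    ∑ k, (U : Matrix (Fin n) (Fin n) ℂ) j k * star ((U : Matrix (Fin n) (Fin n) ℂ) l k)
      = if j = l then 1 else 0 := by
  have := congrFun (congrFun (show (U : Matrix (Fin n) (Fin n) ℂ) * star (U : Matrix (Fin n) (Fin n) ℂ) = 1 from Unitary.mul_star_self_of_mem U.2) j) l
  rw [Matrix.mul_apply, Matrix.one_apply] at this
  simpa using this

lemma unitary_row_zero {n : ℕ} (U : Matrix.unitaryGroup (Fin (n+1)) ℂ)
    (h : (U : Matrix (Fin (n+1)) (Fin (n+1)) ℂ) 0 0 = 1) (j : Fin n) :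
    (U : Matrix (Fin (n+1)) (Fin (n+1)) ℂ) 0 j.succ = 0 := by
  have h1 := congrArg Complex.re (unitary_row U 0 0)
  rw [Fin.sum_univ_succ, h] at h1
  have h3 : ∀ z : ℂ, (z * star z).re = ‖z‖ ^ 2 := by
    intro z
    rw [← Complex.normSq_eq_norm_sq, Complex.normSq_apply]; simp
  rw [Complex.add_re, Complex.re_sum] at h1
  simp only [h3] at h1
  simp at h1
  rw [Finset.sum_eq_zero_iff_of_nonneg (fun i _ => by positivity)] at h1
  simpa using h1 j (Finset.mem_univ j)

lemma redM_mem {n : ℕ} (U : Matrix.unitaryGroup (Fin (n+1)) ℂ) :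
    redM (U : Matrix (Fin (n+1)) (Fin (n+1)) ℂ) ∈ Matrix.unitaryGroup (Fin n) ℂ := by
  rw [Matrix.mem_unitaryGroup_iff']
  ext j l
  have hjl := unitary_col U j.succ l.succ
  have hj0 := unitary_col U j.succ 0
  have h0l := unitary_col U 0 l.succ
  have h00 := unitary_col U 0 0
  have hrow := unitary_row_zero U
  rw [Matrix.mul_apply, Matrix.one_apply]
  set A : Matrix (Fin (n+1)) (Fin (n+1)) ℂ := (U : Matrix (Fin (n+1)) (Fin (n+1)) ℂ) with hA
  simp only [Fin.sum_univ_succ, Fin.succ_inj, Fin.succ_ne_zero, if_false, if_true, (Fin.succ_ne_zero _).symm] at hjl hj0 h0l h00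
  set s := (1 - A 0 0)⁻¹ with hs
  have e : ∑ i, (star (redM A)) j i * redM A i l =
      ∑ i : Fin n, star (A i.succ j.succ) * A i.succ l.succ
      + s * A 0 l.succ * ∑ i : Fin n, star (A i.succ j.succ) * A i.succ 0
      + star s * star (A 0 j.succ) * ∑ i : Fin n, star (A i.succ 0) * A i.succ l.succ
      + star s * star (A 0 j.succ) * s * A 0 l.succ * ∑ i : Fin n, star (A i.succ 0) * A i.succ 0 := by
    simp only [Finset.mul_sum, ← Finset.sum_add_distrib]
    refine Finset.sum_congr rfl fun i _ => ?_
    simp only [Matrix.star_apply, redM, Matrix.of_apply, star_add, star_mul', ← hs]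
    ring
  rw [e, eq_sub_of_add_eq' hjl, eq_sub_of_add_eq' hj0, eq_sub_of_add_eq' h0l, eq_sub_of_add_eq' h00]
  by_cases h1 : A 0 0 = 1
  · rw [hrow h1, hrow h1]; simp
  · have hs1 : s * (1 - A 0 0) = 1 := inv_mul_cancel₀ (sub_ne_zero.mpr (Ne.symm h1))
    have hs2 : star s * (1 - star (A 0 0)) = 1 := by
      have := congrArg star hs1
      simpa [star_mul', mul_comm] using this
    have : (-1 - s * A 0 0 - star s * star (A 0 0) + star s * s * (1 - star (A 0 0) * A 0 0)) = 0 := by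
      have hs1' : s * A 0 0 = s - 1 := by linear_combination -hs1
      have hs2' : star s * star (A 0 0) = star s - 1 := by linear_combination -hs2
      linear_combination (-1 - star s * star (A 0 0)) * hs1' - s * hs2'
    linear_combination star (A 0 j.succ) * A 0 l.succ * this

/-- reduction -/
noncomputable def red {n : ℕ} (U : Matrix.unitaryGroup (Fin (n+1)) ℂ) : Matrix.unitaryGroup (Fin n) ℂ :=
  ⟨redM (U : Matrix (Fin (n+1)) (Fin (n+1)) ℂ), redM_mem U⟩

/-- block embedding -/
noncomputable def embM {n : ℕ} (V : Matrix (Fin n) (Fin n) ℂ) : Matrix (Fin (n+1)) (Fin (n+1)) ℂ :=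
  Matrix.of (Fin.cons (Fin.cons 1 0) fun i => Fin.cons 0 (V i))

@[simp] lemma embM_00 {n : ℕ} (V : Matrix (Fin n) (Fin n) ℂ) : embM V 0 0 = 1 := rfl
@[simp] lemma embM_0s {n : ℕ} (V : Matrix (Fin n) (Fin n) ℂ) (j) : embM V 0 (Fin.succ j) = 0 := rfl
@[simp] lemma embM_s0 {n : ℕ} (V : Matrix (Fin n) (Fin n) ℂ) (i) : embM V (Fin.succ i) 0 = 0 := rfl
@[simp] lemma embM_ss {n : ℕ} (V : Matrix (Fin n) (Fin n) ℂ) (i j) :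
    embM V (Fin.succ i) (Fin.succ j) = V i j := rfl

lemma embM_mem {n : ℕ} (V : Matrix.unitaryGroup (Fin n) ℂ) :
    embM (V : Matrix (Fin n) (Fin n) ℂ) ∈ Matrix.unitaryGroup (Fin (n+1)) ℂ := by
  rw [Matrix.mem_unitaryGroup_iff']
  ext j l
  rw [Matrix.mul_apply, Matrix.one_apply, Fin.sum_univ_succ]
  have := unitary_col V
  refine Fin.cases ?_ (fun j => ?_) j <;> refine Fin.cases ?_ (fun l => ?_) l
  · simp
  · simp [(Fin.succ_ne_zero _).symm]
  · simp
  · simpa using this j l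

/-- embedding -/
noncomputable def emb {n : ℕ} (V : Matrix.unitaryGroup (Fin n) ℂ) : Matrix.unitaryGroup (Fin (n+1)) ℂ :=
  ⟨embM (V : Matrix (Fin n) (Fin n) ℂ), embM_mem V⟩

lemma mul_emb_0 {n : ℕ} (A : Matrix (Fin (n+1)) (Fin (n+1)) ℂ) (V : Matrix (Fin n) (Fin n) ℂ) (i) :
    (A * embM V) i 0 = A i 0 := by
  rw [Matrix.mul_apply, Fin.sum_univ_succ]; simp

lemma mul_emb_s {n : ℕ} (A : Matrix (Fin (n+1)) (Fin (n+1)) ℂ) (V : Matrix (Fin n) (Fin n) ℂ) (i j) :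
    (A * embM V) i (Fin.succ j) = ∑ k, A i (Fin.succ k) * V k j := by
  rw [Matrix.mul_apply, Fin.sum_univ_succ]; simp

lemma red_mul_emb {n : ℕ} (U : Matrix.unitaryGroup (Fin (n+1)) ℂ) (V : Matrix.unitaryGroup (Fin n) ℂ) :
    red (U * emb V) = red U * V := by
  apply Subtype.ext
  change redM ((U : Matrix (Fin (n+1)) (Fin (n+1)) ℂ) * embM (V : Matrix (Fin n) (Fin n) ℂ)) = redM (U : Matrix (Fin (n+1)) (Fin (n+1)) ℂ) * (V : Matrix (Fin n) (Fin n) ℂ)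
  ext i j
  rw [Matrix.mul_apply]
  simp only [redM, Matrix.of_apply, mul_emb_0, mul_emb_s, add_mul, Finset.sum_add_distrib, Finset.mul_sum, mul_assoc]

lemma mul_emb_00 {n : ℕ} (U : Matrix.unitaryGroup (Fin (n+1)) ℂ) (V : Matrix.unitaryGroup (Fin n) ℂ) :
    ((U * emb V : Matrix.unitaryGroup (Fin (n+1)) ℂ) : Matrix (Fin (n+1)) (Fin (n+1)) ℂ) 0 0 =
      (U : Matrix (Fin (n+1)) (Fin (n+1)) ℂ) 0 0 := mul_emb_0 _ _ _

lemma argSum_eq' {n : ℕ} (U : Matrix.unitaryGroup (Fin n) ℂ)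
    (h : (1 - (U : Matrix (Fin n) (Fin n) ℂ)).det ≠ 0) {K : Matrix (Fin n) (Fin n) ℂ}
    (hK : K.IsHermitian) (e : K = cay (U : Matrix (Fin n) (Fin n) ℂ)) :
    argSum (U : Matrix (Fin n) (Fin n) ℂ) =
      - ∑ j, Complex.arg (1/2 + Complex.I * (hK.eigenvalues j : ℂ)) := by
  subst e
  exact argSum_eq U h

lemma argSum_red {n : ℕ} (U : Matrix.unitaryGroup (Fin (n+1)) ℂ)
    (h : (1 - (U : Matrix (Fin (n+1)) (Fin (n+1)) ℂ)).det ≠ 0) :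
    (1 - (red U : Matrix (Fin n) (Fin n) ℂ)).det ≠ 0 ∧
    argSum (U : Matrix (Fin (n+1)) (Fin (n+1)) ℂ) =
      Complex.arg (1 - (U : Matrix (Fin (n+1)) (Fin (n+1)) ℂ) 0 0) + argSum (red U : Matrix (Fin n) (Fin n) ℂ) := by
  have hcay := cay_herm U h
  have hrow := unitary_row_zero U
  have hS := argSum_eq U h
  have hceq := cay_eq (U : Matrix (Fin (n+1)) (Fin (n+1)) ℂ)
  set A : Matrix (Fin (n+1)) (Fin (n+1)) ℂ := (U : Matrix (Fin (n+1)) (Fin (n+1)) ℂ) with hA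
  have hu : IsUnit (1 - A).det := isUnit_iff_ne_zero.mpr h
  have h1 : A 0 0 ≠ 1 := by
    intro h1
    apply h
    apply Matrix.det_eq_zero_of_row_eq_zero 0
    intro j
    refine Fin.cases ?_ (fun j => ?_) j
    · simp [h1]
    · simp [hrow h1, (Fin.succ_ne_zero _).symm]
  set M := (1 - A)⁻¹ with hM
  have hMA : M * (1 - A) = 1 := Matrix.nonsing_inv_mul _ hu
  have hblock : M.submatrix Fin.succ Fin.succ * (1 - (red U : Matrix (Fin n) (Fin n) ℂ)) = 1 := by
    ext i j
    have e1 := congrFun (congrFun hMA i.succ) j.succ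
    have e2 := congrFun (congrFun hMA i.succ) 0
    rw [Matrix.mul_apply, Fin.sum_univ_succ] at e1 e2 
    rw [Matrix.mul_apply]
    have e3 : ∀ k : Fin n, M.submatrix Fin.succ Fin.succ i k * (1 - (red U : Matrix (Fin n) (Fin n) ℂ)) k j =
        M i.succ k.succ * (1 - A) k.succ j.succ
          + (1 - A 0 0)⁻¹ * A 0 j.succ * (M i.succ k.succ * (1 - A) k.succ 0) := by
      intro k
      simp only [red, redM, Matrix.submatrix_apply, Matrix.sub_apply, Matrix.of_apply, Matrix.one_apply, ← hA, Fin.succ_inj, Fin.succ_ne_zero, if_false]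
      ring
    rw [Finset.sum_congr rfl fun k _ => e3 k, Finset.sum_add_distrib, ← Finset.mul_sum,
      eq_sub_of_add_eq' e1, eq_sub_of_add_eq' e2]
    have h2 : (1 - A 0 0) ≠ 0 := sub_ne_zero.mpr (Ne.symm h1)
    simp only [Matrix.sub_apply, Matrix.one_apply, Fin.succ_inj, Fin.succ_ne_zero, if_false, if_true, (Fin.succ_ne_zero _).symm]
    field_simp
    ring
  have hred : (1 - (red U : Matrix (Fin n) (Fin n) ℂ)).det ≠ 0 := by
    intro h0
    have := congrArg Matrix.det hblock
    rw [Matrix.det_mul, h0] at this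
    simp at this
  refine ⟨hred, ?_⟩
  have hinv : (1 - (red U : Matrix (Fin n) (Fin n) ℂ))⁻¹ = M.submatrix Fin.succ Fin.succ :=
    Matrix.inv_eq_left_inv hblock
  have hc : cay (red U : Matrix (Fin n) (Fin n) ℂ) = (cay A).submatrix Fin.succ Fin.succ := by
    rw [cay, hinv, cay, ← hM]
    ext i j
    simp [Matrix.one_apply]
  have hK' : ((cay A).submatrix Fin.succ Fin.succ).IsHermitian := hc ▸ cay_herm (red U) hred
  have hm := herm_minor hcay hK'
  rw [← hceq, hM, Matrix.nonsing_inv_nonsing_inv _ hu] at hm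
  have hS' := argSum_eq' (red U) hred hK' hc.symm
  rw [hS, hm, hS', Matrix.sub_apply, Matrix.one_apply_eq]
  ring

/-- recursive phase -/
noncomputable def phase : (n : ℕ) → Matrix.unitaryGroup (Fin n) ℂ → ℝ
  | 0, _ => 0
  | n + 1, U => Complex.arg (1 - (U : Matrix (Fin (n+1)) (Fin (n+1)) ℂ) 0 0) + phase n (red U)

lemma argSum_eq_phase : ∀ (n : ℕ) (U : Matrix.unitaryGroup (Fin n) ℂ)
    (_ : (1 - (U : Matrix (Fin n) (Fin n) ℂ)).det ≠ 0),
    argSum (U : Matrix (Fin n) (Fin n) ℂ) = phase n U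
  | 0, U, _ => by simp [argSum, phase]
  | n + 1, U, h => by
    rw [(argSum_red U h).2, phase, argSum_eq_phase n _ (argSum_red U h).1]



instance unitaryCompact (n : ℕ) : CompactSpace (Matrix.unitaryGroup (Fin n) ℂ) := by
  refine isCompact_iff_compactSpace (s := ((Matrix.unitaryGroup (Fin n) ℂ : Submonoid (Matrix (Fin n) (Fin n) ℂ)) : Set (Matrix (Fin n) (Fin n) ℂ))).mp ?_
  have hK : IsCompact (Set.univ.pi fun _ : Fin n => Set.univ.pi fun _ : Fin n => Metric.closedBall (0:ℂ) 1) :=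
    isCompact_univ_pi fun _ => isCompact_univ_pi fun _ => isCompact_closedBall _ _
  refine IsCompact.of_isClosed_subset (X := Fin n → Fin n → ℂ) hK ?_ ?_
  · have : ((Matrix.unitaryGroup (Fin n) ℂ : Submonoid (Matrix (Fin n) (Fin n) ℂ)) : Set (Matrix (Fin n) (Fin n) ℂ)) = {A | star A * A = 1} := by
      ext A; exact Matrix.mem_unitaryGroup_iff'
    have h2 : IsClosed {A : Matrix (Fin n) (Fin n) ℂ | star A * A = 1} :=
      isClosed_eq (by fun_prop) continuous_const
    rw [this]
    exact h2
  · intro A hA i _ j _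
    rw [mem_closedBall_zero_iff]
    exact entry_norm_bound_of_unitary hA i j

instance unitarySecond (n : ℕ) : SecondCountableTopology (Matrix.unitaryGroup (Fin n) ℂ) := by
  have : SecondCountableTopology (Matrix (Fin n) (Fin n) ℂ) :=
    inferInstanceAs (SecondCountableTopology (Fin n → Fin n → ℂ))
  exact TopologicalSpace.Subtype.secondCountableTopology _

lemma cont_entry {n : ℕ} (i j : Fin n) :
    Continuous fun U : Matrix.unitaryGroup (Fin n) ℂ => (U : Matrix (Fin n) (Fin n) ℂ) i j :=
  (continuous_subtype_val).matrix_elem i j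

lemma meas_entry {n : ℕ} (i j : Fin n) :
    Measurable fun U : Matrix.unitaryGroup (Fin n) ℂ => (U : Matrix (Fin n) (Fin n) ℂ) i j :=
  (cont_entry i j).measurable

lemma meas_into {X : Type*} [MeasurableSpace X] {n : ℕ} (f : X → Matrix.unitaryGroup (Fin n) ℂ)
    (h : ∀ i j, Measurable fun x => (f x : Matrix (Fin n) (Fin n) ℂ) i j) : Measurable f := by
  refine measurable_of_isOpen fun s hs => ?_
  obtain ⟨t, ht, rfl⟩ := isOpen_induced_iff.mp hs
  have hg : Measurable (fun x => (fun i j => (f x : Matrix (Fin n) (Fin n) ℂ) i j : Fin n → Fin n → ℂ)) :=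
    measurable_pi_iff.mpr fun i => measurable_pi_iff.mpr fun j => h i j
  have ht' : IsOpen (X := Fin n → Fin n → ℂ) t := ht
  exact hg ht'.measurableSet

lemma meas_red {n : ℕ} : Measurable (red (n := n)) := by
  refine meas_into _ fun i j => ?_
  change Measurable fun U : Matrix.unitaryGroup (Fin (n+1)) ℂ => (U : Matrix (Fin (n+1)) (Fin (n+1)) ℂ) i.succ j.succ + (1 - (U : Matrix (Fin (n+1)) (Fin (n+1)) ℂ) 0 0)⁻¹ * (U : Matrix (Fin (n+1)) (Fin (n+1)) ℂ) i.succ 0 * (U : Matrix (Fin (n+1)) (Fin (n+1)) ℂ) 0 j.succ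
  have := meas_entry (n := n+1)
  exact (this _ _).add ((((measurable_const.sub (this _ _)).inv).mul (this _ _)).mul (this _ _))

lemma meas_arg {n : ℕ} : Measurable fun U : Matrix.unitaryGroup (Fin (n+1)) ℂ =>
    Complex.arg (1 - (U : Matrix (Fin (n+1)) (Fin (n+1)) ℂ) 0 0) :=
  Complex.measurable_arg.comp (measurable_const.sub (meas_entry _ _))

lemma meas_phase : ∀ n, Measurable (phase n)
  | 0 => measurable_const
  | n + 1 => meas_arg.add ((meas_phase n).comp meas_red)

lemma meas_emb {n : ℕ} : Measurable (emb (n := n)) := by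
  refine meas_into _ fun i j => ?_
  refine Fin.cases ?_ (fun i => ?_) i <;> refine Fin.cases ?_ (fun j => ?_) j
  · exact measurable_const
  · exact measurable_const
  · exact measurable_const
  · exact meas_entry i j

section grp
variable {G : Type*} [Group G] [TopologicalSpace G] [IsTopologicalGroup G] [CompactSpace G]
  [MeasurableSpace G] [BorelSpace G]

lemma right_inv_haar (μ : Measure G) [IsProbabilityMeasure μ] [μ.IsHaarMeasure] :
    μ.IsMulRightInvariant := by
  constructor
  intro g
  have : IsProbabilityMeasure (μ.map (· * g)) :=
    Measure.isProbabilityMeasure_map (continuous_mul_const g).measurable.aemeasurable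
  exact Measure.isHaarMeasure_eq_of_isProbabilityMeasure _ _

lemma inv_inv_haar (μ : Measure G) [IsProbabilityMeasure μ] [μ.IsHaarMeasure] :
    μ.IsInvInvariant := by
  have := right_inv_haar μ
  constructor
  have h1 : IsProbabilityMeasure μ.inv :=
    Measure.isProbabilityMeasure_map continuous_inv.measurable.aemeasurable
  have h2 : μ.inv.IsHaarMeasure :=
    Measure.isHaarMeasure_of_isCompact_nonempty_interior _ Set.univ isCompact_univ (by simp) (by simp) (by simp)
  exact Measure.isHaarMeasure_eq_of_isProbabilityMeasure _ _

end grp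

lemma exists_haar (n : ℕ) : ∃ μ : Measure (Matrix.unitaryGroup (Fin n) ℂ),
    IsProbabilityMeasure μ ∧ μ.IsHaarMeasure := by
  refine ⟨Measure.haarMeasure ⊤, ⟨?_⟩, inferInstance⟩
  have := Measure.haarMeasure_self (K₀ := (⊤ : TopologicalSpace.PositiveCompacts (Matrix.unitaryGroup (Fin n) ℂ)))
  simpa using this

lemma arg_bound (w : ℂ) (h : ‖w‖ ≤ 1) :
    |Complex.arg (1 - w)| ≤ π / 2 ∧ |Complex.arg (1 - w)| ≤ 2 * ‖w‖ := by
  have hre : 0 ≤ (1 - w).re := by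
    have := Complex.re_le_norm w
    simp; linarith
  have h1 := Complex.abs_arg_le_pi_div_two_iff.mpr hre
  refine ⟨h1, ?_⟩
  by_cases hw : 1 - w = 0
  · rw [hw]; simp
  have h2 := Real.mul_le_sin (abs_nonneg _) h1
  have h3 : Real.sin |Complex.arg (1 - w)| ≤ ‖w‖ := by
    have h4 : Real.sin |Complex.arg (1 - w)| ≤ |Real.sin (Complex.arg (1 - w))| := by
      rcases abs_choice (Complex.arg (1 - w)) with e | e <;> rw [e]
      · exact le_abs_self _
      · rw [Real.sin_neg]; exact neg_le_abs _
    refine h4.trans ?_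
    rw [Complex.sin_arg, abs_div, abs_norm, div_le_iff₀ (norm_pos_iff.mpr hw)]
    apply abs_le_of_sq_le_sq _ (by positivity)
    rw [mul_pow, ← Complex.normSq_eq_norm_sq, ← Complex.normSq_eq_norm_sq, Complex.normSq_apply, Complex.normSq_apply]
    simp only [Complex.sub_re, Complex.sub_im, Complex.one_re, Complex.one_im]
    nlinarith [sq_nonneg (w.re - (w.re * w.re + w.im * w.im))]
  have h5 := Real.pi_pos
  have h6 := Real.pi_le_four
  have h7 : 2 / π * |Complex.arg (1 - w)| ≤ ‖w‖ := h2.trans h3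
  have h8 : |Complex.arg (1 - w)| ≤ π / 2 * ‖w‖ := by
    calc |Complex.arg (1 - w)| = π / 2 * (2 / π * |Complex.arg (1 - w)|) := by field_simp
      _ ≤ _ := by gcongr
  nlinarith [norm_nonneg w]

lemma arg_conj_neg (w : ℂ) (h : ‖w‖ ≤ 1) :
    Complex.arg (1 - star w) = - Complex.arg (1 - w) := by
  have : 1 - star w = (starRingEnd ℂ) (1 - w) := by simp
  rw [this, Complex.arg_conj, if_neg]
  intro h1
  have h2 := (arg_bound w h).1
  rw [h1, abs_of_pos Real.pi_pos] at h2
  linarith [Real.pi_pos]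

lemma norm_entry {n : ℕ} (U : Matrix.unitaryGroup (Fin n) ℂ) (i j : Fin n) :
    ‖(U : Matrix (Fin n) (Fin n) ℂ) i j‖ ≤ 1 := entry_norm_bound_of_unitary U.2 i j

section mom
variable {n : ℕ} (μ : Measure (Matrix.unitaryGroup (Fin (n+1)) ℂ)) [IsProbabilityMeasure μ] [μ.IsHaarMeasure]

lemma integrable_arg : Integrable (fun U : Matrix.unitaryGroup (Fin (n+1)) ℂ =>
    Complex.arg (1 - (U : Matrix (Fin (n+1)) (Fin (n+1)) ℂ) 0 0)) μ :=
  Integrable.of_bound meas_arg.aestronglyMeasurable (π/2)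
    (Filter.Eventually.of_forall fun U => (arg_bound _ (norm_entry U 0 0)).1)

lemma integral_arg : ∫ U : Matrix.unitaryGroup (Fin (n+1)) ℂ,
    Complex.arg (1 - (U : Matrix (Fin (n+1)) (Fin (n+1)) ℂ) 0 0) ∂μ = 0 := by
  have := inv_inv_haar μ
  have h := integral_inv_eq_self (fun U : Matrix.unitaryGroup (Fin (n+1)) ℂ =>
    Complex.arg (1 - (U : Matrix (Fin (n+1)) (Fin (n+1)) ℂ) 0 0)) μ
  have h2 : ∀ U : Matrix.unitaryGroup (Fin (n+1)) ℂ,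
    Complex.arg (1 - ((U⁻¹ : Matrix.unitaryGroup (Fin (n+1)) ℂ) : Matrix (Fin (n+1)) (Fin (n+1)) ℂ) 0 0) =
     - Complex.arg (1 - (U : Matrix (Fin (n+1)) (Fin (n+1)) ℂ) 0 0) := fun U =>
     arg_conj_neg _ (norm_entry U 0 0)
  simp only [h2, integral_neg] at h
  linarith

lemma integrable_sq (i : Fin (n+1)) : Integrable (fun U : Matrix.unitaryGroup (Fin (n+1)) ℂ =>
    ‖(U : Matrix (Fin (n+1)) (Fin (n+1)) ℂ) i 0‖ ^ 2) μ :=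
  Integrable.of_bound ((meas_entry i 0).norm.pow_const 2).aestronglyMeasurable 1
    (Filter.Eventually.of_forall fun U => by
      have := norm_entry U i 0
      rw [Real.norm_of_nonneg (by positivity)]
      exact pow_le_one₀ (norm_nonneg _) this)

/-- permutation matrix as a unitary -/
noncomputable def permU (σ : Equiv.Perm (Fin (n+1))) : Matrix.unitaryGroup (Fin (n+1)) ℂ :=
  ⟨σ.permMatrix ℂ, by
    rw [Matrix.mem_unitaryGroup_iff, Matrix.star_eq_conjTranspose, Matrix.conjTranspose_permMatrix,
      ← Matrix.permMatrix_mul]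
    simp⟩

lemma integral_sq : ∫ U : Matrix.unitaryGroup (Fin (n+1)) ℂ,
    ‖(U : Matrix (Fin (n+1)) (Fin (n+1)) ℂ) 0 0‖ ^ 2 ∂μ = 1 / (n + 1) := by
  have h1 : ∀ i, ∫ U : Matrix.unitaryGroup (Fin (n+1)) ℂ,
    ‖(U : Matrix (Fin (n+1)) (Fin (n+1)) ℂ) i 0‖ ^ 2 ∂μ = ∫ U : Matrix.unitaryGroup (Fin (n+1)) ℂ,
    ‖(U : Matrix (Fin (n+1)) (Fin (n+1)) ℂ) 0 0‖ ^ 2 ∂μ := by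
    intro i
    rw [← integral_mul_left_eq_self _ (permU (Equiv.swap 0 i))]
    refine integral_congr_ae (Filter.Eventually.of_forall fun U => ?_)
    change ‖((Equiv.swap 0 i).permMatrix ℂ * (U : Matrix (Fin (n+1)) (Fin (n+1)) ℂ)) i 0‖ ^ 2 = _
    rw [Equiv.Perm.permMatrix, PEquiv.toMatrix_toPEquiv_mul]
    simp
  have h2 : ∑ i, ∫ U : Matrix.unitaryGroup (Fin (n+1)) ℂ,
    ‖(U : Matrix (Fin (n+1)) (Fin (n+1)) ℂ) i 0‖ ^ 2 ∂μ = 1 := by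
    rw [← integral_finsetSum _ fun i _ => integrable_sq μ i]
    have : ∀ U : Matrix.unitaryGroup (Fin (n+1)) ℂ, ∑ i, ‖(U : Matrix (Fin (n+1)) (Fin (n+1)) ℂ) i 0‖ ^ 2 = 1 := by
      intro U
      have h1 := congrArg Complex.re (unitary_col U 0 0)
      have h3 : ∀ z : ℂ, (star z * z).re = ‖z‖ ^ 2 := by
        intro z
        rw [← Complex.normSq_eq_norm_sq, Complex.normSq_apply]; simp
      rw [Complex.re_sum] at h1
      simpa only [h3, if_true, Complex.one_re] using h1
    simp [this]
  simp only [h1, Finset.sum_const, Finset.card_univ, Fintype.card_fin, nsmul_eq_mul] at h2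
  push_cast at h2
  have : (n + 1 : ℝ) ≠ 0 := by positivity
  field_simp
  linarith

lemma step_bound (e : ℝ) (he : e = 1/2 ∨ e = -1/2) :
    ∫⁻ U : Matrix.unitaryGroup (Fin (n+1)) ℂ,
      ENNReal.ofReal (rexp (e * Complex.arg (1 - (U : Matrix (Fin (n+1)) (Fin (n+1)) ℂ) 0 0))) ∂μ
      ≤ ENNReal.ofReal (1 + 1 / (n + 1)) := by
  have hintg : Integrable (fun U : Matrix.unitaryGroup (Fin (n+1)) ℂ =>
      1 + e * Complex.arg (1 - (U : Matrix (Fin (n+1)) (Fin (n+1)) ℂ) 0 0)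
        + ‖(U : Matrix (Fin (n+1)) (Fin (n+1)) ℂ) 0 0‖ ^ 2) μ :=
    ((integrable_const 1).add ((integrable_arg μ).const_mul e)).add (integrable_sq μ 0)
  have hval : ∫ U : Matrix.unitaryGroup (Fin (n+1)) ℂ,
      (1 + e * Complex.arg (1 - (U : Matrix (Fin (n+1)) (Fin (n+1)) ℂ) 0 0)
        + ‖(U : Matrix (Fin (n+1)) (Fin (n+1)) ℂ) 0 0‖ ^ 2) ∂μ = 1 + 1 / ((n:ℝ)+1) := by
    have hi1 : Integrable (fun U : Matrix.unitaryGroup (Fin (n+1)) ℂ =>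
      1 + e * Complex.arg (1 - (U : Matrix (Fin (n+1)) (Fin (n+1)) ℂ) 0 0)) μ :=
      (integrable_const 1).add ((integrable_arg μ).const_mul e)
    rw [integral_add hi1 (integrable_sq μ 0),
      integral_add (integrable_const 1) ((integrable_arg μ).const_mul e), integral_const_mul,
      integral_arg, integral_sq]
    simp
  have hle : ∀ U : Matrix.unitaryGroup (Fin (n+1)) ℂ,
      rexp (e * Complex.arg (1 - (U : Matrix (Fin (n+1)) (Fin (n+1)) ℂ) 0 0)) ≤
      1 + e * Complex.arg (1 - (U : Matrix (Fin (n+1)) (Fin (n+1)) ℂ) 0 0)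
        + ‖(U : Matrix (Fin (n+1)) (Fin (n+1)) ℂ) 0 0‖ ^ 2 := by
    intro U
    obtain ⟨h1, h2⟩ := arg_bound _ (norm_entry U 0 0)
    set x := Complex.arg (1 - (U : Matrix (Fin (n+1)) (Fin (n+1)) ℂ) 0 0)
    set r := ‖(U : Matrix (Fin (n+1)) (Fin (n+1)) ℂ) 0 0‖
    have he' : |e| = 1/2 := by rcases he with rfl | rfl <;> norm_num [abs_of_pos, abs_of_neg]
    have h3 : |e * x| ≤ 1 := by
      rw [abs_mul, he']
      linarith [Real.pi_le_four]
    have h4 := (abs_le.mp (Real.abs_exp_sub_one_sub_id_le h3)).2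
    have h5 : (e * x) ^ 2 ≤ r ^ 2 := by
      apply sq_le_sq'
      · have := (abs_le.mp (show |e * x| ≤ r by rw [abs_mul, he']; linarith)).1; linarith
      · exact (abs_le.mp (show |e * x| ≤ r by rw [abs_mul, he']; linarith)).2
    linarith
  rw [← hval, ofReal_integral_eq_lintegral_ofReal hintg
    (Filter.Eventually.of_forall fun U => (Real.exp_pos _).le.trans (hle U))]
  exact lintegral_mono fun U => ENNReal.ofReal_le_ofReal (hle U)

end mom

lemma mgf_bound (e : ℝ) (he : e = 1/2 ∨ e = -1/2) : ∀ (n : ℕ)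
    (μ : Measure (Matrix.unitaryGroup (Fin n) ℂ)) (_ : IsProbabilityMeasure μ) (_ : μ.IsHaarMeasure),
    ∫⁻ U, ENNReal.ofReal (rexp (e * phase n U)) ∂μ ≤ ENNReal.ofReal (n + 1)
  | 0, μ, _, _ => by simp [phase]
  | n + 1, μ, h1, h2 => by
    obtain ⟨ν, h3, h4⟩ := exists_haar n
    have ih := mgf_bound e he n ν h3 h4
    have hr := right_inv_haar μ
    have hmeas : Measurable fun U : Matrix.unitaryGroup (Fin (n+1)) ℂ =>
      ENNReal.ofReal (rexp (e * phase (n+1) U)) :=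
      (Real.measurable_exp.comp ((meas_phase (n+1)).const_mul e)).ennreal_ofReal
    have hmeas' : Measurable fun V : Matrix.unitaryGroup (Fin n) ℂ =>
      ENNReal.ofReal (rexp (e * phase n V)) :=
      (Real.measurable_exp.comp ((meas_phase n).const_mul e)).ennreal_ofReal
    calc ∫⁻ U, ENNReal.ofReal (rexp (e * phase (n+1) U)) ∂μ 
        = ∫⁻ V, ∫⁻ U, ENNReal.ofReal (rexp (e * phase (n+1) (U * emb V))) ∂μ ∂ν := by
          have : ∀ V, ∫⁻ U, ENNReal.ofReal (rexp (e * phase (n+1) (U * emb V))) ∂μ = 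
            ∫⁻ U, ENNReal.ofReal (rexp (e * phase (n+1) U)) ∂μ := fun V =>
            lintegral_mul_right_eq_self (fun U => ENNReal.ofReal (rexp (e * phase (n+1) U))) (emb V)
          simp [this]
      _ = ∫⁻ U, ∫⁻ V, ENNReal.ofReal (rexp (e * phase (n+1) (U * emb V))) ∂ν ∂μ := by
          rw [lintegral_lintegral_swap]
          exact (hmeas.comp (measurable_snd.mul (meas_emb.comp measurable_fst))).aemeasurable
      _ = ∫⁻ U, ENNReal.ofReal (rexp (e * Complex.arg (1 - (U : Matrix (Fin (n+1)) (Fin (n+1)) ℂ) 0 0)))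
            * ∫⁻ V, ENNReal.ofReal (rexp (e * phase n V)) ∂ν ∂μ := by
          refine lintegral_congr fun U => ?_
          rw [← lintegral_mul_left_eq_self (fun V => ENNReal.ofReal (rexp (e * phase n V))) (red U),
            ← lintegral_const_mul _ (show Measurable fun V => ENNReal.ofReal (rexp (e * phase n (red U * V))) from
              hmeas'.comp (measurable_const_mul _))]
          refine lintegral_congr fun V => ?_
          rw [phase, mul_emb_00, red_mul_emb, mul_add, Real.exp_add, ENNReal.ofReal_mul (Real.exp_pos _).le]
      _ = (∫⁻ U, ENNReal.ofReal (rexp (e * Complex.arg (1 - (U : Matrix (Fin (n+1)) (Fin (n+1)) ℂ) 0 0))) ∂μ)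
            * ∫⁻ V, ENNReal.ofReal (rexp (e * phase n V)) ∂ν := by
          rw [lintegral_mul_const]
          exact (Real.measurable_exp.comp (meas_arg.const_mul e)).ennreal_ofReal
      _ ≤ ENNReal.ofReal (1 + 1 / (n + 1)) * ENNReal.ofReal (n + 1) := by
          gcongr
          exact step_bound μ e he
      _ = _ := by
          rw [← ENNReal.ofReal_mul (by positivity)]
          congr 1
          push_cast
          field_simp



noncomputable def rot (n : ℕ) (t : ℝ) : Matrix.unitaryGroup (Fin n) ℂ :=
  ⟨Complex.exp (t * Complex.I) • 1, by
    rw [Matrix.mem_unitaryGroup_iff, star_smul, star_one, smul_mul_smul_comm, one_mul]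
    have : Complex.exp (t * Complex.I) * star (Complex.exp (t * Complex.I)) = 1 := by
      rw [Complex.star_def, Complex.mul_conj, Complex.normSq_eq_norm_sq, Complex.norm_exp_ofReal_mul_I]
      simp
    rw [this, one_smul]⟩

lemma rot_mul {n : ℕ} (t : ℝ) (U : Matrix.unitaryGroup (Fin n) ℂ) :
    ((rot n t * U : Matrix.unitaryGroup (Fin n) ℂ) : Matrix (Fin n) (Fin n) ℂ) =
      Complex.exp (t * Complex.I) • (U : Matrix (Fin n) (Fin n) ℂ) := by
  change (Complex.exp (t * Complex.I) • (1 : Matrix (Fin n) (Fin n) ℂ)) * _ = _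
  rw [smul_mul_assoc, one_mul]

def bad (n : ℕ) : Set (Matrix.unitaryGroup (Fin n) ℂ) := {U | (1 - (U : Matrix (Fin n) (Fin n) ℂ)).det = 0}

lemma bad_rot {n : ℕ} (t : ℝ) (U : Matrix.unitaryGroup (Fin n) ℂ) (h : rot n t * U ∈ bad n) :
    Complex.exp (-t * Complex.I) ∈ (U : Matrix (Fin n) (Fin n) ℂ).charpoly.roots := by
  rw [Polynomial.mem_roots (Matrix.charpoly_monic _).ne_zero, Polynomial.IsRoot, Matrix.eval_charpoly]
  have h1 : (1 - ((rot n t * U : Matrix.unitaryGroup (Fin n) ℂ) : Matrix (Fin n) (Fin n) ℂ)).det = 0 := h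
  have h2 : Matrix.scalar (Fin n) (Complex.exp (-t * Complex.I)) - (U : Matrix (Fin n) (Fin n) ℂ) =
    Complex.exp (-t * Complex.I) • (1 - ((rot n t * U : Matrix.unitaryGroup (Fin n) ℂ) : Matrix (Fin n) (Fin n) ℂ)) := by
    rw [rot_mul, smul_sub, smul_smul, ← Complex.exp_add]
    simp [Matrix.smul_one_eq_diagonal]
  rw [h2, Matrix.det_smul, h1, mul_zero]

lemma meas_bad (n : ℕ) : MeasurableSet (bad n) := by
  have : IsClosed (bad n) := by
    refine isClosed_eq ?_ continuous_const
    exact (continuous_const.sub continuous_subtype_val).matrix_det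
  exact this.measurableSet

lemma exp_inj_seq {a b : ℕ} (h : Complex.exp (-((1 / ((a:ℝ) + 1) : ℝ) : ℂ) * Complex.I) =
    Complex.exp (-((1 / ((b:ℝ) + 1) : ℝ):ℂ) * Complex.I)) : a = b := by
  have key : ∀ a : ℕ, Complex.arg (Complex.exp (-((1 / ((a:ℝ) + 1) : ℝ) : ℂ) * Complex.I)) = -(1 / ((a:ℝ)+1)) := by
    intro a
    have h1 : 0 < 1 / ((a:ℝ)+1) := by positivity
    have h2 : 1 / ((a:ℝ)+1) ≤ 1 := by
      rw [div_le_one (by positivity)]; linarith [Nat.cast_nonneg (α := ℝ) a]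
    rw [Complex.exp_mul_I, ← Complex.ofReal_neg]
    exact Complex.arg_cos_add_sin_mul_I ⟨by linarith [Real.pi_gt_three], by linarith [Real.pi_gt_three]⟩
  have := congrArg Complex.arg h
  rw [key, key] at this
  have h3 : (a:ℝ) + 1 = b + 1 := by
    have h4 : 1 / ((a:ℝ)+1) = 1 / (b+1) := by linarith
    simpa using h4
  exact_mod_cast (add_right_cancel h3)

lemma bad_null (n : ℕ) (μ : Measure (Matrix.unitaryGroup (Fin n) ℂ)) [IsProbabilityMeasure μ]
    [μ.IsHaarMeasure] : μ (bad n) = 0 := by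
  by_contra hne
  obtain ⟨M, hM⟩ := ENNReal.exists_nat_mul_gt hne (ENNReal.natCast_ne_top n)
  refine absurd hM (not_lt.mpr ?_)
  let t : ℕ → ℝ := fun m => 1 / ((m:ℝ) + 1)
  let B : ℕ → Set (Matrix.unitaryGroup (Fin n) ℂ) := fun m => (fun U => rot n (t m) * U) ⁻¹' bad n
  have hB : ∀ m, MeasurableSet (B m) := fun m => measurable_const_mul _ (meas_bad n)
  have hμ : ∀ m, μ (B m) = μ (bad n) := fun m => measure_preimage_mul μ _ _
  calc (M:ENNReal) * μ (bad n) = ∑ m ∈ Finset.range M, μ (B m) := by simp [hμ]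
    _ = ∑ m ∈ Finset.range M, ∫⁻ U, (B m).indicator 1 U ∂μ := by
      refine Finset.sum_congr rfl fun m _ => ?_
      rw [lintegral_indicator_one (hB m)]
    _ = ∫⁻ U, ∑ m ∈ Finset.range M, (B m).indicator 1 U ∂μ := by
      rw [lintegral_finsetSum]
      exact fun m _ => measurable_one.indicator (hB m)
    _ ≤ ∫⁻ U, (n : ENNReal) ∂μ := by
      refine lintegral_mono fun U => ?_
      classical
      simp only [Set.indicator_apply, Pi.one_apply]
      rw [Finset.sum_boole]
      norm_cast
      have h1 : ((U : Matrix (Fin n) (Fin n) ℂ).charpoly.roots.toFinset).card ≤ n := by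
        refine (Multiset.toFinset_card_le _).trans ((Polynomial.card_roots' _).trans ?_)
        rw [Matrix.charpoly_natDegree_eq_dim, Fintype.card_fin]
      refine le_trans (Finset.card_le_card_of_injOn
        (fun m => Complex.exp (-((1 / ((m:ℝ) + 1) : ℝ) : ℂ) * Complex.I)) ?_ ?_) h1
      · intro m hm
        have hm' : rot n (t m) * U ∈ bad n := (Finset.mem_filter.mp hm).2
        have := bad_rot _ _ hm'
        simpa [t] using this
      · intro a _ b _ h
        exact exp_inj_seq h
    _ = n := by simp

lemma tail1 (e : ℝ) (he : e = 1/2 ∨ e = -1/2) (n : ℕ)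
    (μ : Measure (Matrix.unitaryGroup (Fin n) ℂ)) [IsProbabilityMeasure μ] [μ.IsHaarMeasure] (a : ℝ) :
    μ {U | a / 2 ≤ e * phase n U} ≤ ENNReal.ofReal ((n + 1) * rexp (-(a/2))) := by
  have hm : Measurable fun U : Matrix.unitaryGroup (Fin n) ℂ => ENNReal.ofReal (rexp (e * phase n U)) :=
      (Real.measurable_exp.comp ((meas_phase n).const_mul e)).ennreal_ofReal
  have h1 := (mul_meas_ge_le_lintegral (μ := μ) hm (ENNReal.ofReal (rexp (a/2)))).trans
    (mgf_bound e he n μ inferInstance inferInstance)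
  have h2 : {U : Matrix.unitaryGroup (Fin n) ℂ | a / 2 ≤ e * phase n U} =
      {U | ENNReal.ofReal (rexp (a/2)) ≤ ENNReal.ofReal (rexp (e * phase n U))} := by
    ext U
    simp only [Set.mem_ofPred_eq]
    rw [ENNReal.ofReal_le_ofReal_iff (Real.exp_pos _).le, Real.exp_le_exp]
  rw [h2]
  have h3 : ENNReal.ofReal (rexp (-(a/2))) * ENNReal.ofReal (rexp (a/2)) = 1 := by
    rw [← ENNReal.ofReal_mul (Real.exp_pos _).le, ← Real.exp_add]; simp
  calc _ = ENNReal.ofReal (rexp (-(a/2))) * (ENNReal.ofReal (rexp (a/2)) *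
      μ {U | ENNReal.ofReal (rexp (a/2)) ≤ ENNReal.ofReal (rexp (e * phase n U))}) := by
        rw [← mul_assoc, h3, one_mul]
    _ ≤ ENNReal.ofReal (rexp (-(a/2))) * ENNReal.ofReal (n + 1) := by gcongr
    _ = _ := by rw [← ENNReal.ofReal_mul (Real.exp_pos _).le, mul_comm]

lemma tail2 (n : ℕ) (μ : Measure (Matrix.unitaryGroup (Fin n) ℂ)) [IsProbabilityMeasure μ]
    [μ.IsHaarMeasure] (a : ℝ) :
    μ {U | a < |phase n U|} ≤ ENNReal.ofReal (2 * (n + 1) * rexp (-(a/2))) := by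
  have hsub : {U : Matrix.unitaryGroup (Fin n) ℂ | a < |phase n U|} ⊆
      {U | a / 2 ≤ (1/2) * phase n U} ∪ {U | a / 2 ≤ (-1/2) * phase n U} := by
    intro U hU
    rcases lt_abs.mp (show a < |phase n U| from hU) with h | h
    · left; simp only [Set.mem_ofPred_eq]; linarith
    · right; simp only [Set.mem_ofPred_eq]; linarith
  refine (measure_mono hsub).trans ((measure_union_le _ _).trans ?_)
  refine (add_le_add (tail1 (1/2) (Or.inl rfl) n μ a) (tail1 (-1/2) (Or.inr rfl) n μ a)).trans ?_
  rw [← ENNReal.ofReal_add (by positivity) (by positivity)]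
  apply le_of_eq; congr 1; ring

/-- combined bad event for a rotation -/
def ev (n : ℕ) (a t : ℝ) : Set (Matrix.unitaryGroup (Fin n) ℂ) :=
  {U | rot n t * U ∈ bad n ∨
    a < |argSum ((rot n t * U : Matrix.unitaryGroup (Fin n) ℂ) : Matrix (Fin n) (Fin n) ℂ)|}

lemma tail3 (n : ℕ) (μ : Measure (Matrix.unitaryGroup (Fin n) ℂ)) [IsProbabilityMeasure μ]
    [μ.IsHaarMeasure] (a t : ℝ) :
    μ (ev n a t) ≤ ENNReal.ofReal (2 * (n + 1) * rexp (-(a/2))) := by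
  have hsub : ev n a t ⊆ (fun U => rot n t * U) ⁻¹' (bad n ∪ {U | a < |phase n U|}) := by
    intro U hU
    by_cases h : rot n t * U ∈ bad n
    · exact Or.inl h
    · rcases hU with h1 | h1
      · exact Or.inl h1
      · right
        rw [argSum_eq_phase n _ h] at h1
        exact h1
  refine (measure_mono hsub).trans ?_
  rw [measure_preimage_mul]
  refine (measure_union_le _ _).trans ?_
  rw [bad_null, zero_add]
  exact tail2 n μ a

lemma arg_one_sub (A : ℝ) (h0 : 0 < A) (h1 : A < 2 * π) :
    Complex.arg (1 - Complex.exp (A * Complex.I)) = (A - π) / 2 := by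
  have hs : 0 < 2 * Real.sin (A / 2) := by
    have := Real.sin_pos_of_pos_of_lt_pi (x := A/2) (by linarith) (by linarith)
    linarith
  have h := Complex.arg_mul_cos_add_sin_mul_I hs (θ := (A - π)/2) ⟨by linarith, by linarith [Real.pi_pos]⟩
  rw [← h]
  congr 1
  have c1 : Real.cos ((A - π)/2) = Real.sin (A/2) := by
    rw [show (A - π)/2 = A/2 - π/2 by ring, Real.cos_sub_pi_div_two]
  have c2 : Real.sin ((A - π)/2) = -Real.cos (A/2) := by
    rw [show (A - π)/2 = A/2 - π/2 by ring, Real.sin_sub_pi_div_two]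
  rw [Complex.exp_mul_I, ← Complex.ofReal_cos, ← Complex.ofReal_sin, ← Complex.ofReal_cos, ← Complex.ofReal_sin, c1, c2]
  have e1 : Real.cos A = 1 - 2 * Real.sin (A/2) ^ 2 := by
    rw [show A = 2 * (A/2) by ring, Real.cos_two_mul, Real.cos_sq']; ring_nf
  have e2 : Real.sin A = 2 * Real.sin (A/2) * Real.cos (A/2) := by
    rw [← Real.sin_two_mul]; ring_nf
  rw [e1, e2]
  generalize Real.sin (A/2) = x
  generalize Real.cos (A/2) = y
  push_cast
  ring

noncomputable def ang (z : ℂ) : ℝ := if 0 ≤ Complex.arg z then Complex.arg z else Complex.arg z + 2 * π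

lemma ang_spec (z : ℂ) (hz : ‖z‖ = 1) : 0 ≤ ang z ∧ ang z < 2 * π ∧ z = Complex.exp (ang z * Complex.I) := by
  have h1 := Complex.arg_le_pi z
  have h2 := Complex.neg_pi_lt_arg z
  have h3 := Complex.norm_mul_exp_arg_mul_I z
  rw [hz] at h3
  simp only [Complex.ofReal_one, one_mul] at h3
  have hp := Real.pi_pos
  unfold ang
  split_ifs with h
  · exact ⟨h, by linarith, h3.symm⟩
  · push Not at h
    refine ⟨by linarith, by linarith, ?_⟩
    push_cast
    rw [add_mul, Complex.exp_add, Complex.exp_two_pi_mul_I, mul_one, h3]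

open Classical in
lemma point_id (z : ℂ) (hz : ‖z‖ = 1) (h1 : z ≠ 1) (θ : ℝ) (h0 : 0 ≤ θ) (h2 : θ < 2 * π)
    (h3 : Complex.exp (((-θ : ℝ) : ℂ) * Complex.I) * z ≠ 1) :
    (if ang z ∈ Set.Icc 0 θ then (1:ℝ) else 0) =
    (Complex.arg (1 - Complex.exp (((-θ : ℝ) : ℂ) * Complex.I) * z) - Complex.arg (1 - z)) / π + θ / (2 * π) := by
  obtain ⟨a0, a1, a2⟩ := ang_spec z hz
  set A := ang z
  have hp := Real.pi_pos
  have hA0 : A ≠ 0 := by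
    intro h; apply h1; rw [a2, h]; simp
  have hA0' : 0 < A := lt_of_le_of_ne a0 hA0.symm
  have hAθ : A ≠ θ := by
    intro h; apply h3; rw [a2, h, ← Complex.exp_add]; simp
  have e1 : Complex.exp (((-θ : ℝ) : ℂ) * Complex.I) * z = Complex.exp (((A - θ : ℝ) : ℂ) * Complex.I) := by
    rw [a2, ← Complex.exp_add]; congr 1; push_cast; ring
  have e2 : Complex.exp (((A - θ : ℝ) : ℂ) * Complex.I) = Complex.exp (((A - θ + 2 * π : ℝ) : ℂ) * Complex.I) := by
    rw [Complex.ofReal_add, add_mul, Complex.exp_add]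
    push_cast
    rw [Complex.exp_two_pi_mul_I, mul_one]
  have e3 : Complex.arg (1 - z) = (A - π)/2 := by
    rw [a2]; exact arg_one_sub A hA0' a1
  rw [e1, e3]
  by_cases h : A ≤ θ
  · have h' := lt_of_le_of_ne h hAθ
    rw [if_pos ⟨a0, h⟩, e2, arg_one_sub _ (by linarith) (by linarith)]
    field_simp
    ring
  · push Not at h
    rw [if_neg (fun h' => absurd h'.2 (not_le.mpr h)), arg_one_sub _ (by linarith) (by linarith)]
    field_simp
    ring

lemma ne_one_of_roots {n : ℕ} (A : Matrix (Fin n) (Fin n) ℂ) (z : Fin n → ℂ)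
    (h : A.charpoly.roots = Finset.univ.val.map z) (hd : (1 - A).det ≠ 0) (j : Fin n) : z j ≠ 1 := by
  intro hj
  apply hd
  have : (1 : ℂ) ∈ A.charpoly.roots := by
    rw [h, ← hj]; exact Multiset.mem_map_of_mem _ (Finset.mem_univ_val _)
  have h2 := (Polynomial.mem_roots (Matrix.charpoly_monic _).ne_zero).mp this
  rw [Polynomial.IsRoot, Matrix.eval_charpoly, map_one] at h2
  exact h2

lemma diag_data {n : ℕ} (U : Matrix.unitaryGroup (Fin n) ℂ) (hU : U ∉ bad n) :
    ∃ (Q : Matrix.unitaryGroup (Fin n) ℂ) (z : Fin n → ℂ), (∀ j, ‖z j‖ = 1) ∧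
      (U : Matrix (Fin n) (Fin n) ℂ) = (Q : Matrix (Fin n) (Fin n) ℂ) * Matrix.diagonal z
        * star (Q : Matrix (Fin n) (Fin n) ℂ) := by
  obtain ⟨Q, hQ⟩ := unitary_diag U hU
  refine ⟨Q, _, fun j => ?_, hQ⟩
  generalize (cay_herm U hU).eigenvalues j = k
  have hn := half_ne k
  have : 1 - (1/2 + Complex.I * (k : ℂ))⁻¹ = (-(starRingEnd ℂ (1/2 + Complex.I * (k : ℂ)))) / (1/2 + Complex.I * (k : ℂ)) := by
    rw [eq_div_iff hn, sub_mul, inv_mul_cancel₀ hn]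
    apply Complex.ext <;> simp <;> norm_num
  simp only [this, norm_div, norm_neg, RCLike.norm_conj]
  exact div_self (norm_ne_zero_iff.mpr hn)

open Classical in
lemma countFun_eq {n : ℕ} (U : Matrix.unitaryGroup (Fin n) ℂ) (z : Fin n → ℂ)
    (h : (U : Matrix (Fin n) (Fin n) ℂ).charpoly.roots = Finset.univ.val.map z) (θ : ℝ) :
    (countFun n U θ : ℝ) = ∑ j, if ang (z j) ∈ Set.Icc 0 θ then (1:ℝ) else 0 := by
  have : eigenAngles n U = Finset.univ.val.map (fun j => ang (z j)) := by
    rw [eigenAngles, h, Multiset.map_map]; rfl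
  rw [countFun, countAngles, this, Multiset.filter_map, Multiset.card_map, Finset.sum_boole]
  rw [Finset.card_def, Finset.filter_val]
  congr

lemma dev_id {n : ℕ} (U : Matrix.unitaryGroup (Fin n) ℂ) (hU : U ∉ bad n) (θ : ℝ) (h0 : 0 ≤ θ)
    (h2 : θ < 2 * π) (hr : rot n (-θ) * U ∉ bad n) :
    (countFun n U θ : ℝ) =
      (argSum ((rot n (-θ) * U : Matrix.unitaryGroup (Fin n) ℂ) : Matrix (Fin n) (Fin n) ℂ)
        - argSum (U : Matrix (Fin n) (Fin n) ℂ)) / π + n * (θ / (2 * π)) := by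
  classical
  obtain ⟨Q, z, hz, hQ⟩ := diag_data U hU
  have r1 : (U : Matrix (Fin n) (Fin n) ℂ).charpoly.roots = Finset.univ.val.map z := by
    rw [hQ]; exact aux_charpoly_roots_conj Q z
  have r2 : ((rot n (-θ) * U : Matrix.unitaryGroup (Fin n) ℂ) : Matrix (Fin n) (Fin n) ℂ).charpoly.roots =
      Finset.univ.val.map (fun j => Complex.exp (((-θ : ℝ) : ℂ) * Complex.I) * z j) := by
    rw [rot_mul, hQ, ← aux_charpoly_roots_conj Q]
    congr 2
    rw [← smul_mul_assoc, ← mul_smul_comm]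
    congr 2
    ext i j
    by_cases hij : i = j
    · subst hij; simp
    · simp [Matrix.diagonal_apply_ne _ hij]
  have n1 := ne_one_of_roots _ z r1 hU
  have n2 := ne_one_of_roots _ _ r2 hr
  rw [countFun_eq U z r1, argSum, argSum, r1, r2, Multiset.map_map, Multiset.map_map]
  change _ = (∑ j, Complex.arg (1 - Complex.exp (((-θ : ℝ) : ℂ) * Complex.I) * z j)
    - ∑ j, Complex.arg (1 - z j)) / π + _
  rw [← Finset.sum_sub_distrib, Finset.sum_div]
  rw [Finset.sum_congr rfl fun j _ => point_id (z j) (hz j) (n1 j) θ h0 h2 (n2 j), Finset.sum_add_distrib]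
  simp

lemma count_top {n : ℕ} (U : Matrix.unitaryGroup (Fin n) ℂ) (hU : U ∉ bad n) :
    (countFun n U (2 * π) : ℝ) = n := by
  classical
  obtain ⟨Q, z, hz, hQ⟩ := diag_data U hU
  have r1 : (U : Matrix (Fin n) (Fin n) ℂ).charpoly.roots = Finset.univ.val.map z := by
    rw [hQ]; exact aux_charpoly_roots_conj Q z
  rw [countFun_eq U z r1]
  rw [Finset.sum_congr rfl fun j _ => if_pos ⟨(ang_spec (z j) (hz j)).1, (ang_spec (z j) (hz j)).2.1.le⟩]
  simp

lemma rot_zero (n : ℕ) : rot n 0 = 1 := by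
  apply Subtype.ext
  simp [rot]

lemma maxDev_sub (N : ℕ) (hN : 1 ≤ N) (L : ℝ) (hL : 0 ≤ L) :
    {U : Matrix.unitaryGroup (Fin N) ℂ | 6 * L < maxDev N U} ⊆
      ⋃ k ∈ Finset.range N, ev N (3 * π * L) (-(2 * π * (k : ℕ) / N)) := by
  intro U hU
  have hN' : (0:ℝ) < N := by exact_mod_cast hN
  have hp := Real.pi_pos
  by_contra hcon
  simp only [Set.mem_iUnion, Finset.mem_range, not_exists] at hcon
  have key : ∀ k < N, rot N (-(2 * π * (k : ℕ) / N)) * U ∉ bad N ∧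
    |argSum ((rot N (-(2 * π * (k : ℕ) / N)) * U : Matrix.unitaryGroup (Fin N) ℂ) : Matrix (Fin N) (Fin N) ℂ)|
      ≤ 3 * π * L := by
    intro k hk
    have := hcon k hk
    simpa only [ev, Set.mem_ofPred_eq, not_or, not_lt] using this
  have k0 := key 0 (by omega)
  simp only [Nat.cast_zero, mul_zero, zero_div, neg_zero, rot_zero, one_mul] at k0
  have : Nonempty (Finset.Icc 1 N : Finset ℕ) := ⟨⟨1, by simp [hN]⟩⟩
  obtain ⟨⟨k, hk⟩, hlt⟩ := exists_lt_of_lt_ciSup (show 6 * L < maxDev N U from hU)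
  simp only at hlt
  rw [Finset.mem_Icc] at hk
  refine absurd hlt (not_lt.mpr ?_)
  rcases hk.2.lt_or_eq with hkN | rfl
  · have k1 := key k hkN
    have hkN' : (k:ℝ) < N := by exact_mod_cast hkN
    rw [dev_id U k0.1 (2 * π * (k : ℕ) / N) (by positivity)
      (by rw [div_lt_iff₀ hN']; nlinarith) k1.1]
    set a := argSum ((rot N (-(2 * π * (k : ℕ) / N)) * U : Matrix.unitaryGroup (Fin N) ℂ) : Matrix (Fin N) (Fin N) ℂ)
    set b := argSum (U : Matrix (Fin N) (Fin N) ℂ)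
    have e1 : (a - b) / π + N * (2 * π * (k : ℕ) / N / (2 * π)) - (k : ℕ) = (a - b) / π := by
      field_simp; ring
    rw [e1, abs_div, abs_of_pos hp, div_le_iff₀ hp]
    have := abs_sub a b
    linarith [k1.2, k0.2]
  · have e1 : 2 * π * (k : ℕ) / k = 2 * π := by field_simp
    rw [e1, count_top U k0.1]
    simp; exact hL

/-- For a Haar-distributed `N × N` unitary matrix,
`P[max_{1 ≤ k ≤ N} |𝒩_{2πk/N} − k| > 6 log(eN)] ≤ 2/(e³N²)`. -/
theorem max_deviation_tail_bound_specific
    (N : ℕ) (hN : 1 ≤ N) (ℙ : Measure (Matrix.unitaryGroup (Fin N) ℂ))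
    (hprob : IsProbabilityMeasure ℙ) (hhaar : ℙ.IsHaarMeasure) :
    (ℙ {U | 6 * Real.log (Real.exp 1 * N) < maxDev N U}).toReal ≤
      2 / (Real.exp 1 ^ 3 * N ^ 2) := by
  have hN1 : (1:ℝ) ≤ N := by exact_mod_cast hN
  have hx : 0 < Real.exp 1 * N := by positivity
  have he : (2:ℝ) ≤ Real.exp 1 := by have := Real.add_one_le_exp (1:ℝ); linarith
  set L := Real.log (Real.exp 1 * N) with hLdef
  have hL : 0 ≤ L := Real.log_nonneg (by nlinarith)
  refine ENNReal.toReal_le_of_le_ofReal (by positivity) ?_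
  refine (measure_mono (maxDev_sub N hN L hL)).trans ((measure_biUnion_finset_le _ _).trans ?_)
  refine (Finset.sum_le_sum fun k _ => tail3 N ℙ (3 * π * L) _).trans ?_
  rw [Finset.sum_const, Finset.card_range, nsmul_eq_mul, ← ENNReal.ofReal_natCast,
    ← ENNReal.ofReal_mul (by positivity)]
  refine ENNReal.ofReal_le_ofReal ?_
  have h1 : rexp (-(3 * π * L / 2)) ≤ ((Real.exp 1 * N) ^ 4)⁻¹ := by
    have h2 : rexp (-(3 * π * L / 2)) ≤ rexp (-(4 * L)) := by
      apply Real.exp_le_exp.mpr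
      nlinarith [Real.pi_gt_three]
    refine h2.trans (le_of_eq ?_)
    rw [Real.exp_neg, show 4 * L = ((4:ℕ):ℝ) * L by norm_num, Real.exp_nat_mul, hLdef, Real.exp_log hx]
  have h3 : (N:ℝ) + 1 ≤ Real.exp 1 * N := by nlinarith
  calc (N:ℝ) * (2 * (N + 1) * rexp (-(3 * π * L / 2))) ≤
      N * (2 * (Real.exp 1 * N) * ((Real.exp 1 * N) ^ 4)⁻¹) := by gcongr
    _ = _ := by
      field_simp
end
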